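/- arXiv:2204.10468 — 3 statements merged into one kernel-verified Lean document; each statement's English description precedes it below -/
import Mathlib

section
/- Let K be a totally real number field with [K:ℚ] = 4 containing an element s with s² = 2, and let O_K be its ring of integers. Then the Pythagoras number of O_K is at most 5; that is, every element of O_K that is a sum of finitely many squares of elements of O_K is a sum of at most 5 squares of elements of O_K. -/
open NumberField

/-!
Write `O = ℤ[√2]`, a principal ideal domain. The ring of integers of `K` is generated by two
elements `e₁, e₂` as an `O`-module, and `∑ (Pᵢ e₁ + Qᵢ e₂)²` depends only on the Gram data
`(∑ Pᵢ², ∑ Pᵢ Qᵢ, ∑ Qᵢ²)`. Hence it suffices to show that the Gram data `(a, h, b)` of six vectors of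
`O²` are also the Gram data of at most five vectors (`SqrtTwo.Gram.r5`); a sum of more than five
squares can then be shortened repeatedly.

If `ab - h² = 0`, all vectors are multiples of one vector and the problem reduces to six squares
in `O`, which is an instance of the nondegenerate case. If `ab - h² ≠ 0`, the proof is an induction
on the norm of `ab - h²` (`r5_of_det_ne_zero`). When the six vectors lie in a proper subspace modulo
`√2` (the list is `Killed`), a change of basis makes all first coordinates divisible by `√2`;
dividing them by `√2` divides the determinant by `2`. So it is enough to show that, without five
vectors realizing the data, the list can be replaced by a killed one (`r5_of_killed`). This uses two
representation theorems for four vectors: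

* `rep_four_of_odd`: `a` is odd and `ab - h²` is odd or twice odd;
* `rep_four_of_kappa`: `a` and `b` are divisible by `4 + 2√2` and `2h` is `(4 + 2√2)√2` times an odd
  element.

If one of `a, h, b` is odd, either the first theorem applies, or it applies after the removal of one
vector, or the list is killed. If all are even, the six vectors form three pairs `√2 S - T, T`. The
same data arise from other pairings, and a finite check on classes modulo `√2`
(`classes_of_exitFree`) shows that removing a vector or passing to a killed list works for one of
them, unless `S ≡ T` in each pair and the three classes are distinct. In this last case the six
vectors can be written as `εP + R, P + εR` with `ε = 1 + √2` and `1 + ε² = 4 + 2√2` (`Twists`), and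
either `rep_four_of_kappa` applies or one more exchange yields a killed list (`exists_separable`).

The representation theorems come from a maximal order `Ord` of the Hamilton quaternions over
`ℚ(√2)`. It is norm-Euclidean (`exists_right_quotient`), by a covering bound for the lattice `E₈`
built from the extended Hamming code. Hence elements factor according to factorizations of their
norms (`exists_factor`), and trace and norm can be prescribed as soon as a discriminant is a sum of
three squares up to a square factor (`exists_tr_N`). The latter is `three_squares_up_to_sq`, which
rests on Dirichlet's theorem on primes in arithmetic progressions, quadratic reciprocity, and a
case of Legendre's theorem on ternary forms, proved with the pigeonhole principle.
-/

namespace SqrtTwo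

/-! ### A case of Legendre's theorem -/

/-- The conditions `x ≡ s y (mod l)`, `x ≡ r z (mod q)`, `y ≡ z (mod c)` define a lattice of index at
most `l q c`, so a box with more than `l q c` points contains two points whose difference lies in it. -/
lemma pigeonhole_box {l q c : ℕ} [NeZero l] [NeZero q] [NeZero c] (X Y Z : ℕ)
    (hcard : l * q * c < (X + 1) * (Y + 1) * (Z + 1)) (s : ZMod l) (r : ZMod q) :
    ∃ x y z : ℤ, (x, y, z) ≠ (0, 0, 0) ∧ |x| ≤ X ∧ |y| ≤ Y ∧ |z| ≤ Z ∧
      (x : ZMod l) = s * y ∧ (x : ZMod q) = r * z ∧ (y : ZMod c) = z := by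
  let f : Fin (X + 1) × Fin (Y + 1) × Fin (Z + 1) → ZMod l × ZMod q × ZMod c := fun v =>
    ((v.1.1 : ZMod l) - s * (v.2.1.1 : ZMod l), (v.1.1 : ZMod q) - r * (v.2.2.1 : ZMod q),
      (v.2.1.1 : ZMod c) - (v.2.2.1 : ZMod c))
  obtain ⟨u, v, huv, hf⟩ : ∃ u v, u ≠ v ∧ f u = f v := by
    apply Fintype.exists_ne_map_eq_of_card_lt
    simp [Fintype.card_prod, ZMod.card]
    nlinarith
  obtain ⟨⟨x, hx⟩, ⟨y, hy⟩, ⟨z, hz⟩⟩ := u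
  obtain ⟨⟨x', hx'⟩, ⟨y', hy'⟩, ⟨z', hz'⟩⟩ := v
  simp only [f, Prod.mk.injEq] at hf
  obtain ⟨h1, h2, h3⟩ := hf
  refine ⟨x - x', y - y', z - z', ?_, ?_, ?_, ?_, ?_, ?_, ?_⟩
  · intro h
    simp only [Prod.mk.injEq] at h
    apply huv
    simp only [Prod.mk.injEq, Fin.mk.injEq]
    omega
  · rw [abs_le]; omega
  · rw [abs_le]; omega
  · rw [abs_le]; omega
  · push_cast; linear_combination h1
  · push_cast; linear_combination h2
  · push_cast; linear_combination h3

lemma mul_ne_sq {p k : ℕ} (hp : p.Prime) (hk : ¬ p ∣ k) (x : ℤ) : x ^ 2 ≠ (k * p : ℕ) := by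
  intro h
  have hp' : Prime (p : ℤ) := Nat.prime_iff_prime_int.mp hp
  have h1 : (p : ℤ) ∣ x := hp'.dvd_of_dvd_pow (n := 2) ⟨k, by rw [h]; push_cast; ring⟩
  obtain ⟨y, rfl⟩ := h1
  apply hk
  have h2 : (p : ℤ) * (p * y ^ 2) = p * k := by push_cast at h; linear_combination h
  have h3 := mul_left_cancel₀ hp'.ne_zero h2
  exact_mod_cast (Dvd.intro _ h3 : (p : ℤ) ∣ k)

/-- The equation `c x² + q y² = l z²` under local conditions. The pigeonhole principle gives a nonzero
`(x, y, z)` with `c x² + q y² - l z² = k l q c` and `-1 < k < 2`. The case `k = 0` is a solution, and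
in the case `k = 1` the triple `(x z - q y, c x + y z, z² + c q)` is one. -/
lemma legendre_form {l q c : ℕ} (hl : l.Prime) (hq : q.Prime) (hlq : l ≠ q) (hc0 : 0 < c)
    (hcl : c < l) (hcq : c < q) (hpc : ∀ y z w : ℤ, (y : ZMod c) = z →
      (c : ℤ) ∣ c * w + q * y ^ 2 - l * z ^ 2)
    (hcopr : Nat.Coprime (l * q) c)
    (s : ZMod l) (hs : c * s ^ 2 = -q) (r : ZMod q) (hr : c * r ^ 2 = l) :
    ∃ x y z : ℤ, z ≠ 0 ∧ c * x ^ 2 + q * y ^ 2 = l * z ^ 2 := by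
  have : NeZero l := ⟨hl.ne_zero⟩
  have : NeZero q := ⟨hq.ne_zero⟩
  have : NeZero c := ⟨hc0.ne'⟩
  have hq0 := hq.pos
  have hl0 := hl.pos
  have hcard : l * q * c < (Nat.sqrt (l * q) + 1) * (Nat.sqrt (c * l) + 1) *
      (Nat.sqrt (c * q) + 1) := by
    have h1 := Nat.lt_succ_sqrt (l * q)
    have h2 := Nat.lt_succ_sqrt (c * l)
    have h3 := Nat.lt_succ_sqrt (c * q)
    simp only [Nat.succ_eq_add_one] at h1 h2 h3
    set A := Nat.sqrt (l * q) + 1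
    set B := Nat.sqrt (c * l) + 1
    set C := Nat.sqrt (c * q) + 1
    by_contra! hh
    have h4 := Nat.mul_le_mul hh hh
    have h5 : (l * q) * (c * l) * (c * q) < (A * A) * (B * B) * (C * C) := by gcongr
    nlinarith
  obtain ⟨x, y, z, hne, hx, hy, hz, h1, h2, h3⟩ := pigeonhole_box _ _ _ hcard s r
  have sq_bound : ∀ (x : ℤ) (n : ℕ), |x| ≤ Nat.sqrt n → x ^ 2 ≤ n := by
    intro x n h
    have := Nat.sqrt_le' n
    calc x ^ 2 = |x| ^ 2 := (sq_abs x).symm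
      _ ≤ (Nat.sqrt n : ℤ) ^ 2 := by gcongr
      _ ≤ n := by exact_mod_cast this
  have bx := lt_of_le_of_ne (sq_bound _ _ hx) (mul_ne_sq hq (fun h => hlq
    ((Nat.prime_dvd_prime_iff_eq hq hl).1 h).symm) x)
  have bz := lt_of_le_of_ne (sq_bound _ _ hz) (mul_ne_sq hq (Nat.not_dvd_of_pos_of_lt hc0 hcq) z)
  have by' := lt_of_le_of_ne (sq_bound _ _ hy) (mul_ne_sq hl (Nat.not_dvd_of_pos_of_lt hc0 hcl) y)
  push_cast at bx by' bz
  have d1 : ((l * q : ℕ) : ℤ) ∣ c * x ^ 2 + q * y ^ 2 - l * z ^ 2 := by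
    push_cast
    apply IsCoprime.mul_dvd
    · rw [Nat.isCoprime_iff_coprime]; exact (Nat.coprime_primes hl hq).2 hlq
    · rw [← ZMod.intCast_zmod_eq_zero_iff_dvd]
      push_cast; rw [h1]; simp; linear_combination (y : ZMod l) ^ 2 * hs
    · rw [← ZMod.intCast_zmod_eq_zero_iff_dvd]
      push_cast; rw [h2]; simp; linear_combination (z : ZMod q) ^ 2 * hr
  obtain ⟨k, hk⟩ : ((l * q : ℕ) : ℤ) * (c : ℤ) ∣ c * x ^ 2 + q * y ^ 2 - l * z ^ 2 :=
    IsCoprime.mul_dvd (Nat.isCoprime_iff_coprime.2 hcopr) d1 (hpc _ _ _ h3)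
  have qpos : (0 : ℤ) < q := by exact_mod_cast hq0
  have lpos : (0 : ℤ) < l := by exact_mod_cast hl0
  have cpos : (0 : ℤ) < c := by exact_mod_cast hc0
  push_cast at hk
  have k1 : -1 < k := by
    by_contra! hh
    have : (l : ℤ) * z ^ 2 < l * (c * q) := by gcongr
    have : (l : ℤ) * q * c * k ≤ l * q * c * (-1) := by gcongr
    nlinarith [mul_nonneg cpos.le (sq_nonneg x), mul_nonneg qpos.le (sq_nonneg y)]
  have k2 : k < 2 := by
    by_contra! hh
    have : (c : ℤ) * x ^ 2 < c * (l * q) := by gcongr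
    have : (q : ℤ) * y ^ 2 < q * (c * l) := by gcongr
    have : (l : ℤ) * q * c * 2 ≤ l * q * c * k := by gcongr
    nlinarith [mul_nonneg lpos.le (sq_nonneg z)]
  obtain rfl | rfl : k = 0 ∨ k = 1 := by omega
  · refine ⟨x, y, z, ?_, by linear_combination hk⟩
    rintro rfl
    apply hne
    have hx : x ^ 2 = 0 := by
      by_contra h
      have := lt_of_le_of_ne (sq_nonneg x) (Ne.symm h)
      nlinarith [mul_pos cpos this, mul_nonneg qpos.le (sq_nonneg y)]
    have hy : y ^ 2 = 0 := by
      by_contra h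
      have := lt_of_le_of_ne (sq_nonneg y) (Ne.symm h)
      nlinarith [mul_pos qpos this, mul_nonneg cpos.le (sq_nonneg x)]
    simpa using And.intro hx hy
  · refine ⟨x * z - q * y, c * x + y * z, z ^ 2 + c * q, by positivity, ?_⟩
    linear_combination (z ^ 2 + c * q) * hk

end SqrtTwo

namespace SqrtTwo

/-! ### Three squares up to a square factor over `ℤ[√2]` -/

/-- The ring `ℤ[√2]`. -/
abbrev O := Zsqrtd 2

lemma norm_ne_zero {x : O} (hx : x ≠ 0) : x.norm ≠ 0 := by
  intro h
  have h2 : x.re ^ 2 = 2 * x.im ^ 2 := by rw [Zsqrtd.norm_def] at h; linear_combination h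
  have : x.im = 0 := by
    by_contra him
    have hirr := irrational_sqrt_two
    rw [irrational_iff_ne_rational] at hirr
    apply hirr |x.re| |x.im| (by simpa using him)
    rw [Real.sqrt_eq_iff_mul_self_eq (by norm_num) (by positivity)]
    have h3 : (x.re : ℝ) ^ 2 = 2 * (x.im : ℝ) ^ 2 := by exact_mod_cast h2
    have h4 : (x.im : ℝ) ≠ 0 := by exact_mod_cast him
    push_cast
    rw [div_mul_div_comm, abs_mul_abs_self, abs_mul_abs_self]
    field_simp
    linarith
  apply hx
  rw [this] at h2
  ext <;> simp_all

instance : IsDomain O where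
  mul_left_cancel_of_ne_zero {a} ha b c h := by
    rw [← sub_eq_zero]
    by_contra hbc
    have h1 : a * (b - c) = 0 := by
      have : a * b = a * c := h
      linear_combination this
    have h2 := congrArg Zsqrtd.norm h1
    rw [Zsqrtd.norm_mul] at h2
    rcases mul_eq_zero.1 (h2.trans Zsqrtd.norm_zero) with h | h
    · exact norm_ne_zero ha h
    · exact norm_ne_zero hbc h
  mul_right_cancel_of_ne_zero {a} ha b c h := by
    rw [← sub_eq_zero]
    by_contra hbc
    have h1 : a * (b - c) = 0 := by
      have : b * a = c * a := h
      linear_combination this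
    have h2 := congrArg Zsqrtd.norm h1
    rw [Zsqrtd.norm_mul] at h2
    rcases mul_eq_zero.1 (h2.trans Zsqrtd.norm_zero) with h | h
    · exact norm_ne_zero ha h
    · exact norm_ne_zero hbc h

/-- The element `√2` of `ℤ[√2]`. -/
abbrev rt : O := Zsqrtd.sqrtd

lemma rt_sq : rt * rt = 2 := by ext <;> simp

/-- Some product of `x` with a nonzero square has the form `X² + q Y²`; for a domain `R` this says that
`x` is a norm from the algebra `F[T] / (T² + q)` over the fraction field `F` of `R`. -/
def IsNormUpToSq {R : Type} [CommRing R] (q : ℕ) (x : R) : Prop :=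
  ∃ z X Y : R, z ≠ 0 ∧ x * z ^ 2 = X ^ 2 + q * Y ^ 2

lemma IsNormUpToSq.mul {R : Type} [CommRing R] [IsDomain R] {q : ℕ} {x y : R} (hx : IsNormUpToSq q x) (hy : IsNormUpToSq q y) :
    IsNormUpToSq q (x * y) := by
  obtain ⟨z, X, Y, hz, h⟩ := hx
  obtain ⟨z', X', Y', hz', h'⟩ := hy
  refine ⟨z * z', X * X' - q * Y * Y', X * Y' + Y * X', mul_ne_zero hz hz', ?_⟩
  linear_combination y * z' ^ 2 * h + (X ^ 2 + q * Y ^ 2) * h'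

lemma IsNormUpToSq.of_mul {R : Type} [CommRing R] [IsDomain R] {q : ℕ} {x y : R} (hy0 : y ≠ 0) (hx : IsNormUpToSq q (x * y))
    (hy : IsNormUpToSq q y) : IsNormUpToSq q x := by
  obtain ⟨z, X, Y, hz, h⟩ := hx.mul hy
  exact ⟨y * z, X, Y, mul_ne_zero hy0 hz, by linear_combination h⟩

/-- The odd primes `l` that split in `ℚ(√2)` and modulo which `-q` is not a square. -/
def IsBad (q l : ℕ) : Prop :=
  l.Prime ∧ l ≠ 2 ∧ ¬ IsSquare (-q : ZMod l) ∧ IsSquare (2 : ZMod l)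

lemma legendreSym_neg {l q : ℕ} [Fact l.Prime] [Fact q.Prime] (hq : q % 8 = 3) (hl : l ≠ 2) :
    legendreSym q l = legendreSym l (-q) := by
  have hq2 : q ≠ 2 := by rintro rfl; simp at hq
  rw [legendreSym.quadratic_reciprocity' hl hq2, legendreSym.at_neg hl]
  congr 1
  have hl2 : l % 2 = 1 := (Nat.Prime.eq_two_or_odd Fact.out).resolve_left hl
  rw [ZMod.χ₄_eq_neg_one_pow hl2, pow_mul']
  have : Odd (q / 2) := by rw [Nat.odd_iff]; omega
  rw [this.neg_one_pow]

lemma isNormUpToSq_cast {q : ℕ} {l : ℕ} (h : IsNormUpToSq q (l : ℤ)) :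
    IsNormUpToSq q (l : O) := by
  obtain ⟨z, x, y, hz, h⟩ := h
  refine ⟨z, x, y, by exact_mod_cast hz, by exact_mod_cast congrArg (Int.cast : ℤ → O) h⟩

/-- By quadratic reciprocity `l` is a square modulo `q`, so `legendre_form` with `c = 1` applies. -/
lemma isNormUpToSq_of_isSquare {q l : ℕ} (hq : q.Prime) (hq8 : q % 8 = 3) (hl : l.Prime)
    (hl2 : l ≠ 2) (hlq : l ≠ q) (h1 : IsSquare (-q : ZMod l)) : IsNormUpToSq q (l : ℤ) := by
  have := Fact.mk hq
  have := Fact.mk hl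
  have hlz : ((l : ℤ) : ZMod q) ≠ 0 := by
    intro h
    rw [ZMod.intCast_zmod_eq_zero_iff_dvd] at h
    exact hlq ((Nat.prime_dvd_prime_iff_eq hq hl).1 (by exact_mod_cast h)).symm
  have hqz : ((-q : ℤ) : ZMod l) ≠ 0 := by
    intro h
    rw [ZMod.intCast_zmod_eq_zero_iff_dvd, Int.dvd_neg] at h
    exact hlq ((Nat.prime_dvd_prime_iff_eq hl hq).1 (by exact_mod_cast h))
  have h2 := (legendreSym.eq_one_iff l hqz).2 (by simpa using h1)
  rw [← legendreSym_neg hq8 hl2] at h2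
  obtain ⟨s, hs⟩ := h1
  obtain ⟨r, hr⟩ := (legendreSym.eq_one_iff q hlz).1 h2
  push_cast at hs hr
  obtain ⟨x, y, z, hz, h⟩ := legendre_form (c := 1) hl hq hlq one_pos hl.one_lt hq.one_lt
    (by simp) (by simp) s (by rw [hs]; push_cast; ring) r (by rw [hr]; push_cast; ring)
  exact ⟨z, x, y, hz, by push_cast at h; linear_combination -h⟩

/-- If neither `-q` nor `2` is a square modulo `l`, then `-2q` is one, and `legendre_form` with `c = 2`
represents `l` by `2 x² + q y² = (√2 x)² + q y²` up to a square. -/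
lemma good_or_bad {q l : ℕ} (hq : q.Prime) (hq8 : q % 8 = 3) (hl : l.Prime) :
    IsNormUpToSq q (l : O) ∨ IsBad q l := by
  have := Fact.mk hq
  have := Fact.mk hl
  by_cases hl2 : l = 2
  · left
    subst hl2
    exact ⟨1, rt, 0, one_ne_zero, by linear_combination (-1 : O) * rt_sq⟩
  by_cases hlq : l = q
  · left
    subst hlq
    exact ⟨1, 0, 1, one_ne_zero, by ring⟩
  have hl2' : l % 2 = 1 := hl.eq_two_or_odd.resolve_left hl2
  have hlz : ((l : ℤ) : ZMod q) ≠ 0 := by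
    intro h
    rw [ZMod.intCast_zmod_eq_zero_iff_dvd] at h
    exact hlq ((Nat.prime_dvd_prime_iff_eq hq hl).1 (by exact_mod_cast h)).symm
  have hqz : ((-q : ℤ) : ZMod l) ≠ 0 := by
    intro h
    rw [ZMod.intCast_zmod_eq_zero_iff_dvd, Int.dvd_neg] at h
    exact hlq ((Nat.prime_dvd_prime_iff_eq hl hq).1 (by exact_mod_cast h))
  have h2l : ((2 : ℤ) : ZMod l) ≠ 0 := by
    intro h
    rw [ZMod.intCast_zmod_eq_zero_iff_dvd] at h
    exact hl2 ((Nat.prime_dvd_prime_iff_eq hl Nat.prime_two).1 (by exact_mod_cast h))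
  have h2q : ((2 : ℤ) : ZMod q) ≠ 0 := by
    intro h
    rw [ZMod.intCast_zmod_eq_zero_iff_dvd] at h
    have := ((Nat.prime_dvd_prime_iff_eq hq Nat.prime_two).1 (by exact_mod_cast h))
    omega
  rcases legendreSym.eq_one_or_neg_one l hqz with h1 | h1
  · left
    exact isNormUpToSq_cast (isNormUpToSq_of_isSquare hq hq8 hl hl2 hlq
      (by simpa using (legendreSym.eq_one_iff l hqz).1 h1))
  · rcases legendreSym.eq_one_or_neg_one l h2l with h3 | h3
    · right
      refine ⟨hl, hl2, ?_, ?_⟩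
      · simpa using (legendreSym.eq_neg_one_iff l).1 h1
      · simpa using (legendreSym.eq_one_iff l h2l).1 h3
    · left
      have h4 : legendreSym l (2 * (-q)) = 1 := by rw [legendreSym.mul, h1, h3]; norm_num
      have hq2 : legendreSym q 2 = -1 := by
        rw [legendreSym.eq_neg_one_iff]
        have := (ZMod.exists_sq_eq_two_iff (p := q) (by omega)).not
        push_cast
        rw [this]; omega
      have h5 : legendreSym q (2 * l) = 1 := by
        rw [legendreSym.mul, hq2, legendreSym_neg hq8 hl2, h1]; norm_num
      obtain ⟨s, hs⟩ := (legendreSym.eq_one_iff l (by push_cast at *; exact mul_ne_zero h2l hqz)).1 h4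
      obtain ⟨r, hr⟩ := (legendreSym.eq_one_iff q (by push_cast at *; exact mul_ne_zero h2q hlz)).1 h5
      push_cast at hs hr h2l h2q
      have hc : Nat.Coprime (l * q) 2 := by
        rw [Nat.coprime_two_right, Nat.odd_mul, Nat.odd_iff, Nat.odd_iff]; omega
      obtain ⟨x, y, z, hz, h⟩ := legendre_form (c := 2) hl hq hlq two_pos
        (by have := hl.two_le; omega) (by omega)
        (by
          intro y z w hyz
          rw [← ZMod.intCast_zmod_eq_zero_iff_dvd]
          push_cast
          rw [hyz]
          have e1 : (q : ZMod 2) = 1 := by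
            rw [← Nat.cast_one, ZMod.natCast_eq_natCast_iff]; unfold Nat.ModEq; omega
          have e2 : (l : ZMod 2) = 1 := by
            rw [← Nat.cast_one, ZMod.natCast_eq_natCast_iff]; unfold Nat.ModEq; omega
          have e3 : (2 : ZMod 2) = 0 := rfl
          rw [e1, e2, e3]; ring) hc (s / 2)
          (by push_cast; field_simp; linear_combination -hs) (r / 2)
          (by push_cast; field_simp; linear_combination -hr)
      refine ⟨z, rt * x, y, by exact_mod_cast hz, ?_⟩
      have := congrArg (Int.cast : ℤ → O) h
      push_cast at this
      linear_combination -this - (x : O) ^ 2 * rt_sq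

/-- A bad prime `l` dividing `m` cancels: under both homomorphisms `O → 𝔽_l` the relation becomes
`X² + q Y² = 0`, so `X` and `Y` vanish because `-q` is not a square. Hence `l` divides `X` and `Y`. -/
lemma bad_descent {q l m : ℕ} (hb : IsBad q l) {d X Y : O} (hd : IsCoprime (l : ℤ) d.norm)
    (hlm : l ∣ m) (h : d * m = X ^ 2 + q * Y ^ 2) :
    ∃ m' X' Y', m = l ^ 2 * m' ∧ d * (m' : O) = X' ^ 2 + q * Y' ^ 2 := by
  obtain ⟨hl, hl2, hns, ⟨σ, hσ⟩⟩ := hb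
  have := Fact.mk hl
  have h2l : (2 : ZMod l) ≠ 0 := by
    intro h
    have : ((2 : ℕ) : ZMod l) = 0 := by exact_mod_cast h
    rw [ZMod.natCast_eq_zero_iff] at this
    exact hl2 ((Nat.prime_dvd_prime_iff_eq hl Nat.prime_two).1 this)
  have key : ∀ ψ : O →+* ZMod l, ψ X = 0 ∧ ψ Y = 0 := by
    intro ψ
    have e := congrArg ψ h
    have hm : (m : ZMod l) = 0 := (ZMod.natCast_eq_zero_iff _ _).2 hlm
    simp only [map_mul, map_natCast, map_add, map_pow, hm, mul_zero] at e
    have hY : ψ Y = 0 := by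
      by_contra hY
      apply hns
      refine ⟨ψ X / ψ Y, ?_⟩
      field_simp
      linear_combination e
    rw [hY] at e
    refine ⟨?_, hY⟩
    simpa using e.symm
  let ψ1 : O →+* ZMod l := Zsqrtd.lift ⟨σ, by rw [← hσ]; norm_num⟩
  let ψ2 : O →+* ZMod l := Zsqrtd.lift ⟨-σ, by rw [neg_mul_neg, ← hσ]; norm_num⟩
  have hσ0 : σ ≠ 0 := by rintro rfl; apply h2l; rw [hσ]; ring
  have dvd_of : ∀ x : O, ψ1 x = 0 → ψ2 x = 0 → ∃ y, x = (l : O) * y := by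
    intro x h1 h2
    have h1 : (x.re : ZMod l) + x.im * σ = 0 := h1
    have h2 : (x.re : ZMod l) + x.im * (-σ) = 0 := h2
    have h3 : (x.re : ZMod l) = 0 := by
      have : (2 : ZMod l) * x.re = 0 := by linear_combination h1 + h2
      simpa [h2l] using this
    have h4 : (x.im : ZMod l) = 0 := by
      rw [h3] at h1
      simpa [hσ0] using h1
    rw [ZMod.intCast_zmod_eq_zero_iff_dvd] at h3 h4
    have : ((l : ℤ) : O) ∣ x := (Zsqrtd.intCast_dvd _ _).2 ⟨h3, h4⟩
    exact_mod_cast this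
  obtain ⟨X', hX⟩ := dvd_of X (key ψ1).1 (key ψ2).1
  obtain ⟨Y', hY⟩ := dvd_of Y (key ψ1).2 (key ψ2).2
  have hdvd : (l : ℤ) ^ 2 ∣ m := by
    have h1 : (((l : ℤ) ^ 2 : ℤ) : O) ∣ ((d.norm * m : ℤ) : O) := by
      refine ⟨(X' ^ 2 + q * Y' ^ 2) * star d, ?_⟩
      push_cast
      rw [Zsqrtd.norm_eq_mul_conj]
      rw [hX, hY] at h
      linear_combination star d * h
    rw [Zsqrtd.intCast_dvd_intCast] at h1
    exact (hd.pow_left).dvd_of_dvd_mul_left h1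
  obtain ⟨m', hm'⟩ : l ^ 2 ∣ m := by exact_mod_cast hdvd
  refine ⟨m', X', Y', hm', ?_⟩
  have hl0 : (l : O) ≠ 0 := by exact_mod_cast hl.ne_zero
  apply mul_left_cancel₀ (pow_ne_zero 2 hl0)
  rw [hX, hY, hm'] at h
  push_cast at h
  linear_combination h

lemma nat_isNormUpToSq {R : Type} [CommRing R] [IsDomain R] {q m : ℕ} (hm : m ≠ 0)
    (h : ∀ l, l.Prime → l ∣ m → IsNormUpToSq q (l : R)) : IsNormUpToSq q (m : R) := by
  induction m using Nat.recOnMul with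
  | zero => exact absurd rfl hm
  | one => exact ⟨1, 1, 0, one_ne_zero, by push_cast; ring⟩
  | prime p hp => exact h p hp dvd_rfl
  | mul a b ha hb =>
    push_cast
    exact (ha (by rintro rfl; simp at hm) fun l hl hd => h l hl (hd.mul_right _)).mul
      (hb (by rintro rfl; simp at hm) fun l hl hd => h l hl (hd.mul_left _))

/-- The bad primes dividing `m` cancel by `bad_descent`, and all other primes are norms up to squares. -/
lemma cofactor_isNormUpToSq {q : ℕ} (hq : q.Prime) (hq8 : q % 8 = 3) {d : O}
    (hd : ∀ l, IsBad q l → IsCoprime (l : ℤ) d.norm) (m : ℕ) (hm : m ≠ 0) :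
    ∀ X Y : O, d * m = X ^ 2 + q * Y ^ 2 → IsNormUpToSq q (m : O) := by
  induction m using Nat.strong_induction_on with
  | _ m ih =>
    intro X Y h
    by_cases hb : ∃ l, IsBad q l ∧ l ∣ m
    · obtain ⟨l, hl, hlm⟩ := hb
      obtain ⟨m', X', Y', rfl, h'⟩ := bad_descent hl (hd l hl) hlm h
      have hm' : m' ≠ 0 := by rintro rfl; simp at hm
      have := ih m' (by
        have := hl.1.two_le
        have : 0 < m' := Nat.pos_of_ne_zero hm'
        have : 2 ^ 2 ≤ l ^ 2 := by gcongr
        nlinarith) hm' X' Y' h'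
      push_cast
      refine IsNormUpToSq.mul ⟨1, l, 0, one_ne_zero, by ring⟩ this
    · push Not at hb
      apply nat_isNormUpToSq hm
      intro l hl hlm
      exact (good_or_bad hq hq8 hl).resolve_right fun h => hb l h hlm

/-- Total positivity in `ℤ[√2]`, expressed by integers: `d` and its conjugate have positive sum and
positive product. See `tp_iff` for the description by real embeddings. -/
def TP (d : O) : Prop := 0 < d.re ∧ 0 < d.norm

/-- As `-2` is a square modulo `q`, a small multiple of `q` has the form `x² + 2 y² = x² + (√2 y)²`. -/
lemma exists_q_sum_two_sq {q : ℕ} (hq : q.Prime) (hq8 : q % 8 = 3) :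
    ∃ w s t : O, w ≠ 0 ∧ q * w ^ 2 = s ^ 2 + t ^ 2 := by
  have := Fact.mk hq
  obtain ⟨σ, hσ⟩ := (ZMod.exists_sq_eq_neg_two_iff (p := q) (by omega)).2 (Or.inr hq8)
  have : NeZero q := ⟨hq.ne_zero⟩
  have hcard : q * 1 * 1 < (Nat.sqrt q + 1) * (Nat.sqrt q + 1) * (0 + 1) := by
    have h1 := Nat.lt_succ_sqrt q
    simpa using h1
  obtain ⟨x, y, z, hne, hx, hy, hz, h1, -, -⟩ :=
    pigeonhole_box (l := q) (q := 1) (c := 1) _ _ _ hcard σ 0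
  have hz0 : z = 0 := by simpa using hz
  subst hz0
  have sq_bound : ∀ (x : ℤ), |x| ≤ Nat.sqrt q → x ^ 2 < q := by
    intro x h
    have := Nat.sqrt_le' q
    have h0 : x ^ 2 ≤ q := calc x ^ 2 = |x| ^ 2 := (sq_abs x).symm
      _ ≤ (Nat.sqrt q : ℤ) ^ 2 := by gcongr
      _ ≤ q := by exact_mod_cast this
    refine lt_of_le_of_ne h0 ?_
    simpa using mul_ne_sq (k := 1) hq (by simpa using hq.one_lt.ne') x
  have bx := sq_bound x hx
  have by' := sq_bound y hy
  obtain ⟨k, hk⟩ : (q : ℤ) ∣ x ^ 2 + 2 * y ^ 2 := by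
    rw [← ZMod.intCast_zmod_eq_zero_iff_dvd]
    push_cast; rw [h1]; linear_combination -(y : ZMod q) ^ 2 * hσ
  have qpos : (0 : ℤ) < q := by exact_mod_cast hq.pos
  have k3 : k < 3 := by nlinarith
  have k0 : 0 < k := by
    by_contra! hh
    have : q * k ≤ 0 := by nlinarith
    have hx0 : x ^ 2 = 0 := by nlinarith [sq_nonneg x, sq_nonneg y]
    have hy0 : y ^ 2 = 0 := by nlinarith [sq_nonneg x, sq_nonneg y]
    apply hne
    simpa using And.intro hx0 hy0
  have hk' := congrArg (Int.cast : ℤ → O) hk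
  push_cast at hk'
  have h2 : (rt : O) ≠ 0 := by
    intro h
    have := congrArg Zsqrtd.im h
    simp at this
  obtain rfl | rfl : k = 1 ∨ k = 2 := by omega
  · refine ⟨1, x, rt * y, one_ne_zero, ?_⟩
    push_cast at hk'
    linear_combination -hk' - (y : O) ^ 2 * rt_sq
  · refine ⟨rt, x, rt * y, h2, ?_⟩
    push_cast at hk'
    linear_combination -hk' - (y : O) ^ 2 * rt_sq + q * rt_sq

/-- An odd totally positive `d` is a sum of three squares up to a square factor. Take a prime
`q ≡ 3 (mod 8)` with `q ≡ -1` modulo the norm of `d`. This norm is then `x² + q y²` up to a square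
`z²`, so that `d m = (d z + x)² + q y²` with a natural number `m`. Since `m` is a norm up to squares,
so is `d`, say `d v² = X² + q Y²`, and `q` itself is a sum of two squares up to a square. -/
theorem three_squares_up_to_sq {d : O} (hd : TP d) (hodd : d.re % 2 = 1) :
    ∃ W X Y Z : O, W ≠ 0 ∧ d * W ^ 2 = X ^ 2 + Y ^ 2 + Z ^ 2 := by
  obtain ⟨hre, hn⟩ := hd
  obtain ⟨n, hnn⟩ : ∃ n : ℕ, d.norm = n := ⟨d.norm.toNat, by omega⟩
  have hn0 : n ≠ 0 := by rintro rfl; simp [hnn] at hn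
  have hnodd : n % 2 = 1 := by
    have : d.norm % 2 = 1 := by
      rw [Zsqrtd.norm_def, mul_assoc, Int.sub_mul_emod_self_left, Int.mul_emod, hodd]; rfl
    omega
  have hcop : Nat.Coprime 8 n := by
    have : Nat.Coprime (2 ^ 3) n := Nat.Coprime.pow_left 3 (Nat.coprime_two_left.2 (Nat.odd_iff.2 hnodd))
    simpa using this
  obtain ⟨a, ha8, han⟩ := Nat.chineseRemainder hcop 3 (n - 1)
  have hacop : Nat.Coprime a (8 * n) := by
    apply Nat.Coprime.mul_right
    · rw [Nat.Coprime, ha8.gcd_eq]; rfl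
    · rw [Nat.Coprime, han.gcd_eq]
      exact Nat.Coprime.symm ((Nat.coprime_self_sub_right (by omega)).2 (by simp))
  obtain ⟨q, -, hq, hqa⟩ := Nat.forall_exists_prime_gt_and_modEq 0 (q := 8 * n) (by omega) hacop
  have hq8 : q % 8 = 3 := (hqa.of_mul_right n).trans ha8
  have hqn : n ∣ q + 1 := by
    have h1 : q ≡ n - 1 [MOD n] := (hqa.of_mul_left 8).trans han
    have h2 := h1.add_right 1
    rw [Nat.sub_add_cancel (by omega)] at h2
    exact (Nat.modEq_zero_iff_dvd.1 (h2.trans (by simp [Nat.ModEq])))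
  have hres : ∀ l : ℕ, l ∣ n → IsSquare (-q : ZMod l) := by
    intro l hl
    refine ⟨1, ?_⟩
    have : ((q + 1 : ℕ) : ZMod l) = 0 := (ZMod.natCast_eq_zero_iff _ _).2 (hl.trans hqn)
    push_cast at this
    linear_combination -this
  have hqn' : ∀ l : ℕ, l.Prime → l ∣ n → l ≠ q := by
    rintro l hl hln rfl
    have := (Nat.dvd_add_right (dvd_refl l)).1 (hln.trans hqn)
    exact hl.one_lt.ne' (Nat.dvd_one.1 this)
  obtain ⟨z, x, y, hz, hxy⟩ : IsNormUpToSq q (n : ℤ) := by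
    apply nat_isNormUpToSq hn0
    intro l hl hln
    refine isNormUpToSq_of_isSquare hq hq8 hl ?_ (hqn' l hl hln) (hres l hln)
    rintro rfl
    omega
  -- signs are chosen so that the cofactor `m` below is positive
  wlog hz' : 0 < z generalizing z
  · exact this (-z) (by omega) (by linear_combination hxy) (by omega)
  wlog hx' : 0 ≤ x generalizing x
  · exact this (-x) (by linear_combination hxy) (by omega)
  obtain ⟨m, hm⟩ : ∃ m : ℕ, (2 * d.re * z + 2 * x) * z = m :=
    ⟨((2 * d.re * z + 2 * x) * z).toNat, by rw [Int.toNat_of_nonneg]; positivity⟩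
  have hm0 : m ≠ 0 := by
    rintro rfl
    have : 0 < (2 * d.re * z + 2 * x) * z := by positivity
    rw [hm] at this
    simp at this
  have hdm : d * (m : O) = (d * z + x) ^ 2 + q * (y : O) ^ 2 := by
    have e1 : (m : O) = (2 * d.re * z + 2 * x) * z := by
      have := congrArg (Int.cast : ℤ → O) hm
      push_cast at this
      exact this.symm
    have e2 : (2 : O) * d.re = d + star d := by ext <;> simp <;> ring
    have e3 : d * star d * z ^ 2 = (x : O) ^ 2 + q * y ^ 2 := by
      rw [← Zsqrtd.norm_eq_mul_conj, hnn]
      have := congrArg (Int.cast : ℤ → O) hxy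
      push_cast at this ⊢
      exact this
    rw [e1]
    linear_combination d * z ^ 2 * e2 + e3
  have hbad : ∀ l, IsBad q l → IsCoprime (l : ℤ) d.norm := by
    intro l hl
    rw [hnn, Nat.isCoprime_iff_coprime, hl.1.coprime_iff_not_dvd]
    exact fun h => hl.2.2.1 (hres l h)
  have hmN := cofactor_isNormUpToSq hq hq8 hbad m hm0 _ _ hdm
  have hdN : IsNormUpToSq q d := IsNormUpToSq.of_mul (y := (m : O)) (by exact_mod_cast hm0)
    ⟨1, _, _, one_ne_zero, by rw [← hdm]; ring⟩ hmN
  obtain ⟨w, s, t, hw, hst⟩ := exists_q_sum_two_sq hq hq8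
  obtain ⟨v, X, Y, hv, hXY⟩ := hdN
  refine ⟨v * w, X * w, Y * s, Y * t, mul_ne_zero hv hw, ?_⟩
  linear_combination w ^ 2 * hXY + Y ^ 2 * hst

end SqrtTwo

namespace SqrtTwo

/-! ### Arithmetic of `ℤ[√2]` -/

/-- The real embedding of `ℤ[√2]` with `√2 ↦ √2`. -/
noncomputable def emb1 : O →+* ℝ := Zsqrtd.lift ⟨√2, by simp⟩

/-- The real embedding of `ℤ[√2]` with `√2 ↦ -√2`. -/
noncomputable def emb2 : O →+* ℝ := Zsqrtd.lift ⟨-√2, by simp⟩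

lemma emb1_apply (x : O) : emb1 x = x.re + x.im * √2 := rfl
lemma emb2_apply (x : O) : emb2 x = x.re - x.im * √2 := by
  change (x.re : ℝ) + x.im * (-√2) = _
  ring

lemma emb_mul_emb (x : O) : emb1 x * emb2 x = x.norm := by
  rw [emb1_apply, emb2_apply, Zsqrtd.norm_def]
  push_cast
  linear_combination -(x.im : ℝ) ^ 2 * (Real.mul_self_sqrt (show (0 : ℝ) ≤ 2 by norm_num))

lemma emb1_ne_zero {x : O} (hx : x ≠ 0) : emb1 x ≠ 0 := by
  intro h
  have := emb_mul_emb x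
  rw [h, zero_mul] at this
  exact norm_ne_zero hx (by exact_mod_cast this.symm)

lemma emb2_ne_zero {x : O} (hx : x ≠ 0) : emb2 x ≠ 0 := by
  intro h
  have := emb_mul_emb x
  rw [h, mul_zero] at this
  exact norm_ne_zero hx (by exact_mod_cast this.symm)

lemma tp_iff {x : O} : TP x ↔ 0 < emb1 x ∧ 0 < emb2 x := by
  have h := emb_mul_emb x
  have h1 : emb1 x + emb2 x = 2 * x.re := by rw [emb1_apply, emb2_apply]; ring
  constructor
  · rintro ⟨hre, hn⟩
    have hre' : (0 : ℝ) < x.re := by exact_mod_cast hre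
    have hn' : (0 : ℝ) < emb1 x * emb2 x := by rw [h]; exact_mod_cast hn
    rcases mul_pos_iff.1 hn' with h2 | h2
    · exact h2
    · exfalso; linarith [h2.1, h2.2]
  · rintro ⟨h2, h3⟩
    constructor
    · have : (0 : ℝ) < x.re := by linarith
      exact_mod_cast this
    · have : (0 : ℝ) < x.norm := by rw [← h]; positivity
      exact_mod_cast this

lemma TP.mul {x y : O} (hx : TP x) (hy : TP y) : TP (x * y) := by
  rw [tp_iff] at *
  simp only [map_mul]
  exact ⟨mul_pos hx.1 hy.1, mul_pos hx.2 hy.2⟩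

lemma TP.of_mul {x y : O} (hx : TP x) (hxy : TP (x * y)) : TP y := by
  rw [tp_iff] at *
  simp only [map_mul] at hxy
  exact ⟨(mul_pos_iff_of_pos_left hx.1).1 hxy.1, (mul_pos_iff_of_pos_left hx.2).1 hxy.2⟩

lemma TP.ne_zero {x : O} (hx : TP x) : x ≠ 0 := by
  rintro rfl
  simpa using hx.1

lemma TP.sq {x : O} (hx : x ≠ 0) : TP (x ^ 2) := by
  rw [tp_iff]
  have := emb1_ne_zero hx
  have := emb2_ne_zero hx
  simp only [map_pow]
  constructor <;> positivity

/-- The units `±1, ±(1 + √2)` realize all pairs of signs under the two embeddings. -/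
lemma exists_tp_associate {b : O} (hb : b ≠ 0) : ∃ u v : O, u * v = 1 ∧ TP (b * u) := by
  have key : ∀ b : O, 0 < b.norm → ∃ u v : O, u * v = 1 ∧ TP (b * u) := by
    intro b hn
    rcases lt_trichotomy b.re 0 with h | h | h
    · refine ⟨-1, -1, by ring, ?_⟩
      rw [mul_neg, mul_one]
      exact ⟨by simpa using h, by rwa [Zsqrtd.norm_neg]⟩
    · rw [Zsqrtd.norm_def, h] at hn
      nlinarith [sq_nonneg b.im]
    · exact ⟨1, 1, by ring, by rw [mul_one]; exact ⟨h, hn⟩⟩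
  rcases lt_or_gt_of_ne (norm_ne_zero hb) with h | h
  · obtain ⟨u, v, huv, ht⟩ := key (b * (1 + rt)) (by
      rw [Zsqrtd.norm_mul]
      have : (1 + rt : O).norm = -1 := by rw [Zsqrtd.norm_def]; simp
      rw [this]; linarith)
    refine ⟨(1 + rt) * u, (rt - 1) * v, ?_, by rwa [← mul_assoc]⟩
    linear_combination (rt * rt - 1) * huv + rt_sq
  · exact key b h

lemma tp_unit_sq {u v : O} (huv : u * v = 1) (hu : TP u) : ∃ w : O, w ^ 2 = u := by
  obtain ⟨hre, hn⟩ := hu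
  have hn1 : u.norm = 1 := by
    have := congrArg Zsqrtd.norm huv
    rw [Zsqrtd.norm_mul, Zsqrtd.norm_one] at this
    rcases Int.eq_one_or_neg_one_of_mul_eq_one this with h | h <;> omega
  rw [Zsqrtd.norm_def] at hn1
  obtain ⟨x, y⟩ := u
  simp only at hn1 hre
  have hx : x % 2 = 1 := by
    by_contra h
    obtain ⟨k, rfl⟩ : ∃ k, x = 2 * k := ⟨x / 2, by omega⟩
    have : 2 * (2 * (k * k) - y * y) = 1 := by linear_combination hn1
    omega
  obtain ⟨m, rfl⟩ : ∃ m, x = 2 * m + 1 := ⟨x / 2, by omega⟩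
  have hm : 0 ≤ m := by omega
  have hy : y % 2 = 0 := by
    by_contra h
    obtain ⟨k, rfl⟩ : ∃ k, y = 2 * k + 1 := ⟨y / 2, by omega⟩
    obtain ⟨j, hj⟩ := Int.even_mul_succ_self m
    have : 4 * (m * (m + 1)) = 8 * (k * k) + 8 * k + 2 := by linear_combination hn1
    omega
  obtain ⟨z, rfl⟩ : ∃ z, y = 2 * z := ⟨y / 2, by omega⟩
  have hmz : m * (m + 1) = 2 * z ^ 2 := by
    have : 4 * (m * (m + 1)) = 4 * (2 * z ^ 2) := by linear_combination hn1
    omega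
  have fin : ∀ s t : ℤ, 2 * m + 1 = t ^ 2 + 2 * s ^ 2 → z ^ 2 = (t * s) ^ 2 →
      ∃ w : O, w ^ 2 = ⟨2 * m + 1, 2 * z⟩ := by
    intro s t h1 h2
    rcases sq_eq_sq_iff_eq_or_eq_neg.1 h2 with h | h
    · refine ⟨⟨t, s⟩, ?_⟩
      rw [sq]
      ext <;> simp [h, h1] <;> ring
    · refine ⟨⟨t, -s⟩, ?_⟩
      rw [sq]
      ext <;> simp [h, h1] <;> ring
  have nn : ∀ a c : ℤ, 0 ≤ a → (∃ e : ℤ, a = e ^ 2 ∨ a = -e ^ 2) → ∃ e : ℤ, a = e ^ 2 := by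
    rintro a c ha ⟨e, h | h⟩
    · exact ⟨e, h⟩
    · exact ⟨0, by nlinarith [sq_nonneg e]⟩
  rcases Int.even_or_odd m with ⟨k, rfl⟩ | ⟨k, rfl⟩
  · have hk : k * (2 * k + 1) = z ^ 2 := by
      have : 2 * (k * (2 * k + 1)) = 2 * z ^ 2 := by linear_combination hmz
      omega
    have hc : IsCoprime k (2 * k + 1) := ⟨-2, 1, by ring⟩
    obtain ⟨s, hs⟩ := nn _ 0 (by omega) (Int.sq_of_isCoprime hc hk)
    obtain ⟨t, ht⟩ := nn _ 0 (by omega) (Int.sq_of_isCoprime hc.symm ((mul_comm _ _).trans hk))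
    exact fin s t (by rw [← hs, ← ht]; ring) (by rw [mul_pow, ← hs, ← ht, ← hk]; ring)
  · have hk : (k + 1) * (2 * k + 1) = z ^ 2 := by
      have : 2 * ((k + 1) * (2 * k + 1)) = 2 * z ^ 2 := by linear_combination hmz
      omega
    have hc : IsCoprime (k + 1) (2 * k + 1) := ⟨2, -1, by ring⟩
    obtain ⟨s, hs⟩ := nn _ 0 (by omega) (Int.sq_of_isCoprime hc hk)
    obtain ⟨t, ht⟩ := nn _ 0 (by omega) (Int.sq_of_isCoprime hc.symm ((mul_comm _ _).trans hk))
    exact fin s t (by rw [← hs, ← ht]; ring) (by rw [mul_pow, ← hs, ← ht, ← hk]; ring)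

lemma exists_quotient (a : O) {b : O} (hb : b ≠ 0) :
    ∃ q : O, (a - b * q).norm.natAbs < b.norm.natAbs := by
  have hn := norm_ne_zero hb
  set n := b.norm with hndef
  set v := a * star b with hv
  have hround : ∀ x : ℤ, ∃ k : ℤ, 2 * |x - n * k| ≤ |n| := by
    intro x
    refine ⟨round ((x : ℚ) / n), ?_⟩
    have h := abs_sub_round ((x : ℚ) / n)
    have hn' : (n : ℚ) ≠ 0 := by exact_mod_cast hn
    have h2 : (2 : ℚ) * |(x : ℚ) - n * (round ((x : ℚ) / n) : ℤ)| ≤ |(n : ℚ)| := by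
      have : (x : ℚ) - n * round ((x : ℚ) / n) = n * ((x : ℚ) / n - round ((x : ℚ) / n)) := by
        field_simp
      rw [this, abs_mul]
      nlinarith [abs_nonneg (n : ℚ)]
    have h3 : ((2 * |x - n * round ((x : ℚ) / n)| : ℤ) : ℚ) ≤ ((|n| : ℤ) : ℚ) := by
      simpa only [Int.cast_mul, Int.cast_abs, Int.cast_sub, Int.cast_ofNat] using h2
    exact Int.cast_le.1 h3
  obtain ⟨k, hk⟩ := hround v.re
  obtain ⟨j, hj⟩ := hround v.im
  refine ⟨⟨k, j⟩, ?_⟩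
  set q : O := ⟨k, j⟩
  have e1 : (a - b * q) * star b = ⟨v.re - n * k, v.im - n * j⟩ := by
    have : b * star b = (n : O) := (Zsqrtd.norm_eq_mul_conj b).symm
    have : (a - b * q) * star b = v - n * q := by
      rw [hv, ← this]; ring
    rw [this]
    ext <;> simp [q]
  have e2 := congrArg Zsqrtd.norm e1
  rw [Zsqrtd.norm_mul, Zsqrtd.norm_conj, ← hndef,
    Zsqrtd.norm_def ⟨v.re - n * k, v.im - n * j⟩] at e2
  simp only at e2
  zify
  set p := v.re - n * k
  set s := v.im - n * j
  have hnpos : 0 < |n| := abs_pos.2 hn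
  have hp : 4 * p ^ 2 ≤ n ^ 2 := by
    rw [← sq_abs p, ← sq_abs n]; nlinarith [abs_nonneg p]
  have hs : 4 * s ^ 2 ≤ n ^ 2 := by
    rw [← sq_abs s, ← sq_abs n]; nlinarith [abs_nonneg s]
  have hn2 : 0 < n ^ 2 := by positivity
  have : |(a - b * q).norm| * |n| < |n| * |n| := by
    rw [← abs_mul, e2, abs_mul_abs_self, abs_lt]
    constructor <;> nlinarith [sq_nonneg p, sq_nonneg s]
  exact lt_of_mul_lt_mul_right this hnpos.le

/-- The norm-Euclidean structure of `ℤ[√2]`. It is not registered as an instance because only the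
principal ideal property derived from it is used. -/
@[reducible] noncomputable def euclideanDomain : EuclideanDomain O :=
  { (inferInstance : CommRing O), (inferInstance : Nontrivial O) with
    quotient := fun a b => if h : b = 0 then 0 else (exists_quotient a h).choose
    remainder := fun a b => a - b * (if h : b = 0 then 0 else (exists_quotient a h).choose)
    quotient_zero := fun a => by simp
    quotient_mul_add_remainder_eq := fun a b => by ring
    r := fun a b => a.norm.natAbs < b.norm.natAbs
    r_wellFounded := (measure (fun a : O => a.norm.natAbs)).wf
    remainder_lt := fun a b hb => by
      simp only [hb, dite_false]
      exact (exists_quotient a hb).choose_spec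
    mul_left_not_lt := fun a b hb => by
      rw [Zsqrtd.norm_mul, Int.natAbs_mul, not_lt]
      exact Nat.le_mul_of_pos_right _ (Int.natAbs_pos.2 (norm_ne_zero hb)) }

instance : IsPrincipalIdealRing O := by
  have := @EuclideanDomain.to_principal_ideal_domain O euclideanDomain
  exact this

/-- Reduction modulo the prime `√2`, as a homomorphism to `𝔽₂`. Elements with `par x = 1` are called
odd in the comments below. -/
def par : O →+* ZMod 2 := Zsqrtd.lift ⟨0, by decide⟩

lemma par_apply (x : O) : par x = (x.re : ZMod 2) := by
  change (x.re : ZMod 2) + x.im * 0 = _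
  simp

@[simp] lemma par_rt : par rt = 0 := by rw [par_apply]; simp

lemma exists_rt_mul {x : O} (h : par x = 0) : ∃ y, x = rt * y := by
  rw [par_apply, ZMod.intCast_zmod_eq_zero_iff_dvd] at h
  obtain ⟨k, hk⟩ := h
  refine ⟨⟨x.im, k⟩, ?_⟩
  push_cast at hk
  ext <;> simp [hk]

lemma par_eq_zero_iff {x : O} : par x = 0 ↔ x.re % 2 = 0 := by
  rw [par_apply, ZMod.intCast_zmod_eq_zero_iff_dvd]; push_cast; omega

lemma par_eq_one_iff {x : O} : par x = 1 ↔ x.re % 2 = 1 := by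
  rw [par_apply, ← Int.cast_one, ZMod.intCast_eq_intCast_iff]; unfold Int.ModEq; push_cast; omega

lemma rt_ne_zero : (rt : O) ≠ 0 := by
  intro h
  have := congrArg Zsqrtd.im h
  simp at this

lemma two_ne_zero' : (2 : O) ≠ 0 := by
  rw [← rt_sq]
  exact mul_ne_zero rt_ne_zero rt_ne_zero

end SqrtTwo

namespace SqrtTwo

/-! ### A maximal quaternion order over `ℤ[√2]` -/

/-- A maximal order in the Hamilton quaternions over `ℚ(√2)`. The coordinates refer to the `O`-basis
`1`, `(1 + i)/√2`, `(1 + j)/√2`, `(1 + i + j + k)/2`, and the multiplication below is given by the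
structure constants of this basis. -/
@[ext] structure Ord where
  c0 : O
  c1 : O
  c2 : O
  c3 : O

namespace Ord

instance : Zero Ord := ⟨⟨0, 0, 0, 0⟩⟩
instance : One Ord := ⟨⟨1, 0, 0, 0⟩⟩
instance : Add Ord := ⟨fun x y => ⟨x.c0 + y.c0, x.c1 + y.c1, x.c2 + y.c2, x.c3 + y.c3⟩⟩
instance : Neg Ord := ⟨fun x => ⟨-x.c0, -x.c1, -x.c2, -x.c3⟩⟩
instance : Sub Ord := ⟨fun x y => ⟨x.c0 - y.c0, x.c1 - y.c1, x.c2 - y.c2, x.c3 - y.c3⟩⟩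
instance : Mul Ord := ⟨fun x y =>
  ⟨x.c0 * y.c0 - x.c1 * y.c1 - x.c2 * y.c2 - x.c3 * y.c3 - x.c2 * y.c1
      - rt * (x.c2 * y.c3) - rt * (x.c3 * y.c1),
   x.c0 * y.c1 + x.c1 * y.c0 + rt * (x.c1 * y.c1) + rt * (x.c2 * y.c1) + x.c2 * y.c3
      + x.c3 * y.c1 - x.c3 * y.c2,
   x.c0 * y.c2 + x.c2 * y.c0 + rt * (x.c2 * y.c2) + rt * (x.c2 * y.c1) + x.c2 * y.c3
      + x.c3 * y.c1 - x.c1 * y.c3,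
   x.c0 * y.c3 + x.c3 * y.c0 + x.c3 * y.c3 + x.c1 * y.c2 - x.c2 * y.c1
      + rt * (x.c1 * y.c3) + rt * (x.c3 * y.c2)⟩⟩

@[simp] lemma zero_c0 : (0 : Ord).c0 = 0 := rfl
@[simp] lemma zero_c1 : (0 : Ord).c1 = 0 := rfl
@[simp] lemma zero_c2 : (0 : Ord).c2 = 0 := rfl
@[simp] lemma zero_c3 : (0 : Ord).c3 = 0 := rfl
@[simp] lemma one_c0 : (1 : Ord).c0 = 1 := rfl
@[simp] lemma one_c1 : (1 : Ord).c1 = 0 := rfl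
@[simp] lemma one_c2 : (1 : Ord).c2 = 0 := rfl
@[simp] lemma one_c3 : (1 : Ord).c3 = 0 := rfl
@[simp] lemma add_c0 (x y : Ord) : (x + y).c0 = x.c0 + y.c0 := rfl
@[simp] lemma add_c1 (x y : Ord) : (x + y).c1 = x.c1 + y.c1 := rfl
@[simp] lemma add_c2 (x y : Ord) : (x + y).c2 = x.c2 + y.c2 := rfl
@[simp] lemma add_c3 (x y : Ord) : (x + y).c3 = x.c3 + y.c3 := rfl
@[simp] lemma sub_c0 (x y : Ord) : (x - y).c0 = x.c0 - y.c0 := rfl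
@[simp] lemma sub_c1 (x y : Ord) : (x - y).c1 = x.c1 - y.c1 := rfl
@[simp] lemma sub_c2 (x y : Ord) : (x - y).c2 = x.c2 - y.c2 := rfl
@[simp] lemma sub_c3 (x y : Ord) : (x - y).c3 = x.c3 - y.c3 := rfl
@[simp] lemma neg_c0 (x : Ord) : (-x).c0 = -x.c0 := rfl
@[simp] lemma neg_c1 (x : Ord) : (-x).c1 = -x.c1 := rfl
@[simp] lemma neg_c2 (x : Ord) : (-x).c2 = -x.c2 := rfl
@[simp] lemma neg_c3 (x : Ord) : (-x).c3 = -x.c3 := rfl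
@[simp] lemma mul_c0 (x y : Ord) : (x * y).c0 =
    x.c0 * y.c0 - x.c1 * y.c1 - x.c2 * y.c2 - x.c3 * y.c3 - x.c2 * y.c1
      - rt * (x.c2 * y.c3) - rt * (x.c3 * y.c1) := rfl
@[simp] lemma mul_c1 (x y : Ord) : (x * y).c1 =
    x.c0 * y.c1 + x.c1 * y.c0 + rt * (x.c1 * y.c1) + rt * (x.c2 * y.c1) + x.c2 * y.c3
      + x.c3 * y.c1 - x.c3 * y.c2 := rfl
@[simp] lemma mul_c2 (x y : Ord) : (x * y).c2 =
    x.c0 * y.c2 + x.c2 * y.c0 + rt * (x.c2 * y.c2) + rt * (x.c2 * y.c1) + x.c2 * y.c3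
      + x.c3 * y.c1 - x.c1 * y.c3 := rfl
@[simp] lemma mul_c3 (x y : Ord) : (x * y).c3 =
    x.c0 * y.c3 + x.c3 * y.c0 + x.c3 * y.c3 + x.c1 * y.c2 - x.c2 * y.c1
      + rt * (x.c1 * y.c3) + rt * (x.c3 * y.c2) := rfl

instance : Ring Ord where
  add_assoc x y z := by ext1 <;> simp only [add_c0, add_c1, add_c2, add_c3] <;> ring
  zero_add x := by ext1 <;> simp only [add_c0, add_c1, add_c2, add_c3, zero_c0, zero_c1, zero_c2, zero_c3] <;> ring
  add_zero x := by ext1 <;> simp only [add_c0, add_c1, add_c2, add_c3, zero_c0, zero_c1, zero_c2, zero_c3] <;> ring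
  add_comm x y := by ext1 <;> simp only [add_c0, add_c1, add_c2, add_c3] <;> ring
  sub_eq_add_neg x y := by
    ext1 <;> simp only [add_c0, add_c1, add_c2, add_c3, sub_c0, sub_c1, sub_c2, sub_c3,
      neg_c0, neg_c1, neg_c2, neg_c3] <;> ring
  neg_add_cancel x := by
    ext1 <;> simp only [add_c0, add_c1, add_c2, add_c3, zero_c0, zero_c1, zero_c2, zero_c3,
      neg_c0, neg_c1, neg_c2, neg_c3] <;> ring
  mul_assoc x y z := by
    have := rt_sq
    ext1 <;> simp only [mul_c0, mul_c1, mul_c2, mul_c3] <;> generalize rt = r at * <;> grind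
  one_mul x := by ext1 <;> simp
  mul_one x := by ext1 <;> simp
  zero_mul x := by ext1 <;> simp
  mul_zero x := by ext1 <;> simp
  left_distrib x y z := by
    ext1 <;> simp only [mul_c0, mul_c1, mul_c2, mul_c3, add_c0, add_c1, add_c2, add_c3] <;> ring
  right_distrib x y z := by
    ext1 <;> simp only [mul_c0, mul_c1, mul_c2, mul_c3, add_c0, add_c1, add_c2, add_c3] <;> ring
  nsmul := nsmulRec
  zsmul := zsmulRec

/-- The inclusion of the scalars. -/
def C : O →+* Ord where
  toFun c := ⟨c, 0, 0, 0⟩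
  map_one' := rfl
  map_zero' := rfl
  map_add' x y := by ext1 <;> simp
  map_mul' x y := by ext1 <;> simp

@[simp] lemma C_c0 (a : O) : (C a).c0 = a := rfl
@[simp] lemma C_c1 (a : O) : (C a).c1 = 0 := rfl
@[simp] lemma C_c2 (a : O) : (C a).c2 = 0 := rfl
@[simp] lemma C_c3 (a : O) : (C a).c3 = 0 := rfl

lemma C_mul_comm (a : O) (x : Ord) : C a * x = x * C a := by
  ext1 <;> simp only [mul_c0, mul_c1, mul_c2, mul_c3, C_c0, C_c1, C_c2, C_c3] <;> ring

@[simp] lemma C_mul_c0 (a : O) (x : Ord) : (C a * x).c0 = a * x.c0 := by simp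
@[simp] lemma C_mul_c1 (a : O) (x : Ord) : (C a * x).c1 = a * x.c1 := by simp
@[simp] lemma C_mul_c2 (a : O) (x : Ord) : (C a * x).c2 = a * x.c2 := by simp
@[simp] lemma C_mul_c3 (a : O) (x : Ord) : (C a * x).c3 = a * x.c3 := by simp

lemma C_mul_cancel {a : O} (ha : a ≠ 0) {x y : Ord} (h : C a * x = C a * y) : x = y := by
  ext1
  · exact mul_left_cancel₀ ha (by simpa only [C_mul_c0] using congrArg c0 h)
  · exact mul_left_cancel₀ ha (by simpa only [C_mul_c1] using congrArg c1 h)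
  · exact mul_left_cancel₀ ha (by simpa only [C_mul_c2] using congrArg c2 h)
  · exact mul_left_cancel₀ ha (by simpa only [C_mul_c3] using congrArg c3 h)

/-- The reduced trace. -/
def tr (x : Ord) : O := 2 * x.c0 + rt * x.c1 + rt * x.c2 + x.c3

/-- Quaternion conjugation, `x ↦ tr x - x`. -/
def conj (x : Ord) : Ord := ⟨tr x - x.c0, -x.c1, -x.c2, -x.c3⟩

@[simp] lemma conj_c0 (x : Ord) : (conj x).c0 = tr x - x.c0 := rfl
@[simp] lemma conj_c1 (x : Ord) : (conj x).c1 = -x.c1 := rfl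
@[simp] lemma conj_c2 (x : Ord) : (conj x).c2 = -x.c2 := rfl
@[simp] lemma conj_c3 (x : Ord) : (conj x).c3 = -x.c3 := rfl

/-- The reduced norm, see `mul_conj`. -/
def N (x : Ord) : O := x.c0 ^ 2 + x.c1 ^ 2 + x.c2 ^ 2 + x.c3 ^ 2 + rt * (x.c0 * x.c1)
  + rt * (x.c0 * x.c2) + x.c0 * x.c3 + x.c1 * x.c2 + rt * (x.c1 * x.c3) + rt * (x.c2 * x.c3)

lemma mul_conj (x : Ord) : x * conj x = C (N x) := by
  have := rt_sq
  ext1 <;> simp only [mul_c0, mul_c1, mul_c2, mul_c3, conj_c0, conj_c1, conj_c2, conj_c3,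
    C_c0, C_c1, C_c2, C_c3, tr, N] <;> generalize rt = r at * <;> grind

lemma conj_mul_self (x : Ord) : conj x * x = C (N x) := by
  have := rt_sq
  ext1 <;> simp only [mul_c0, mul_c1, mul_c2, mul_c3, conj_c0, conj_c1, conj_c2, conj_c3,
    C_c0, C_c1, C_c2, C_c3, tr, N] <;> generalize rt = r at * <;> grind

lemma conj_mul (x y : Ord) : conj (x * y) = conj y * conj x := by
  have := rt_sq
  ext1 <;> simp only [mul_c0, mul_c1, mul_c2, mul_c3, conj_c0, conj_c1, conj_c2, conj_c3,
    tr] <;> generalize rt = r at * <;> grind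

@[simp] lemma conj_conj (x : Ord) : conj (conj x) = x := by
  ext1 <;> simp only [conj_c0, conj_c1, conj_c2, conj_c3, tr] <;> ring

lemma conj_add (x y : Ord) : conj (x + y) = conj x + conj y := by
  ext1 <;> simp only [conj_c0, conj_c1, conj_c2, conj_c3, tr, add_c0, add_c1, add_c2, add_c3]
    <;> ring

@[simp] lemma conj_C (a : O) : conj (C a) = C a := by
  ext1 <;> simp only [conj_c0, conj_c1, conj_c2, conj_c3, tr, C_c0, C_c1, C_c2, C_c3] <;> ring

lemma add_conj (x : Ord) : x + conj x = C (tr x) := by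
  ext1 <;> simp only [conj_c0, conj_c1, conj_c2, conj_c3, tr, C_c0, C_c1, C_c2, C_c3,
    add_c0, add_c1, add_c2, add_c3] <;> ring

lemma C_injective : Function.Injective C := fun _ _ h => congrArg c0 h

@[simp] lemma N_C (a : O) : N (C a) = a ^ 2 := by simp [N]

@[simp] lemma N_one : N 1 = 1 := by simp [N]

@[simp] lemma N_zero : N 0 = 0 := by simp [N]

lemma N_mul (x y : Ord) : N (x * y) = N x * N y := by
  apply C_injective
  rw [← mul_conj, conj_mul, mul_assoc, ← mul_assoc y, mul_conj, C_mul_comm, ← mul_assoc, mul_conj,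
    map_mul]

@[simp] lemma N_conj (x : Ord) : N (conj x) = N x := by
  apply C_injective
  rw [← mul_conj, conj_conj, conj_mul_self]

/-- The norm in terms of the doubled coordinates with respect to `1, i, j, k`. -/
lemma four_mul_N (x : Ord) : 4 * N x = (2 * x.c0 + rt * x.c1 + rt * x.c2 + x.c3) ^ 2
    + (rt * x.c1 + x.c3) ^ 2 + (rt * x.c2 + x.c3) ^ 2 + x.c3 ^ 2 := by
  have := rt_sq
  simp only [N]
  generalize rt = r at *
  grind

lemma N_tp {x : Ord} (hx : x ≠ 0) : TP (N x) := by
  have h := four_mul_N x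
  have key : ∀ f : O →+* ℝ, (∀ a : O, a ≠ 0 → f a ≠ 0) → 0 < f (N x) := by
    intro f hf
    have e := congrArg f h
    simp only [map_mul, map_add, map_pow, map_ofNat] at e
    by_contra! hle
    have h3 : f x.c3 = 0 := by
      rw [← sq_eq_zero_iff]
      nlinarith [sq_nonneg (2 * f x.c0 + f rt * f x.c1 + f rt * f x.c2 + f x.c3),
        sq_nonneg (f rt * f x.c1 + f x.c3), sq_nonneg (f rt * f x.c2 + f x.c3), sq_nonneg (f x.c3)]
    have h1 : f rt * f x.c1 + f x.c3 = 0 := by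
      rw [← sq_eq_zero_iff]
      nlinarith [sq_nonneg (2 * f x.c0 + f rt * f x.c1 + f rt * f x.c2 + f x.c3),
        sq_nonneg (f rt * f x.c1 + f x.c3), sq_nonneg (f rt * f x.c2 + f x.c3), sq_nonneg (f x.c3)]
    have h2 : f rt * f x.c2 + f x.c3 = 0 := by
      rw [← sq_eq_zero_iff]
      nlinarith [sq_nonneg (2 * f x.c0 + f rt * f x.c1 + f rt * f x.c2 + f x.c3),
        sq_nonneg (f rt * f x.c1 + f x.c3), sq_nonneg (f rt * f x.c2 + f x.c3), sq_nonneg (f x.c3)]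
    have h0 : 2 * f x.c0 + f rt * f x.c1 + f rt * f x.c2 + f x.c3 = 0 := by
      rw [← sq_eq_zero_iff]
      nlinarith [sq_nonneg (2 * f x.c0 + f rt * f x.c1 + f rt * f x.c2 + f x.c3),
        sq_nonneg (f rt * f x.c1 + f x.c3), sq_nonneg (f rt * f x.c2 + f x.c3), sq_nonneg (f x.c3)]
    have hr := hf _ rt_ne_zero
    have z : ∀ a : O, f a = 0 → a = 0 := fun a ha => by_contra fun h => hf a h ha
    rw [h3, add_zero] at h1 h2 h0
    have h1' := (mul_eq_zero.1 h1).resolve_left hr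
    have h2' := (mul_eq_zero.1 h2).resolve_left hr
    rw [h1', h2', mul_zero, add_zero, add_zero] at h0
    have h0' : f x.c0 = 0 := by linarith
    apply hx
    ext1
    · exact z _ h0'
    · exact z _ h1'
    · exact z _ h2'
    · exact z _ h3
  exact tp_iff.2 ⟨key emb1 fun a => emb1_ne_zero, key emb2 fun a => emb2_ne_zero⟩

lemma N_ne_zero {x : Ord} (hx : x ≠ 0) : N x ≠ 0 := (N_tp hx).ne_zero

lemma tr_C_mul (a : O) (x : Ord) : tr (C a * x) = a * tr x := by
  simp only [tr, C_mul_c0, C_mul_c1, C_mul_c2, C_mul_c3]; ring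

lemma tr_mul_comm (x y : Ord) : tr (x * y) = tr (y * x) := by
  have := rt_sq
  simp only [mul_c0, mul_c1, mul_c2, mul_c3, tr]
  generalize rt = r at *
  grind

end Ord
end SqrtTwo

namespace SqrtTwo

/-! ### The order is norm-Euclidean -/

/-- The vector lies, modulo `2`, in the extended Hamming code of length 8, which is given here by parity
checks (the code is self-dual). These integer vectors form a copy of `E₈` scaled by `√2`. -/
def InCode (a b c d e f g h : ℤ) : Prop :=
  (b + d + f + h) % 2 = 0 ∧ (c + d + g + h) % 2 = 0 ∧ (e + f + g + h) % 2 = 0 ∧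
    (a + b + c + d + e + f + g + h) % 2 = 0

instance (a b c d e f g h : ℤ) : Decidable (InCode a b c d e f g h) := by
  unfold InCode; infer_instance

set_option maxHeartbeats 1000000 in
/-- A covering bound near the center of the unit cube. If all 16 codewords with entries `0, 1` were at
squared distance at least `13/5`, complementary codewords would bound eight sums `±a ± b … ± h` by
`T - 3/5` in absolute value, where `T = a² + … + h²`. The signs form a Hadamard matrix, so
`T ≤ (T - 3/5)²`, which is impossible for `3/5 ≤ T ≤ 2`. -/
lemma exists_codeword {a b c d e f g h : ℚ} (ha : |a| ≤ 1 / 2) (hb : |b| ≤ 1 / 2)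
    (hc : |c| ≤ 1 / 2) (hd : |d| ≤ 1 / 2) (he : |e| ≤ 1 / 2) (hf : |f| ≤ 1 / 2)
    (hg : |g| ≤ 1 / 2) (hh : |h| ≤ 1 / 2) :
    ∃ a' b' c' d' e' f' g' h' : ℤ, InCode a' b' c' d' e' f' g' h' ∧
      (1 / 2 - a - a') ^ 2 + (1 / 2 - b - b') ^ 2 + (1 / 2 - c - c') ^ 2 + (1 / 2 - d - d') ^ 2
      + (1 / 2 - e - e') ^ 2 + (1 / 2 - f - f') ^ 2 + (1 / 2 - g - g') ^ 2 + (1 / 2 - h - h') ^ 2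
      < 13 / 5 := by
  by_contra! H
  obtain ⟨T, hT⟩ : ∃ T, T = a ^ 2 + b ^ 2 + c ^ 2 + d ^ 2 + e ^ 2 + f ^ 2 + g ^ 2 + h ^ 2 := ⟨_, rfl⟩
  have l0 : (a + b + c + d + e + f + g + h) ^ 2 ≤ (T - 3 / 5) ^ 2 := by
    have h1 := H 0 0 0 0 0 0 0 0 (by decide)
    have h2 := H 1 1 1 1 1 1 1 1 (by decide)
    push_cast at h1 h2
    exact sq_le_sq' (by linear_combination h2 - hT) (by linear_combination h1 - hT)
  have hT2 : 3 / 5 ≤ T := by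
    have h1 := H 0 0 0 0 0 0 0 0 (by decide)
    have h2 := H 1 1 1 1 1 1 1 1 (by decide)
    push_cast at h1 h2
    linear_combination h1 / 2 + h2 / 2 - hT
  have l1 : (a + b + c + d - e - f - g - h) ^ 2 ≤ (T - 3 / 5) ^ 2 := by
    have h1 := H 0 0 0 0 1 1 1 1 (by decide)
    have h2 := H 1 1 1 1 0 0 0 0 (by decide)
    push_cast at h1 h2
    exact sq_le_sq' (by linear_combination h2 - hT) (by linear_combination h1 - hT)
  have l2 : (a + b - c - d + e + f - g - h) ^ 2 ≤ (T - 3 / 5) ^ 2 := by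
    have h1 := H 0 0 1 1 0 0 1 1 (by decide)
    have h2 := H 1 1 0 0 1 1 0 0 (by decide)
    push_cast at h1 h2
    exact sq_le_sq' (by linear_combination h2 - hT) (by linear_combination h1 - hT)
  have l3 : (a + b - c - d - e - f + g + h) ^ 2 ≤ (T - 3 / 5) ^ 2 := by
    have h1 := H 0 0 1 1 1 1 0 0 (by decide)
    have h2 := H 1 1 0 0 0 0 1 1 (by decide)
    push_cast at h1 h2
    exact sq_le_sq' (by linear_combination h2 - hT) (by linear_combination h1 - hT)
  have l4 : (a - b + c - d + e - f + g - h) ^ 2 ≤ (T - 3 / 5) ^ 2 := by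
    have h1 := H 0 1 0 1 0 1 0 1 (by decide)
    have h2 := H 1 0 1 0 1 0 1 0 (by decide)
    push_cast at h1 h2
    exact sq_le_sq' (by linear_combination h2 - hT) (by linear_combination h1 - hT)
  have l5 : (a - b + c - d - e + f - g + h) ^ 2 ≤ (T - 3 / 5) ^ 2 := by
    have h1 := H 0 1 0 1 1 0 1 0 (by decide)
    have h2 := H 1 0 1 0 0 1 0 1 (by decide)
    push_cast at h1 h2
    exact sq_le_sq' (by linear_combination h2 - hT) (by linear_combination h1 - hT)
  have l6 : (a - b - c + d + e - f - g + h) ^ 2 ≤ (T - 3 / 5) ^ 2 := by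
    have h1 := H 0 1 1 0 0 1 1 0 (by decide)
    have h2 := H 1 0 0 1 1 0 0 1 (by decide)
    push_cast at h1 h2
    exact sq_le_sq' (by linear_combination h2 - hT) (by linear_combination h1 - hT)
  have l7 : (a - b - c + d - e + f + g - h) ^ 2 ≤ (T - 3 / 5) ^ 2 := by
    have h1 := H 0 1 1 0 1 0 0 1 (by decide)
    have h2 := H 1 0 0 1 0 1 1 0 (by decide)
    push_cast at h1 h2
    exact sq_le_sq' (by linear_combination h2 - hT) (by linear_combination h1 - hT)
  clear H
  have sqb : ∀ x : ℚ, |x| ≤ 1 / 2 → x ^ 2 ≤ 1 / 4 := by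
    intro x hx
    rw [← sq_abs]; nlinarith [abs_nonneg x]
  have hT3 : T ≤ 2 := by
    linear_combination hT + sqb a ha + sqb b hb + sqb c hc + sqb d hd + sqb e he + sqb f hf
      + sqb g hg + sqb h hh
  -- the rows of a Hadamard matrix of order 8 are orthogonal of squared length 8
  have hT1 : 8 * T ≤ 8 * (T - 3 / 5) ^ 2 := by
    linear_combination l0 + l1 + l2 + l3 + l4 + l5 + l6 + l7 + 8 * hT
  clear l0 l1 l2 l3 l4 l5 l6 l7 hT
  nlinarith

/-- Translation by even integers and a sign change move `x` into `[0, 1]`. -/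
lemma reduce_coordinate (x : ℚ) : ∃ n σ : ℤ, ∃ y : ℚ, |y| ≤ 1 / 2 ∧ (σ = 1 ∨ σ = -1) ∧
    x - 2 * n = σ * (1 / 2 - y) := by
  have h := abs_sub_round (x / 2)
  set n := round (x / 2)
  rw [abs_le] at h
  rcases le_total 0 (x / 2 - n) with h0 | h0
  · refine ⟨n, 1, 1 / 2 - (x - 2 * n), ?_, Or.inl rfl, by push_cast; ring⟩
    rw [abs_le]; constructor <;> linarith
  · refine ⟨n, -1, 1 / 2 + (x - 2 * n), ?_, Or.inr rfl, by push_cast; ring⟩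
    rw [abs_le]; constructor <;> linarith

/-- The symmetries in `reduce_coordinate` preserve the code, so `exists_codeword` bounds the distance
of every point to the lattice. -/
lemma exists_code_approx (a b c d e f g h : ℤ) {M : ℤ} (hM : 0 < M) :
    ∃ a' b' c' d' e' f' g' h' : ℤ, InCode a' b' c' d' e' f' g' h' ∧
      5 * ((a - M * a') ^ 2 + (b - M * b') ^ 2 + (c - M * c') ^ 2 + (d - M * d') ^ 2
      + (e - M * e') ^ 2 + (f - M * f') ^ 2 + (g - M * g') ^ 2 + (h - M * h') ^ 2)
      < 13 * M ^ 2 := by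
  have hMQ : (0 : ℚ) < M := by exact_mod_cast hM
  obtain ⟨na, sa, ya, ha, ia, ea⟩ := reduce_coordinate ((a : ℚ) / M)
  obtain ⟨nb, sb, yb, hb, ib, eb⟩ := reduce_coordinate ((b : ℚ) / M)
  obtain ⟨nc, sc, yc, hc, ic, ec⟩ := reduce_coordinate ((c : ℚ) / M)
  obtain ⟨nd, sd, yd, hd, id, ed⟩ := reduce_coordinate ((d : ℚ) / M)
  obtain ⟨ne, se, ye, he, ie, ee⟩ := reduce_coordinate ((e : ℚ) / M)
  obtain ⟨nf, sf, yf, hf, if', ef⟩ := reduce_coordinate ((f : ℚ) / M)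
  obtain ⟨ng, sg, yg, hg, ig, eg⟩ := reduce_coordinate ((g : ℚ) / M)
  obtain ⟨nh, sh, yh, hh, ih, eh⟩ := reduce_coordinate ((h : ℚ) / M)
  obtain ⟨a', b', c', d', e', f', g', h', ⟨c1, c2, c3, c4⟩, hcost⟩ :=
    exists_codeword ha hb hc hd he hf hg hh
  have par : ∀ n s w : ℤ, (s = 1 ∨ s = -1) → (2 * n + s * w) % 2 = w % 2 := by
    rintro n s w (rfl | rfl) <;> omega
  have cost : ∀ (x n s w : ℤ) (y : ℚ), (s = 1 ∨ s = -1) → (x : ℚ) / M - 2 * n = s * (1 / 2 - y) →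
      ((x : ℚ) - M * (2 * n + s * w)) ^ 2 = M ^ 2 * (1 / 2 - y - w) ^ 2 := by
    intro x n s w y hs hx
    have hs2 : (s : ℚ) ^ 2 = 1 := by rcases hs with rfl | rfl <;> norm_num
    have : (x : ℚ) = M * (2 * n + s * (1 / 2 - y)) := by
      rw [← hx]; field_simp; ring
    rw [this]
    linear_combination (M : ℚ) ^ 2 * (1 / 2 - y - w) ^ 2 * hs2
  refine ⟨2 * na + sa * a', 2 * nb + sb * b', 2 * nc + sc * c', 2 * nd + sd * d',
    2 * ne + se * e', 2 * nf + sf * f', 2 * ng + sg * g', 2 * nh + sh * h', ?_, ?_⟩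
  · have pa := par na sa a' ia
    have pb := par nb sb b' ib
    have pc := par nc sc c' ic
    have pd := par nd sd d' id
    have pe := par ne se e' ie
    have pf := par nf sf f' if'
    have pg := par ng sg g' ig
    have ph := par nh sh h' ih
    unfold InCode
    omega
  · have : (5 : ℚ) * ((a - M * (2 * na + sa * a')) ^ 2 + (b - M * (2 * nb + sb * b')) ^ 2
        + (c - M * (2 * nc + sc * c')) ^ 2 + (d - M * (2 * nd + sd * d')) ^ 2
        + (e - M * (2 * ne + se * e')) ^ 2 + (f - M * (2 * nf + sf * f')) ^ 2
        + (g - M * (2 * ng + sg * g')) ^ 2 + (h - M * (2 * nh + sh * h')) ^ 2) < 13 * M ^ 2 := by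
      rw [cost _ _ _ _ _ ia ea, cost _ _ _ _ _ ib eb, cost _ _ _ _ _ ic ec, cost _ _ _ _ _ id ed,
        cost _ _ _ _ _ ie ee, cost _ _ _ _ _ if' ef, cost _ _ _ _ _ ig eg, cost _ _ _ _ _ ih eh]
      have hM2 : (0 : ℚ) < M ^ 2 := by positivity
      have := mul_lt_mul_of_pos_left hcost hM2
      linarith
    exact_mod_cast this

namespace Ord

/-- The absolute value of the norm of the reduced norm, the Euclidean size on `Ord`. -/
def size (x : Ord) : ℕ := (N x).norm.natAbs

lemma size_pos {x : Ord} (hx : x ≠ 0) : 0 < size x :=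
  Int.natAbs_pos.2 (norm_ne_zero (N_ne_zero hx))

lemma size_eq {x : Ord} (hx : x ≠ 0) : (size x : ℤ) = (N x).norm := by
  have := (N_tp hx).2
  unfold size
  omega

set_option maxHeartbeats 1000000 in
/-- Every element of the order is approximated by a multiple of `M`. If `n` is the reduced norm of the
difference, then `4 (n.re + n.im)` is a sum of eight squares, namely the squared distance between
a vector and a multiple of a vector of the code lattice. -/
lemma exists_approx (y : Ord) {M : ℤ} (hM : 0 < M) :
    ∃ q : Ord, (N (y - C (M : O) * q)).norm < M ^ 4 := by
  -- twice the coordinates of `y` with respect to `1, i, j, k`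
  obtain ⟨X0, hX0⟩ : ∃ X : O, X = 2 * y.c0 + rt * y.c1 + rt * y.c2 + y.c3 := ⟨_, rfl⟩
  obtain ⟨X1, hX1⟩ : ∃ X : O, X = rt * y.c1 + y.c3 := ⟨_, rfl⟩
  obtain ⟨X2, hX2⟩ : ∃ X : O, X = rt * y.c2 + y.c3 := ⟨_, rfl⟩
  obtain ⟨X3, hX3⟩ : ∃ X : O, X = y.c3 := ⟨_, rfl⟩
  obtain ⟨a, b, c, d, e, f, g, h, ⟨k1, k2, k3, k4⟩, hcost⟩ := exists_code_approx
    (X0.re + X0.im) (X1.re + X1.im) (X2.re + X2.im) (X3.re + X3.im)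
    (-X0.im) (-X1.im) (-X2.im) (-X3.im) hM
  obtain ⟨b1, hb1⟩ : ∃ z, b + f - d - h = 2 * z := ⟨(b + f - d - h) / 2, by omega⟩
  obtain ⟨b2, hb2⟩ : ∃ z, c + g - d - h = 2 * z := ⟨(c + g - d - h) / 2, by omega⟩
  obtain ⟨b0, hb0⟩ : ∃ z, -e + f + g - h = 2 * z := ⟨(-e + f + g - h) / 2, by omega⟩
  obtain ⟨a0, ha0⟩ : ∃ z, a + e - b - f - c - g + d + h = 2 * z :=
    ⟨(a + e - b - f - c - g + d + h) / 2, by omega⟩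
  refine ⟨⟨⟨a0, b0⟩, ⟨-f + h, b1⟩, ⟨-g + h, b2⟩, ⟨d + h, -h⟩⟩, ?_⟩
  generalize hx : y - C (M : O) * ⟨⟨a0, b0⟩, ⟨-f + h, b1⟩, ⟨-g + h, b2⟩, ⟨d + h, -h⟩⟩ = x
  have x0 : x.c0 = y.c0 - (M : O) * ⟨a0, b0⟩ := by rw [← hx, sub_c0, C_mul_c0]
  have x1 : x.c1 = y.c1 - (M : O) * ⟨-f + h, b1⟩ := by rw [← hx, sub_c1, C_mul_c1]
  have x2 : x.c2 = y.c2 - (M : O) * ⟨-g + h, b2⟩ := by rw [← hx, sub_c2, C_mul_c2]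
  have x3 : x.c3 = y.c3 - (M : O) * ⟨d + h, -h⟩ := by rw [← hx, sub_c3, C_mul_c3]
  have e0 : 2 * x.c0 + rt * x.c1 + rt * x.c2 + x.c3
      = ⟨X0.re - M * (a + e), X0.im + M * e⟩ := by
    rw [hX0, x0, x1, x2, x3]
    ext <;> simp
    · linear_combination M * ha0 + M * hb1 + M * hb2
    · linear_combination M * hb0
  have e1 : rt * x.c1 + x.c3 = ⟨X1.re - M * (b + f), X1.im + M * f⟩ := by
    rw [hX1, x1, x3]
    ext <;> simp
    · linear_combination M * hb1
    · ring
  have e2 : rt * x.c2 + x.c3 = ⟨X2.re - M * (c + g), X2.im + M * g⟩ := by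
    rw [hX2, x2, x3]
    ext <;> simp
    · linear_combination M * hb2
    · ring
  have e3 : x.c3 = ⟨X3.re - M * (d + h), X3.im + M * h⟩ := by
    rw [hX3, x3]
    ext <;> simp
    try ring
  have h4 := four_mul_N x
  rw [e0, e1, e2, e3] at h4
  generalize N x = n at h4 ⊢
  clear hX0 hX1 hX2 hX3 x0 x1 x2 x3 e0 e1 e2 e3 hx
  have hre := congrArg Zsqrtd.re h4
  have him := congrArg Zsqrtd.im h4
  simp [sq] at hre him
  rw [Zsqrtd.norm_def]
  have hsum : 4 * (n.re + n.im) * 5 < 13 * M ^ 2 := by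
    linarith
  have hnn : 0 ≤ n.re + n.im := by
    have : 0 ≤ 4 * (n.re + n.im) := by
      have : 4 * (n.re + n.im) = (X0.re + X0.im - M * a) ^ 2 + (X1.re + X1.im - M * b) ^ 2
        + (X2.re + X2.im - M * c) ^ 2 + (X3.re + X3.im - M * d) ^ 2 + (-X0.im - M * e) ^ 2
        + (-X1.im - M * f) ^ 2 + (-X2.im - M * g) ^ 2 + (-X3.im - M * h) ^ 2 := by
        linear_combination hre + him
      rw [this]; positivity
    omega
  -- the norm `A² - 2 * B²` equals `2 * (A + B)² - (A + 2 * B)²`, hence is at most `2 * (A + B)²`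
  have h5 : (20 * (n.re + n.im)) ^ 2 ≤ (13 * M ^ 2) ^ 2 := by
    apply sq_le_sq'
    · nlinarith [sq_nonneg M]
    · linarith
  have hM4 : 0 < M ^ 4 := by positivity
  nlinarith [sq_nonneg (n.re + 2 * n.im)]

lemma exists_right_quotient (x : Ord) {y : Ord} (hy : y ≠ 0) :
    ∃ q : Ord, size (x - y * q) < size y := by
  set n := N y with hn
  have hM := size_eq hy
  have hM0 : 0 < (N y).norm := (N_tp hy).2
  obtain ⟨q, hq⟩ := exists_approx (C (star n) * (conj y * x)) hM0
  refine ⟨q, ?_⟩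
  have e : C (star n) * (conj y * x) - C ((N y).norm : O) * q
      = C (star n) * (conj y * (x - y * q)) := by
    rw [Zsqrtd.norm_eq_mul_conj, ← hn, mul_comm n, map_mul, mul_sub, mul_sub, ← mul_assoc (conj y),
      conj_mul_self, mul_assoc]
  rw [e, N_mul, N_mul, N_C, N_conj, Zsqrtd.norm_mul, Zsqrtd.norm_mul, sq, Zsqrtd.norm_mul,
    Zsqrtd.norm_conj, ← hn] at hq
  rw [← hn] at hM0 hM
  by_cases hz : x - y * q = 0
  · rw [hz]
    have := size_pos hy
    simpa [size] using this
  zify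
  rw [size_eq hz, hM]
  set m := n.norm
  have : 0 < m ^ 3 := by positivity
  have h2 : m ^ 3 * (N (x - y * q)).norm < m ^ 3 * m := by linarith
  exact lt_of_mul_lt_mul_left h2 this.le

/-- A generator `g` of the right ideal generated by `a` and `b`. -/
lemma exists_right_gcd (b : Ord) : ∀ a : Ord, ∃ g u v a' b' : Ord,
    g = a * u + b * v ∧ a = g * a' ∧ b = g * b' := by
  induction hs : size b using Nat.strong_induction_on generalizing b with
  | _ n ih =>
    intro a
    by_cases hb : b = 0
    · exact ⟨a, 1, 0, 1, 0, by simp, by simp, by simp [hb]⟩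
    obtain ⟨q, hq⟩ := exists_right_quotient a hb
    obtain ⟨g, u, v, a', b', hg, ha, hb'⟩ := ih _ (hs ▸ hq) (a - b * q) rfl b
    refine ⟨g, v, u - q * v, b' + a' * q, a', ?_, ?_, ha⟩
    · rw [hg]; noncomm_ring
    · rw [mul_add, ← hb', ← mul_assoc, ← ha]; noncomm_ring

/-- A generator `g` of the left ideal generated by `a` and `b`. -/
lemma exists_left_gcd (a b : Ord) : ∃ g u v a' b' : Ord,
    g = u * a + v * b ∧ a = a' * g ∧ b = b' * g := by
  obtain ⟨g, u, v, a', b', hg, ha, hb⟩ := exists_right_gcd (conj b) (conj a)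
  refine ⟨conj g, conj u, conj v, conj a', conj b', ?_, ?_, ?_⟩
  · rw [hg, conj_add, conj_mul, conj_mul, conj_conj, conj_conj]
  · rw [← conj_mul, ← ha, conj_conj]
  · rw [← conj_mul, ← hb, conj_conj]

end Ord
end SqrtTwo

namespace SqrtTwo

/-! ### Factorization in the order -/
namespace Ord

/-- The generator of the right ideal generated by `a` and `γ` has norm associated to `a`. -/
lemma exists_factor_of_prime_of_not_dvd {a : O} (ha : Prime a) {γ : Ord} (hdvd : a ∣ N γ)
    (hγ : ¬ ∃ γ', γ = C a * γ') : ∃ A B, γ = A * B ∧ Associated (N A) a := by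
  obtain ⟨g, u, v, a', b', hg, ha', hb'⟩ := exists_right_gcd γ (C a)
  obtain ⟨k, hk⟩ := hdvd
  have h1 : C (N g) = C a * (u * conj g + γ * v * conj u + C (k * N v)) := by
    rw [← mul_conj]
    nth_rw 1 [hg]
    have : conj g = conj u * C a + conj v * conj γ := by
      rw [hg, conj_add, conj_mul, conj_mul, conj_C]
    calc (C a * u + γ * v) * conj g = C a * u * conj g + γ * v * conj g := by rw [add_mul]
      _ = C a * u * conj g + (γ * v * conj u * C a + γ * (v * conj v) * conj γ) := by
        nth_rw 2 [this]; noncomm_ring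
      _ = C a * u * conj g + (C a * (γ * v * conj u) + C (N v) * (γ * conj γ)) := by
        rw [mul_conj v, ← C_mul_comm, ← C_mul_comm, mul_assoc (C (N v))]
      _ = _ := by
        have hc : C (N v) * C (N γ) = C a * C (k * N v) := by
          rw [hk, ← map_mul, ← map_mul]; congr 1; ring
        rw [mul_conj, hc]
        simp only [mul_add, mul_assoc, add_assoc]
  have h2 : N g = a * (u * conj g + γ * v * conj u + C (k * N v)).c0 := by
    have := congrArg c0 h1
    rwa [C_c0, C_mul_c0] at this
  generalize (u * conj g + γ * v * conj u + C (k * N v)).c0 = c at h2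
  have h3 : c * N a' = a := by
    have := congrArg N ha'
    rw [N_C, N_mul, h2] at this
    apply mul_left_cancel₀ ha.ne_zero
    linear_combination -this
  rcases ha.irreducible.isUnit_or_isUnit h3.symm with h | h
  · exact ⟨g, b', hb', by rw [h2]; exact associated_mul_unit_left a c h⟩
  · obtain ⟨w, hw⟩ := h.exists_right_inv
    refine absurd ⟨C w * conj a' * b', ?_⟩ hγ
    have : g = C a * (C w * conj a') := by
      rw [ha', mul_assoc, ← mul_assoc a', ← C_mul_comm, mul_assoc, mul_conj, ← map_mul,
        mul_comm, hw, map_one, mul_one]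
    rw [← mul_assoc, ← this]; exact hb'

lemma exists_nat_prime_of_prime {a : O} (ha : Prime a) : ∃ p : ℕ, p.Prime ∧ a ∣ (p : O) := by
  have key : ∀ n : ℕ, n ≠ 0 → a ∣ (n : O) → ∃ p : ℕ, p.Prime ∧ a ∣ (p : O) := by
    intro n
    induction n using induction_on_primes with
    | zero => simp
    | one => intro _ h; exact absurd (isUnit_of_dvd_one (by simpa using h)) ha.not_isUnit
    | prime_mul p m hp ih =>
      intro h0 h
      rw [Nat.cast_mul] at h
      rcases ha.dvd_or_dvd h with h | h
      · exact ⟨p, hp, h⟩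
      · exact ih (right_ne_zero_of_mul h0) h
  refine key a.norm.natAbs (by simpa using norm_ne_zero ha.ne_zero) ?_
  have h : a ∣ (a.norm : O) := ⟨star a, Zsqrtd.norm_eq_mul_conj a⟩
  rw [← Int.cast_natCast (R := O)]
  rcases (by omega : (a.norm.natAbs : ℤ) = a.norm ∨ (a.norm.natAbs : ℤ) = -a.norm) with h1 | h1
  · rwa [h1]
  · rwa [h1, Int.cast_neg, dvd_neg]

lemma exists_norm_associated_prime {a : O} (ha : Prime a) : ∃ P, Associated (N P) a := by
  obtain ⟨p, hp, hap⟩ := exists_nat_prime_of_prime ha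
  suffices h : ∃ γ, a ∣ N γ ∧ ¬ ∃ γ', γ = C a * γ' by
    obtain ⟨γ, h1, h2⟩ := h
    obtain ⟨A, B, -, h3⟩ := exists_factor_of_prime_of_not_dvd ha h1 h2
    exact ⟨A, h3⟩
  rcases hp.eq_two_or_odd' with rfl | hodd
  · have hr : a ∣ rt := by
      have : a ∣ rt * rt := by rw [rt_sq]; exact_mod_cast hap
      rcases ha.dvd_or_dvd this with h | h <;> exact h
    refine ⟨⟨1, 1, 0, 0⟩, ?_, ?_⟩
    · have : N ⟨1, 1, 0, 0⟩ = rt * (rt + 1) := by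
        simp only [N]; linear_combination -rt_sq
      rw [this]; exact hr.mul_right _
    · rintro ⟨γ', h⟩
      have := congrArg c0 h
      rw [C_mul_c0] at this
      exact ha.not_isUnit (isUnit_of_dvd_one ⟨_, this⟩)
  · have : Fact p.Prime := ⟨hp⟩
    obtain ⟨x, y, hxy⟩ := ZMod.sq_add_sq p (-1)
    have h1 : a ∣ (1 + (x.val : O) ^ 2 + (y.val : O) ^ 2) := by
      have : (p : ℕ) ∣ 1 + x.val ^ 2 + y.val ^ 2 := by
        rw [← ZMod.natCast_eq_zero_iff]
        push_cast
        rw [ZMod.natCast_zmod_val, ZMod.natCast_zmod_val]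
        linear_combination hxy
      have h := Nat.cast_dvd_cast (α := O) this
      push_cast at h
      exact hap.trans h
    have hr : ¬ a ∣ rt := by
      intro h
      obtain ⟨k, hk⟩ := hodd
      have h2 : a ∣ (2 : O) := by rw [← rt_sq]; exact h.mul_right _
      have h3 : a ∣ (1 : O) := by
        have : (1 : O) = p - 2 * k := by rw [hk]; push_cast; ring
        rw [this]; exact dvd_sub hap (h2.mul_right _)
      exact ha.not_isUnit (isUnit_of_dvd_one h3)
    refine ⟨⟨1 - x.val - y.val, rt * x.val, rt * y.val, 0⟩, ?_, ?_⟩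
    · convert h1 using 1
      simp only [N]
      have := rt_sq
      generalize rt = r at *
      grind
    · rintro ⟨γ', h⟩
      have k0 := congrArg c0 h
      have k1 := congrArg c1 h
      have k2 := congrArg c2 h
      rw [C_mul_c0] at k0
      rw [C_mul_c1] at k1
      rw [C_mul_c2] at k2
      have hx : a ∣ (x.val : O) := (ha.dvd_or_dvd ⟨_, k1⟩).resolve_left hr
      have hy : a ∣ (y.val : O) := (ha.dvd_or_dvd ⟨_, k2⟩).resolve_left hr
      refine ha.not_isUnit (isUnit_of_dvd_one ?_)
      have : (1 : O) = (1 - x.val - y.val) + x.val + y.val := by ring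
      rw [this]
      exact dvd_add (dvd_add ⟨_, k0⟩ hx) hy

lemma exists_factor_associated {a : O} (ha : a ≠ 0) : ∀ {γ : Ord}, a ∣ N γ →
    ∃ A B, γ = A * B ∧ Associated (N A) a := by
  induction a using UniqueFactorizationMonoid.induction_on_prime with
  | h₁ => exact absurd rfl ha
  | h₂ x hx => intro γ _; exact ⟨1, γ, by simp, by rw [N_one]; exact (associated_one_iff_isUnit.2 hx).symm⟩
  | h₃ a p ha0 hp ih =>
    intro γ h
    have h1 : ∃ A B, γ = A * B ∧ Associated (N A) p := by
      by_cases hd : ∃ γ', γ = C p * γ'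
      · obtain ⟨γ', rfl⟩ := hd
        obtain ⟨P, hP⟩ := exists_norm_associated_prime hp
        obtain ⟨u, hu⟩ := hP
        refine ⟨P, conj P * (C u * γ'), ?_, u, hu⟩
        rw [← mul_assoc, mul_conj, ← mul_assoc, ← map_mul, hu]
      · exact exists_factor_of_prime_of_not_dvd hp ((dvd_mul_right p a).trans h) hd
    obtain ⟨A1, B1, rfl, hA1⟩ := h1
    rw [N_mul] at h
    have h2 : a ∣ N B1 := by
      have : p * a ∣ p * N B1 := h.trans (mul_dvd_mul hA1.dvd dvd_rfl)
      exact (mul_dvd_mul_iff_left hp.ne_zero).1 this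
    obtain ⟨A2, B2, rfl, hA2⟩ := ih ha0 h2
    exact ⟨A1 * A2, B2, by rw [mul_assoc], by rw [N_mul]; exact hA1.mul_mul hA2⟩

/-- Any totally positive divisor of the norm of `γ` is the norm of a left factor of `γ`: the left factor
from `exists_factor_associated` has the right norm up to a totally positive unit, which is a square. -/
lemma exists_factor {a : O} (ha : TP a) {γ : Ord} (h : a ∣ N γ) :
    ∃ A B, γ = A * B ∧ N A = a := by
  obtain ⟨A, B, rfl, h1⟩ := exists_factor_associated ha.ne_zero h
  obtain ⟨u, hu⟩ := h1.symm
  have hA : A ≠ 0 := by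
    rintro rfl
    rw [N_zero] at hu
    exact ha.ne_zero (by simpa using hu)
  have hut : TP (u : O) := TP.of_mul ha (hu ▸ N_tp hA)
  obtain ⟨w, hw⟩ := tp_unit_sq (u := u) (v := (u⁻¹ : Oˣ)) (by simp) hut
  have hinv : w * (w * (u⁻¹ : Oˣ)) = 1 := by
    rw [← mul_assoc, ← sq, hw]; simp
  refine ⟨A * C (w * (u⁻¹ : Oˣ)), C w * B, ?_, ?_⟩
  · rw [mul_assoc, ← mul_assoc (C _) (C _), ← map_mul, mul_comm _ w, hinv, map_one, one_mul]
  · rw [N_mul, N_C, ← hu, ← hw]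
    linear_combination a * (w * (w * (u⁻¹ : Oˣ)) + 1) * hinv

/-- The quaternion `p0 + p1 i + p2 j + p3 k`. Elements of this form are called Lipschitz below. -/
def lip (p0 p1 p2 p3 : O) : Ord := ⟨p0 - p1 - p2 + p3, rt * (p1 - p3), rt * (p2 - p3), 2 * p3⟩

lemma tr_lip (p0 p1 p2 p3 : O) : tr (lip p0 p1 p2 p3) = 2 * p0 := by
  have := rt_sq
  simp only [tr, lip]
  generalize rt = r at *
  grind

lemma N_lip (p0 p1 p2 p3 : O) : N (lip p0 p1 p2 p3) = p0 ^ 2 + p1 ^ 2 + p2 ^ 2 + p3 ^ 2 := by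
  have := rt_sq
  simp only [N, lip]
  generalize rt = r at *
  grind

lemma tr_lip_mul_conj (p0 p1 p2 p3 q0 q1 q2 q3 : O) :
    tr (lip p0 p1 p2 p3 * conj (lip q0 q1 q2 q3)) =
      2 * (p0 * q0 + p1 * q1 + p2 * q2 + p3 * q3) := by
  have := rt_sq
  simp only [tr, lip, mul_c0, mul_c1, mul_c2, mul_c3, conj_c0, conj_c1, conj_c2, conj_c3]
  generalize rt = r at *
  grind

lemma sq_eq (x : Ord) : x * x = C (tr x) * x - C (N x) := by
  rw [← add_conj, add_mul, conj_mul_self, add_sub_cancel_right]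

/-- Trace `t` and norm `n` can be prescribed if `4 n - t²` is a sum of three squares up to a square. The
quaternion `γ₀ = Γ / (2 W)` with `Γ = t W + X i + Y j + Z k` has trace `t` and norm `n`, and so has its
conjugate `β γ₀ β⁻¹`. It lies in the order if `β` generates the left ideal generated by `2 W` and `Γ`. -/
lemma exists_tr_N {n t W X Y Z : O} (hW : W ≠ 0)
    (h : X ^ 2 + Y ^ 2 + Z ^ 2 = (4 * n - t ^ 2) * W ^ 2) : ∃ γ, tr γ = t ∧ N γ = n := by
  have hN : N (lip (t * W) X Y Z) = 4 * n * W ^ 2 := by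
    rw [N_lip]; linear_combination h
  have hT : tr (lip (t * W) X Y Z) = 2 * W * t := by rw [tr_lip]; ring
  generalize lip (t * W) X Y Z = Γ at hN hT
  obtain ⟨β, u, v, a', b', hβ, ha, hb⟩ := exists_left_gcd (C (2 * W)) Γ
  have h2W : 2 * W ≠ 0 := mul_ne_zero two_ne_zero' hW
  have hβ0 : β ≠ 0 := by
    rintro rfl
    rw [mul_zero] at ha
    exact h2W (C_injective (by rw [ha, map_zero]))
  set γ : Ord := u * b' + C t * (v * b') - C n * (v * a') with hγ
  have key : β * Γ = C (2 * W) * (γ * β) := by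
    have e1 : γ * β = u * Γ + C t * (v * Γ) - C n * (v * C (2 * W)) := by
      simp only [hγ, sub_mul, add_mul, mul_assoc, ← hb, ← ha]
    rw [e1]
    nth_rw 1 [hβ]
    have : Γ * Γ = C (2 * W) * (C t * Γ) - C (2 * W) * (C n * C (2 * W)) := by
      rw [sq_eq, hN, hT, map_mul, mul_assoc]
      congr 1
      rw [← map_mul, ← map_mul]; congr 1; ring
    have c1 (c : O) (x : Ord) : v * (C c * x) = C c * (v * x) := by
      rw [← mul_assoc, ← C_mul_comm, mul_assoc]
    rw [add_mul, mul_assoc v, this, ← C_mul_comm, mul_assoc, mul_sub, c1, c1, c1, c1, mul_sub,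
      mul_add, add_sub_assoc]
  have hNβ := N_ne_zero hβ0
  refine ⟨γ, ?_, ?_⟩
  · have h1 := congrArg (fun x => tr (x * conj β)) key
    rw [mul_assoc (C _), mul_assoc γ, mul_conj, ← C_mul_comm, ← mul_assoc, ← map_mul, tr_C_mul,
      tr_mul_comm, ← mul_assoc, conj_mul_self, tr_C_mul, hT] at h1
    apply mul_left_cancel₀ (mul_ne_zero h2W hNβ)
    linear_combination -h1
  · have h1 := congrArg N key
    rw [N_mul, N_mul, N_mul, N_C, hN] at h1
    apply mul_left_cancel₀ (mul_ne_zero (mul_ne_zero h2W h2W) hNβ)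
    linear_combination -h1

end Ord
end SqrtTwo

namespace SqrtTwo

/-! ### Gram data of four vectors: odd discriminants -/
set_option linter.unusedSimpArgs false

lemma even_im_sq (x : O) : (x ^ 2).im % 2 = 0 := by
  rw [sq, Zsqrtd.im_mul, mul_comm x.im]; omega

lemma par_cases (x : O) : par x = 0 ∨ par x = 1 := by
  generalize par x = y; revert y; decide

lemma exists_three_squares_of_odd_odd_even {d y1 y2 y3 : O} (hd : d.im % 2 = 0)
    (h : y1 ^ 2 + y2 ^ 2 + y3 ^ 2 = 2 * d) (h1 : par y1 = 1) (h2 : par y2 = 1) (h3 : par y3 = 0) :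
    ∃ x1 x2 x3 : O, d = x1 ^ 2 + x2 ^ 2 + x3 ^ 2 := by
  obtain ⟨z, rfl⟩ := exists_rt_mul h3
  rw [par_eq_one_iff] at h1 h2
  have him := congrArg Zsqrtd.im h
  simp [sq] at him
  have hs : (y1.im + y2.im) % 2 = 0 := by
    obtain ⟨k1, hk1⟩ : ∃ k, y1.re = 2 * k + 1 := ⟨y1.re / 2, by omega⟩
    obtain ⟨k2, hk2⟩ : ∃ k, y2.re = 2 * k + 1 := ⟨y2.re / 2, by omega⟩
    obtain ⟨k3, hk3⟩ : ∃ k, d.im = 2 * k := ⟨d.im / 2, by omega⟩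
    rw [hk1, hk2, hk3] at him
    have : y1.im + y2.im = 2 * (k3 - k1 * y1.im - k2 * y2.im - z.re * z.im) := by linarith
    omega
  obtain ⟨u, hu⟩ : ∃ u : O, y1 + y2 = 2 * u := by
    refine ⟨⟨(y1.re + y2.re) / 2, (y1.im + y2.im) / 2⟩, ?_⟩
    ext <;> simp <;> omega
  refine ⟨u, u - y2, z, ?_⟩
  have e : y1 = 2 * u - y2 := by linear_combination hu
  subst e
  apply mul_left_cancel₀ two_ne_zero'
  have := rt_sq
  generalize rt = r at *
  linear_combination -h + z ^ 2 * this

/-- The admissible discriminants: odd elements and twice odd elements. -/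
def OddOrTwiceOdd (d : O) : Prop := par d = 1 ∨ ∃ e, d = 2 * e ∧ par e = 1

lemma tp_two : TP 2 := by constructor <;> simp [Zsqrtd.norm_def]

lemma three_squares_up_to_sq' {d : O} (hd : TP d) (h : OddOrTwiceOdd d) :
    ∃ W X Y Z, W ≠ 0 ∧ d * W ^ 2 = X ^ 2 + Y ^ 2 + Z ^ 2 := by
  rcases h with h | ⟨e, rfl, h⟩
  · exact three_squares_up_to_sq hd (par_eq_one_iff.1 h)
  · obtain ⟨W, X, Y, Z, hW, h⟩ :=
      three_squares_up_to_sq (TP.of_mul tp_two hd) (par_eq_one_iff.1 h)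
    refine ⟨W, rt * X, rt * Y, rt * Z, hW, ?_⟩
    linear_combination 2 * h - (X ^ 2 + Y ^ 2 + Z ^ 2) * rt_sq

open SqrtTwo.Ord

/-- A quaternion of trace `0` and norm `d` has doubled coordinates divisible by `√2`, so `2 d` is a sum
of three squares of elements whose sum is even; these are recombined into three squares with sum `d`. -/
lemma exists_three_squares {d : O} (hd : TP d) (h : OddOrTwiceOdd d) (him : d.im % 2 = 0) :
    ∃ x1 x2 x3 : O, d = x1 ^ 2 + x2 ^ 2 + x3 ^ 2 := by
  obtain ⟨W, X, Y, Z, hW, h⟩ := three_squares_up_to_sq' hd h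
  obtain ⟨γ, ht, hn⟩ := exists_tr_N (n := d) (t := 0) (X := 2 * X) (Y := 2 * Y) (Z := 2 * Z) hW
    (by linear_combination -4 * h)
  obtain ⟨w, hw⟩ : ∃ w, w = -rt * γ.c0 - γ.c1 - γ.c2 := ⟨_, rfl⟩
  have h3 : γ.c3 = rt * w := by
    simp only [tr] at ht
    rw [hw]; linear_combination ht + γ.c0 * rt_sq
  have hsum : (γ.c1 + w) ^ 2 + (γ.c2 + w) ^ 2 + w ^ 2 = 2 * d := by
    have h4 := four_mul_N γ
    have ht' : 2 * γ.c0 + rt * γ.c1 + rt * γ.c2 + γ.c3 = 0 := ht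
    rw [ht', hn, h3] at h4
    apply mul_left_cancel₀ two_ne_zero'
    linear_combination -h4 - ((γ.c1 + w) ^ 2 + (γ.c2 + w) ^ 2 + w ^ 2) * rt_sq
  have hpar : par (γ.c1 + w) + par (γ.c2 + w) + par w = 0 := by
    have : (γ.c1 + w) + (γ.c2 + w) + w = rt * (-γ.c0 + rt * w) := by
      rw [hw]; linear_combination -(-rt * γ.c0 - γ.c1 - γ.c2) * rt_sq
    rw [← map_add, ← map_add, this, map_mul, par_rt, zero_mul]
  generalize γ.c1 + w = y1 at *
  generalize γ.c2 + w = y2 at *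
  clear hw h3
  rcases par_cases y1 with h1 | h1 <;> rcases par_cases y2 with h2 | h2 <;>
    rcases par_cases w with h3 | h3 <;> rw [h1, h2, h3] at hpar
  · obtain ⟨x1, rfl⟩ := exists_rt_mul h1
    obtain ⟨x2, rfl⟩ := exists_rt_mul h2
    obtain ⟨x3, rfl⟩ := exists_rt_mul h3
    refine ⟨x1, x2, x3, ?_⟩
    apply mul_left_cancel₀ two_ne_zero'
    linear_combination -hsum + (x1 ^ 2 + x2 ^ 2 + x3 ^ 2) * rt_sq
  · exact absurd hpar (by decide)
  · exact absurd hpar (by decide)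
  · exact exists_three_squares_of_odd_odd_even him
      (by linear_combination hsum : y2 ^ 2 + w ^ 2 + y1 ^ 2 = 2 * d) h2 h3 h1
  · exact absurd hpar (by decide)
  · exact exists_three_squares_of_odd_odd_even him
      (by linear_combination hsum : y1 ^ 2 + w ^ 2 + y2 ^ 2 = 2 * d) h1 h3 h2
  · exact exists_three_squares_of_odd_odd_even him hsum h1 h2 h3
  · exact absurd hpar (by decide)

namespace Ord

lemma lip_mul_lip (p0 p1 p2 p3 q0 q1 q2 q3 : O) : lip p0 p1 p2 p3 * lip q0 q1 q2 q3 =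
    lip (p0 * q0 - p1 * q1 - p2 * q2 - p3 * q3) (p0 * q1 + p1 * q0 + p2 * q3 - p3 * q2)
      (p0 * q2 - p1 * q3 + p2 * q0 + p3 * q1) (p0 * q3 + p1 * q2 - p2 * q1 + p3 * q0) := by
  have := rt_sq
  simp only [lip]
  ext1 <;> simp only [mul_c0, mul_c1, mul_c2, mul_c3] <;> generalize rt = r at * <;> grind

lemma conj_lip (p0 p1 p2 p3 : O) : conj (lip p0 p1 p2 p3) = lip p0 (-p1) (-p2) (-p3) := by
  have := rt_sq
  simp only [lip]
  ext1 <;> simp only [conj_c0, conj_c1, conj_c2, conj_c3, tr] <;> generalize rt = r at * <;> grind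

lemma exists_lip {x : Ord} {u v w : O} (h1 : x.c1 = rt * u) (h2 : x.c2 = rt * v)
    (h3 : x.c3 = 2 * w) : ∃ p0 p1 p2 p3, x = lip p0 p1 p2 p3 := by
  refine ⟨x.c0 + u + v + w, u + w, v + w, w, ?_⟩
  simp only [lip]
  ext1
  · simp only; ring
  · simp only [h1]; ring
  · simp only [h2]; ring
  · simp only [h3]

/-- Modulo `√2`, an element of odd norm becomes a scalar after multiplication by a unit. -/
lemma exists_unit_mul {A : Ord} (hA : par (N A) = 1) : ∃ V, N V = 1 ∧ par (A * V).c1 = 0 ∧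
    par (A * V).c2 = 0 ∧ par (A * V).c3 = 0 := by
  have key : ∀ a b c d : ZMod 2, a ^ 2 + b ^ 2 + c ^ 2 + d ^ 2 + a * d + b * c = 1 →
      (b = 0 ∧ c = 0 ∧ d = 0) ∨ (a = 0 ∧ c = 0 ∧ d = 0) ∨ (a = 0 ∧ b = 0 ∧ d = 0) ∨
      (a = 0 ∧ b = 0 ∧ c = 0) ∨ (b = 0 ∧ c = 0 ∧ a + d = 0) ∨ (a = 0 ∧ d = 0 ∧ b + c = 0) := by
    decide
  simp only [N, map_add, map_mul, map_pow, par_rt, zero_mul, add_zero] at hA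
  rcases key _ _ _ _ hA with ⟨h1, h2, h3⟩ | ⟨h1, h2, h3⟩ | ⟨h1, h2, h3⟩ | ⟨h1, h2, h3⟩ |
    ⟨h1, h2, h3⟩ | ⟨h1, h2, h3⟩
  · exact ⟨1, N_one, by simp [h1], by simp [h2], by simp [h3]⟩
  · exact ⟨⟨0, 1, 0, 0⟩, by simp [N], by simp [h1, h2, h3], by simp [h1, h2, h3],
      by simp [h1, h2, h3]⟩
  · exact ⟨⟨0, 0, 1, 0⟩, by simp [N], by simp [h1, h2, h3], by simp [h1, h2, h3],
      by simp [h1, h2, h3]⟩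
  · exact ⟨⟨1, 0, 0, -1⟩, by simp [N], by simp [h1, h2, h3], by simp [h1, h2, h3],
      by simp [h1, h2, h3]⟩
  · exact ⟨⟨0, 0, 0, 1⟩, by simp [N], by simp [h1, h2, h3], by simp [h1, h2, h3],
      by simp [h1, h2, h3]⟩
  · refine ⟨⟨0, 1, -1, 0⟩, by simp [N], by simp [h1, h2, h3], by simp [h1, h2, h3], ?_⟩
    simp only [mul_c3, map_add, map_sub, map_mul, h1, h2, par_rt, map_one, map_neg, map_zero]
    rw [← neg_eq_zero]
    linear_combination h3

/-- An element congruent to `1` modulo `√2` is Lipschitz if the `√2`-part of its norm is even. -/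
lemma exists_lip_of_par {A : Ord} (h0 : par A.c0 = 1) (h1 : par A.c1 = 0) (h2 : par A.c2 = 0)
    (h3 : par A.c3 = 0) (him : (N A).im % 2 = 0) : ∃ p0 p1 p2 p3, A = lip p0 p1 p2 p3 := by
  obtain ⟨x, hx⟩ := exists_rt_mul h1
  obtain ⟨y, hy⟩ := exists_rt_mul h2
  obtain ⟨z, hz⟩ := exists_rt_mul h3
  have hN : N A = A.c0 ^ 2 + rt * (A.c0 * z) + 2 * (x ^ 2 + y ^ 2 + z ^ 2 + A.c0 * x + A.c0 * y
      + x * y + rt * (x * z) + rt * (y * z)) := by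
    simp only [N, hx, hy, hz]
    have := rt_sq
    generalize rt = r at *
    grind
  have hzp : par z = 0 := by
    rw [par_eq_zero_iff]
    rw [par_eq_one_iff] at h0
    have h4 := even_im_sq A.c0
    rw [hN] at him
    generalize x ^ 2 + y ^ 2 + z ^ 2 + A.c0 * x + A.c0 * y
      + x * y + rt * (x * z) + rt * (y * z) = m at him
    simp only [Zsqrtd.im_add] at him
    have e1 : (2 * m).im = 2 * m.im := by simp
    have e2 : (rt * (A.c0 * z)).im = A.c0.re * z.re + 2 * (A.c0.im * z.im) := by simp; ring
    rw [e1, e2] at him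
    obtain ⟨k, hk⟩ : ∃ k, A.c0.re = 2 * k + 1 := ⟨A.c0.re / 2, by omega⟩
    have e3 : A.c0.re * z.re = 2 * (k * z.re) + z.re := by rw [hk]; ring
    rw [e3] at him
    omega
  obtain ⟨w, hw⟩ := exists_rt_mul hzp
  exact exists_lip hx hy (w := w) (by rw [hz, hw, ← mul_assoc, rt_sq])

lemma exists_lip_of_C_mul {a : O} (ha : par a = 1) {B : Ord} {q0 q1 q2 q3 : O}
    (h : C a * B = lip q0 q1 q2 q3) : ∃ p0 p1 p2 p3, B = lip p0 p1 p2 p3 := by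
  have k1 := congrArg c1 h
  have k2 := congrArg c2 h
  have k3 := congrArg c3 h
  simp only [C_mul_c1, C_mul_c2, C_mul_c3, lip] at k1 k2 k3
  have aux : ∀ x y : O, a * x = rt * y → par x = 0 := by
    intro x y hxy
    have := congrArg par hxy
    simpa [ha] using this
  obtain ⟨x, hx⟩ := exists_rt_mul (aux _ _ k1)
  obtain ⟨y, hy⟩ := exists_rt_mul (aux _ _ k2)
  obtain ⟨z, hz⟩ := exists_rt_mul (aux B.c3 (rt * q3) (by rw [k3, ← rt_sq, mul_assoc]))
  obtain ⟨w, hw⟩ := exists_rt_mul (aux z q3 (mul_left_cancel₀ rt_ne_zero (by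
    rw [hz, ← rt_sq] at k3; linear_combination k3)))
  exact exists_lip hx hy (w := w) (by rw [hz, hw, ← mul_assoc, rt_sq])

end Ord

/-- Some `n` vectors `(P i, Q i)` of `O²` have Gram data `(a, h, b)`; equivalently, `a x² + 2 h x y + b y²`
is a sum of `n` squares of linear forms over `O`. -/
def Rep (n : ℕ) (a h b : O) : Prop :=
  ∃ P Q : Fin n → O, ∑ i, P i ^ 2 = a ∧ ∑ i, P i * Q i = h ∧ ∑ i, Q i ^ 2 = b

/-- The coordinates of two Lipschitz quaternions provide the `P i` and the `Q i`. -/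
lemma rep_four_of_lip {A B : Ord} {a h b : O} (hA : ∃ p0 p1 p2 p3, A = lip p0 p1 p2 p3)
    (hB : ∃ p0 p1 p2 p3, B = lip p0 p1 p2 p3) (ha : N A = a) (hb : N B = b)
    (hh : tr (A * conj B) = 2 * h) : Rep 4 a h b := by
  obtain ⟨p0, p1, p2, p3, rfl⟩ := hA
  obtain ⟨q0, q1, q2, q3, rfl⟩ := hB
  rw [tr_lip_mul_conj] at hh
  rw [N_lip] at ha hb
  exact ⟨![p0, p1, p2, p3], ![q0, q1, q2, q3], by simp [Fin.sum_univ_four, ha],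
    by simpa [Fin.sum_univ_four] using mul_left_cancel₀ two_ne_zero' hh,
    by simp [Fin.sum_univ_four, hb]⟩

lemma even_im_of_sub {a b h : O} (hia : a.im % 2 = 0) (hib : b.im % 2 = 0) :
    (a * b - h ^ 2).im % 2 = 0 := by
  have h1 := even_im_sq h
  obtain ⟨k, hk⟩ : ∃ k, a.im = 2 * k := ⟨a.im / 2, by omega⟩
  obtain ⟨l, hl⟩ : ∃ k, b.im = 2 * k := ⟨b.im / 2, by omega⟩
  rw [Zsqrtd.im_sub, Zsqrtd.im_mul, hk, hl]
  have : a.re * (2 * l) + 2 * k * b.re = 2 * (a.re * l + k * b.re) := by ring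
  rw [this]; omega

/-- Write `a b - h² = x1² + x2² + x3²` and factor `h + x1 i + x2 j + x3 k = A B` with `N A = a`. A unit
makes `A` Lipschitz, then `a B = conj A * (A B)` is Lipschitz, and so is `B` as `a` is odd. -/
theorem rep_four_of_odd {a h b : O} (ha : TP a) (hpa : par a = 1) (hia : a.im % 2 = 0)
    (hib : b.im % 2 = 0) (hd : TP (a * b - h ^ 2)) (hdo : OddOrTwiceOdd (a * b - h ^ 2)) :
    Rep 4 a h b := by
  obtain ⟨x1, x2, x3, hx⟩ := exists_three_squares hd hdo (even_im_of_sub hia hib)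
  have hN : N (lip h x1 x2 x3) = a * b := by rw [N_lip]; linear_combination -hx
  obtain ⟨A, B, hAB, hA⟩ := exists_factor ha (γ := lip h x1 x2 x3) (by rw [hN]; exact dvd_mul_right a b)
  obtain ⟨V, hV, h1, h2, h3⟩ := exists_unit_mul (A := A) (by rw [hA, hpa])
  have hNV : N (A * V) = a := by rw [N_mul, hA, hV, mul_one]
  have h0 : par (A * V).c0 = 1 := by
    have : par (N (A * V)) = 1 := by rw [hNV, hpa]
    simp only [N, map_add, map_mul, map_pow, par_rt, zero_mul, add_zero, h1, h2, h3] at this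
    rcases par_cases (A * V).c0 with h | h
    · rw [h] at this; exact absurd this (by decide)
    · exact h
  obtain ⟨p0, p1, p2, p3, hp⟩ := exists_lip_of_par h0 h1 h2 h3 (by rw [hNV]; exact hia)
  have hfac : lip h x1 x2 x3 = (A * V) * (conj V * B) := by
    rw [mul_assoc, ← mul_assoc V, mul_conj, hV, map_one, one_mul, hAB]
  have hCa : C a * (conj V * B) = conj (lip p0 p1 p2 p3) * lip h x1 x2 x3 := by
    rw [hfac, ← hp, ← mul_assoc (conj (A * V)), conj_mul_self, hNV]
  rw [conj_lip, lip_mul_lip] at hCa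
  obtain ⟨q0, q1, q2, q3, hq⟩ := exists_lip_of_C_mul hpa hCa
  refine rep_four_of_lip (A := A * V) (B := conj (conj V * B)) ⟨_, _, _, _, hp⟩
    ⟨_, _, _, _, by rw [hq, conj_lip]⟩ hNV ?_ ?_
  · apply mul_left_cancel₀ ha.ne_zero
    rw [N_conj]
    nth_rw 1 [← hNV]
    rw [← N_mul, ← hfac, hN]
  · rw [conj_conj, ← hfac, tr_lip]

end SqrtTwo

namespace SqrtTwo

/-! ### Gram data of four vectors: multiples of `4 + 2√2` -/
set_option linter.unusedSimpArgs false
set_option synthInstance.maxSize 2000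
set_option synthInstance.maxHeartbeats 400000

namespace Ord

/-- Every nonzero residue modulo `√2` whose norm vanishes is the residue of an element of norm `2 + √2`. -/
lemma exists_lift (b0 b1 b2 b3 : ZMod 2) (h : b0 + b1 + b2 + b3 + b0 * b3 + b1 * b2 = 0)
    (hb : ¬ (b0 = 0 ∧ b1 = 0 ∧ b2 = 0 ∧ b3 = 0)) :
    ∃ β : Ord, N β = 2 + rt ∧ par β.c0 = b0 ∧ par β.c1 = b1 ∧ par β.c2 = b2 ∧ par β.c3 = b3 := by
  have key : ∀ b0 b1 b2 b3 : ZMod 2, b0 + b1 + b2 + b3 + b0 * b3 + b1 * b2 = 0 →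
      ¬ (b0 = 0 ∧ b1 = 0 ∧ b2 = 0 ∧ b3 = 0) →
      (b0 = 0 ∧ b1 = 0 ∧ b2 = 1 ∧ b3 = 1) ∨ (b0 = 0 ∧ b1 = 1 ∧ b2 = 0 ∧ b3 = 1) ∨
      (b0 = 0 ∧ b1 = 1 ∧ b2 = 1 ∧ b3 = 1) ∨ (b0 = 1 ∧ b1 = 0 ∧ b2 = 1 ∧ b3 = 0) ∨
      (b0 = 1 ∧ b1 = 0 ∧ b2 = 1 ∧ b3 = 1) ∨ (b0 = 1 ∧ b1 = 1 ∧ b2 = 0 ∧ b3 = 0) ∨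
      (b0 = 1 ∧ b1 = 1 ∧ b2 = 0 ∧ b3 = 1) ∨ (b0 = 1 ∧ b1 = 1 ∧ b2 = 1 ∧ b3 = 0) ∨
      (b0 = 1 ∧ b1 = 1 ∧ b2 = 1 ∧ b3 = 1) := by decide
  rcases key b0 b1 b2 b3 h hb with h | h | h | h | h | h | h | h | h <;>
    obtain ⟨rfl, rfl, rfl, rfl⟩ := h
  · exact ⟨⟨0, 0, 1, 1⟩, rfl, by simp, by simp, by simp, by simp⟩
  · exact ⟨⟨0, 1, 0, 1⟩, rfl, by simp, by simp, by simp, by simp⟩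
  · exact ⟨⟨-rt, 1, 1, 1⟩, rfl, by simp, by simp, by simp, by simp⟩
  · exact ⟨⟨1, 0, 1, 0⟩, rfl, by simp, by simp, by simp, by simp⟩
  · exact ⟨⟨1, -rt, 1, 1⟩, rfl, by simp, by simp, by simp, by simp⟩
  · exact ⟨⟨1, 1, 0, 0⟩, rfl, by simp, by simp, by simp, by simp⟩
  · exact ⟨⟨1, 1, -rt, 1⟩, rfl, by simp, by simp, by simp, by simp⟩
  · exact ⟨⟨1, 1, 1, -rt⟩, rfl, by simp, by simp, by simp, by simp⟩
  · exact ⟨⟨1, 1, 1, -1 - rt⟩, rfl, by simp, by simp, by simp, by simp⟩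

set_option maxRecDepth 4000 in
/-- Two residues `x`, `y` modulo `√2` for which `x * conj y` has trace zero can be multiplied by
a common nonzero residue `b` of norm zero so that `x b` and `y b` have last coordinate zero. -/
lemma exists_common_residue : ∀ x0 x1 x2 x3 y0 y1 y2 y3 : ZMod 2,
    x0 * y3 + x3 * y0 + x1 * y2 + x2 * y1 = 0 → ∃ b0 b1 b2 b3 : ZMod 2,
      b0 + b1 + b2 + b3 + b0 * b3 + b1 * b2 = 0 ∧ ¬ (b0 = 0 ∧ b1 = 0 ∧ b2 = 0 ∧ b3 = 0) ∧
      x0 * b3 + x3 * b0 + x3 * b3 + x1 * b2 + x2 * b1 = 0 ∧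
      y0 * b3 + y3 * b0 + y3 * b3 + y1 * b2 + y2 * b1 = 0 := by
  decide

/-- Multiplication by `√2` takes an element with even last coordinate to a Lipschitz quaternion. -/
lemma exists_lip_of_rt_mul {A : Ord} (h : par A.c3 = 0) :
    ∃ p0 p1 p2 p3, C rt * A = lip p0 p1 p2 p3 := by
  obtain ⟨w, hw⟩ := exists_rt_mul h
  exact exists_lip (u := A.c1) (v := A.c2) (w := w) (C_mul_c1 _ _) (C_mul_c2 _ _)
    (by rw [C_mul_c3, hw, ← mul_assoc, rt_sq])

end Ord

open SqrtTwo.Ord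

/-- There are `A`, `B` of norms `a0`, `b0` such that `A * conj B` has trace `√2 o`, because the
discriminant `4 a0 b0 - 2 o²` is twice odd. For a suitable `β` of norm `2 + √2` the elements `√2 A β`
and `√2 B β` are Lipschitz, and their Gram data are `(a, h, b)`. -/
theorem rep_four_of_kappa {a h b a0 o b0 : O} (ha : a = (4 + 2 * rt) * a0)
    (hh : 2 * h = (4 + 2 * rt) * (rt * o)) (hb : b = (4 + 2 * rt) * b0) (ho : par o = 1)
    (ha0 : TP a0) (hd : TP (a * b - h ^ 2)) : Rep 4 a h b := by
  have hr := rt_sq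
  have hκ : (4 + 2 * rt : O) ≠ 0 := by
    intro h; have := congrArg Zsqrtd.re h; simp at this
  have hD : TP (2 * (2 * a0 * b0 - o ^ 2)) := by
    refine TP.of_mul (TP.sq hκ) ?_
    have : (4 + 2 * rt) ^ 2 * (2 * (2 * a0 * b0 - o ^ 2)) = 2 ^ 2 * (a * b - h ^ 2) := by
      rw [ha, hb]
      linear_combination (2 * h + (4 + 2 * rt) * (rt * o)) * hh
        + (4 + 2 * rt) ^ 2 * o ^ 2 * hr
    rw [this]
    exact (TP.sq two_ne_zero').mul hd
  have hpar2 : par 2 = 0 := by rw [← rt_sq, map_mul, par_rt, zero_mul]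
  obtain ⟨W, X, Y, Z, hW, hX⟩ := three_squares_up_to_sq' hD
    (Or.inr ⟨_, rfl, by rw [map_sub, map_mul, map_mul, map_pow, ho, hpar2, zero_mul, zero_mul]; decide⟩)
  obtain ⟨γ, ht, hn⟩ := exists_tr_N (n := a0 * b0) (t := rt * o) (X := X) (Y := Y) (Z := Z) hW
    (by linear_combination -hX + W ^ 2 * o ^ 2 * hr)
  obtain ⟨A, B, rfl, hA⟩ := exists_factor ha0 (γ := γ) (by rw [hn]; exact dvd_mul_right _ _)
  obtain ⟨B, rfl⟩ : ∃ B', B = conj B' := ⟨conj B, (conj_conj B).symm⟩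
  have hB : N B = b0 := by
    rw [N_mul, hA, N_conj] at hn
    exact mul_left_cancel₀ ha0.ne_zero hn
  have hpar : par A.c0 * par B.c3 + par A.c3 * par B.c0 + par A.c1 * par B.c2
      + par A.c2 * par B.c1 = 0 := by
    have := congrArg par ht
    simp only [tr, mul_c0, mul_c1, mul_c2, mul_c3, conj_c0, conj_c1, conj_c2, conj_c3,
      map_add, map_sub, map_mul, map_neg, par_rt, zero_mul, hpar2] at this
    revert this
    generalize par A.c0 = x0, par A.c1 = x1, par A.c2 = x2, par A.c3 = x3, par B.c0 = y0,
      par B.c1 = y1, par B.c2 = y2, par B.c3 = y3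
    intro this
    have h2 : (2 : ZMod 2) = 0 := by decide
    linear_combination this + (x0 * y3 + x1 * y2 + x3 * y0) * h2
  obtain ⟨b0', b1, b2, b3, hb1, hb2, hx, hy⟩ := exists_common_residue _ _ _ _ _ _ _ _ hpar
  obtain ⟨β, hβ, rfl, rfl, rfl, rfl⟩ := exists_lift _ _ _ _ hb1 hb2
  have aux : ∀ x : Ord, par x.c0 * par β.c3 + par x.c3 * par β.c0 + par x.c3 * par β.c3
      + par x.c1 * par β.c2 + par x.c2 * par β.c1 = 0 → par (x * β).c3 = 0 := by
    intro x hx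
    simp only [mul_c3, map_add, map_sub, map_mul, par_rt, zero_mul, add_zero]
    have h2 : (2 : ZMod 2) = 0 := by decide
    linear_combination hx - par x.c2 * par β.c1 * h2
  refine rep_four_of_lip (exists_lip_of_rt_mul (aux A hx)) (exists_lip_of_rt_mul (aux B hy)) ?_ ?_ ?_
  · rw [N_mul, N_mul, N_C, hA, hβ, ha]; linear_combination a0 * (2 + rt) * hr
  · rw [N_mul, N_mul, N_C, hB, hβ, hb]; linear_combination b0 * (2 + rt) * hr
  · have : C rt * (A * β) * conj (C rt * (B * β)) = C (rt * rt * (2 + rt)) * (A * conj B) := by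
      rw [Ord.conj_mul, Ord.conj_mul, conj_C, ← C_mul_comm rt (conj β * conj B), mul_assoc, mul_assoc,
        ← mul_assoc β, ← C_mul_comm rt β, mul_assoc (C rt) β, ← mul_assoc β, mul_conj, hβ]
      have c1 (c : O) (x : Ord) : A * (C c * x) = C c * (A * x) := by
        rw [← mul_assoc, ← C_mul_comm, mul_assoc]
      rw [c1, c1, map_mul, map_mul, mul_assoc, mul_assoc]
    rw [this, tr_C_mul, ht, hh, rt_sq]
    ring

end SqrtTwo

namespace SqrtTwo

/-! ### Gram data of lists of vectors -/

/-- The vectors in the list `l` have Gram matrix `(a, h; h, b)`, that is, `a`, `h` and `b` are the sums of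
`v.1²`, `v.1 v.2` and `v.2²` over `v` in `l`. -/
structure Gram (l : List (O × O)) (a h b : O) : Prop where
  fst : (l.map fun v => v.1 ^ 2).sum = a
  mix : (l.map fun v => v.1 * v.2).sum = h
  snd : (l.map fun v => v.2 ^ 2).sum = b

lemma gram_self (l : List (O × O)) : Gram l (l.map fun v => v.1 ^ 2).sum
    (l.map fun v => v.1 * v.2).sum (l.map fun v => v.2 ^ 2).sum := ⟨rfl, rfl, rfl⟩

lemma Gram.perm {l l' : List (O × O)} {a h b : O} (hg : Gram l a h b) (hl : l.Perm l') :
    Gram l' a h b :=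
  ⟨by rw [← hg.fst]; exact (hl.map _).sum_eq.symm, by rw [← hg.mix]; exact (hl.map _).sum_eq.symm,
    by rw [← hg.snd]; exact (hl.map _).sum_eq.symm⟩

lemma gram_nil : Gram [] 0 0 0 := ⟨rfl, rfl, rfl⟩

lemma gram_cons_iff {v : O × O} {l : List (O × O)} {a h b : O} :
    Gram (v :: l) a h b ↔ Gram l (a - v.1 ^ 2) (h - v.1 * v.2) (b - v.2 ^ 2) := by
  constructor
  · rintro ⟨rfl, rfl, rfl⟩
    constructor <;> simp
  · rintro ⟨h1, h2, h3⟩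
    constructor <;> simp [h1, h2, h3]

lemma Gram.swap {l : List (O × O)} {a h b : O} (hg : Gram l a h b) :
    Gram (l.map Prod.swap) b h a := by
  refine ⟨?_, ?_, ?_⟩
  · rw [← hg.snd, List.map_map]; rfl
  · rw [← hg.mix, List.map_map]; simp [Function.comp_def, mul_comm]
  · rw [← hg.fst, List.map_map]; rfl

lemma Gram.eval {l : List (O × O)} {a h b : O} (hg : Gram l a h b) (f : O →+* ℝ) (x y : ℝ) :
    0 ≤ f a * x ^ 2 + 2 * f h * x * y + f b * y ^ 2 := by
  induction l generalizing a h b with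
  | nil => obtain ⟨rfl, rfl, rfl⟩ := hg; simp
  | cons v l ih =>
    have := ih (gram_cons_iff.1 hg)
    simp only [map_sub, map_mul, map_pow] at this
    nlinarith [sq_nonneg (f v.1 * x + f v.2 * y)]

lemma Gram.tp_fst {l : List (O × O)} {a h b : O} (hg : Gram l a h b) (ha : a ≠ 0) : TP a := by
  rw [tp_iff]
  have h1 := hg.eval emb1 1 0
  have h2 := hg.eval emb2 1 0
  have h3 := emb1_ne_zero ha
  have h4 := emb2_ne_zero ha
  simp at h1 h2
  exact ⟨lt_of_le_of_ne h1 h3.symm, lt_of_le_of_ne h2 h4.symm⟩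

lemma Gram.tp_det {l : List (O × O)} {a h b : O} (hg : Gram l a h b) (hd : a * b - h ^ 2 ≠ 0) :
    TP (a * b - h ^ 2) := by
  have key : ∀ f : O →+* ℝ, 0 ≤ f (a * b - h ^ 2) := by
    intro f
    simp only [map_sub, map_mul, map_pow]
    have := discrim_le_zero (a := f a) (b := 2 * f h) (c := f b) fun x => by
      have := hg.eval f x 1
      linarith
    unfold discrim at this
    linarith
  rw [tp_iff]
  exact ⟨lt_of_le_of_ne (key _) (emb1_ne_zero hd).symm,
    lt_of_le_of_ne (key _) (emb2_ne_zero hd).symm⟩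

lemma Gram.fst_ne_zero {l : List (O × O)} {a h b : O} (hg : Gram l a h b)
    (hd : a * b - h ^ 2 ≠ 0) : a ≠ 0 := by
  rintro rfl
  have h1 := (tp_iff.1 (hg.tp_det hd)).1
  simp only [map_sub, map_mul, map_pow, map_zero] at h1
  nlinarith [sq_nonneg (emb1 h)]

lemma Gram.even_im {l : List (O × O)} {a h b : O} (hg : Gram l a h b) :
    a.im % 2 = 0 ∧ b.im % 2 = 0 := by
  induction l generalizing a h b with
  | nil => obtain ⟨rfl, rfl, rfl⟩ := hg; simp
  | cons v l ih =>
    have := ih (gram_cons_iff.1 hg)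
    have h1 := even_im_sq v.1
    have h2 := even_im_sq v.2
    rw [Zsqrtd.im_sub, Zsqrtd.im_sub] at this
    omega

/-- A sum of squares vanishes only if all terms do. -/
lemma Gram.eq_zero {l : List (O × O)} {h b : O} (hg : Gram l 0 h b) : ∀ v ∈ l, v.1 = 0 := by
  have key : ∀ (l : List (O × O)) (a h b : O), Gram l a h b → emb1 a ≤ 0 → ∀ v ∈ l, v.1 = 0 := by
    intro l
    induction l with
    | nil => simp
    | cons w l ih =>
      intro a h b hg ha v hv
      rw [gram_cons_iff] at hg
      have h1 := hg.eval emb1 1 0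
      simp at h1
      rcases List.mem_cons.1 hv with rfl | hv
      · by_contra hne
        have := emb1_ne_zero hne
        have : 0 < emb1 v.1 ^ 2 := by positivity
        linarith
      · refine ih _ _ _ hg ?_ v hv
        simp
        nlinarith [sq_nonneg (emb1 w.1)]
  exact key l 0 h b hg (by simp)

lemma Gram.of_rep {n : ℕ} {a h b : O} (hr : Rep n a h b) : ∃ l, l.length = n ∧ Gram l a h b := by
  obtain ⟨P, Q, h1, h2, h3⟩ := hr
  refine ⟨List.ofFn fun i => (P i, Q i), by simp, ?_⟩
  constructor <;> simp [List.map_ofFn, List.sum_ofFn, *]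

lemma Gram.rep {l : List (O × O)} {a h b : O} (hg : Gram l a h b) : Rep l.length a h b := by
  refine ⟨fun i => (l.get i).1, fun i => (l.get i).2, ?_, ?_, ?_⟩
  · rw [← hg.fst, ← List.sum_ofFn]; congr 1
    conv_rhs => rw [← List.ofFn_get l, List.map_ofFn]
    rfl
  · rw [← hg.mix, ← List.sum_ofFn]; congr 1
    conv_rhs => rw [← List.ofFn_get l, List.map_ofFn]
    rfl
  · rw [← hg.snd, ← List.sum_ofFn]; congr 1
    conv_rhs => rw [← List.ofFn_get l, List.map_ofFn]
    rfl

/-- The data `(a, h, b)` are the Gram data of at most five vectors. -/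
def R5 (a h b : O) : Prop := ∃ l, l.length ≤ 5 ∧ Gram l a h b

lemma R5.swap {a h b : O} (hr : R5 a h b) : R5 b h a := by
  obtain ⟨l, h1, h2⟩ := hr
  exact ⟨_, by simpa using h1, h2.swap⟩

lemma OddOrTwiceOdd.ne_zero {d : O} (h : OddOrTwiceOdd d) : d ≠ 0 := by
  rintro rfl
  rcases h with h | ⟨e, h1, h2⟩
  · simp at h
  · have : e = 0 := (mul_eq_zero.1 h1.symm).resolve_left two_ne_zero'
    simp [this] at h2

lemma Gram.four {l : List (O × O)} {a h b : O} (hg : Gram l a h b) (hp : par a = 1 ∨ par b = 1)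
    (hd : OddOrTwiceOdd (a * b - h ^ 2)) : ∃ l', l'.length = 4 ∧ Gram l' a h b := by
  obtain ⟨hia, hib⟩ := hg.even_im
  rcases hp with hp | hp
  · refine Gram.of_rep (rep_four_of_odd (hg.tp_fst ?_) hp hia hib (hg.tp_det hd.ne_zero) hd)
    exact hg.fst_ne_zero hd.ne_zero
  · rw [mul_comm] at hd
    have hd' := hd.ne_zero
    obtain ⟨l', h1, h2⟩ := Gram.of_rep (rep_four_of_odd (hg.swap.tp_fst
      (hg.swap.fst_ne_zero hd.ne_zero)) hp hib hia (hg.swap.tp_det hd.ne_zero) hd)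
    exact ⟨_, by simpa using h1, h2.swap⟩

lemma Gram.r5_of_remove {l : List (O × O)} {a h b : O} (hg : Gram l a h b) {v : O × O} (hv : v ∈ l)
    (hp : par (a - v.1 ^ 2) = 1 ∨ par (b - v.2 ^ 2) = 1)
    (hd : OddOrTwiceOdd ((a - v.1 ^ 2) * (b - v.2 ^ 2) - (h - v.1 * v.2) ^ 2)) : R5 a h b := by
  obtain ⟨l', hl⟩ : ∃ l', l.Perm (v :: l') := by
    obtain ⟨s, t, rfl⟩ := List.append_of_mem hv
    exact ⟨s ++ t, List.perm_middle⟩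
  have hg' := gram_cons_iff.1 (hg.perm hl)
  obtain ⟨l4, h4, hg4⟩ := hg'.four hp hd
  exact ⟨v :: l4, by simp [h4], gram_cons_iff.2 hg4⟩

end SqrtTwo

namespace SqrtTwo

/-! ### Parity classes of vectors -/

/-- The class of a vector of `O²` modulo `√2`, as a pair of bits. -/
def cls (v : O × O) : Bool × Bool := (decide (par v.1 = 1), decide (par v.2 = 1))

/-- Addition of classes. -/
def cadd (u v : Bool × Bool) : Bool × Bool := (xor u.1 v.1, xor u.2 v.2)

/-- The alternating form on classes. -/
def wedge (u v : Bool × Bool) : Bool := xor (u.1 && v.2) (u.2 && v.1)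

lemma bit_add (x y : O) : decide (par (x + y) = 1) = xor (decide (par x = 1)) (decide (par y = 1)) := by
  rw [map_add]; generalize par x = p; generalize par y = q; revert p q; decide

lemma bit_sub (x y : O) : decide (par (x - y) = 1) = xor (decide (par x = 1)) (decide (par y = 1)) := by
  rw [map_sub]; generalize par x = p; generalize par y = q; revert p q; decide

lemma cls_add (v w : O × O) : cls (v + w) = cadd (cls v) (cls w) := by
  simp only [cls, cadd, Prod.fst_add, Prod.snd_add, bit_add]

lemma cls_sub (v w : O × O) : cls (v - w) = cadd (cls v) (cls w) := by
  simp only [cls, cadd, Prod.fst_sub, Prod.snd_sub, bit_sub]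

lemma cls_neg (v : O × O) : cls (-v) = cls v := by
  have h : ∀ p : ZMod 2, -p = p := by decide
  simp only [cls, Prod.fst_neg, Prod.snd_neg, map_neg, h]

lemma cls_rt (v : O × O) : cls (rt • v) = (false, false) := by
  simp [cls]

lemma cls_rt_add (v w : O × O) : cls (rt • v + w) = cls w := by
  simp [cls_add, cls_rt, cadd]

lemma cls_rt_sub (v w : O × O) : cls (rt • v - w) = cls w := by
  simp [cls_sub, cls_rt, cadd]

lemma exists_rt_smul {v w : O × O} (h : cls v = cls w) : ∃ x, v + w = rt • x := by
  have key : ∀ p q : ZMod 2, decide (p = 1) = decide (q = 1) → p + q = 0 := by decide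
  simp only [cls, Prod.mk.injEq] at h
  obtain ⟨x, hx⟩ := exists_rt_mul (x := v.1 + w.1) (by rw [map_add]; exact key _ _ h.1)
  obtain ⟨y, hy⟩ := exists_rt_mul (x := v.2 + w.2) (by rw [map_add]; exact key _ _ h.2)
  exact ⟨(x, y), Prod.ext (by simpa using hx) (by simpa using hy)⟩

/-- All vectors of the list `l` lie in a common proper subspace modulo `√2`. -/
def Killed (l : List (O × O)) : Prop := ∃ u : Bool × Bool, u ≠ (false, false) ∧
  ∀ v ∈ l, wedge u (cls v) = false

/-- If the Gram data are not all even, one of three cases occurs: four vectors suffice by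
`rep_four_of_odd`, or removing some vector leaves data with odd determinant realized by four vectors,
or the list is killed. -/
lemma r5_of_odd {l : List (O × O)} {a h b : O} (hg : Gram l a h b)
    (hodd : ¬ (par a = 0 ∧ par h = 0 ∧ par b = 0)) (hl : l.length = 6) (hk : Killed l → R5 a h b) :
    R5 a h b := by
  have key : ∀ α η β : ZMod 2, ¬ (α = 0 ∧ η = 0 ∧ β = 0) →
      ((α * β - η ^ 2 = 1 ∧ (α = 1 ∨ β = 1)) ∨ ∃ u : Bool × Bool, u ≠ (false, false) ∧
        ∀ p q : ZMod 2, wedge u (decide (p = 1), decide (q = 1)) = true →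
        (α - p ^ 2 = 1 ∨ β - q ^ 2 = 1) ∧ (α - p ^ 2) * (β - q ^ 2) - (η - p * q) ^ 2 = 1) := by
    decide
  rcases key _ _ _ hodd with ⟨h1, h2⟩ | ⟨u, hu, h1⟩
  · obtain ⟨l', hl', hg'⟩ := hg.four h2 (Or.inl (by simpa using h1))
    exact ⟨l', by omega, hg'⟩
  · by_cases hv : ∃ v ∈ l, wedge u (cls v) = true
    · obtain ⟨v, hv, hw⟩ := hv
      obtain ⟨h2, h3⟩ := h1 _ _ hw
      exact hg.r5_of_remove hv (by simpa using h2) (Or.inl (by simpa using h3))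
    · push Not at hv
      exact hk ⟨u, hu, fun v hv' => by simpa using hv v hv'⟩

lemma exists_same_cls {v : O × O} {l : List (O × O)} {a h b : O} (hg : Gram (v :: l) a h b)
    (h0 : par a = 0 ∧ par h = 0 ∧ par b = 0) (hl : Odd l.length) :
    ∃ w l', l.Perm (w :: l') ∧ cls v = cls w := by
  by_contra hne
  -- the class `(c1, c2)` does not occur, which is expressed by the vanishing of
  -- the sum of `(par v.1 + c1 + 1) * (par v.2 + c2 + 1)` over the list
  have key : ∀ (l : List (O × O)) (a h b : O) (c1 c2 : ZMod 2), Gram l a h b →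
      (∀ w ∈ l, ¬ (par w.1 = c1 ∧ par w.2 = c2)) →
      par h + (c2 + 1) * par a + (c1 + 1) * par b + l.length * ((c1 + 1) * (c2 + 1)) = 0 := by
    intro l
    induction l with
    | nil => intro a h b c1 c2 hg _; obtain ⟨rfl, rfl, rfl⟩ := hg; simp
    | cons w l ih =>
      intro a h b c1 c2 hg hw
      have h1 := ih _ _ _ c1 c2 (gram_cons_iff.1 hg) fun x hx => hw x (List.mem_cons_of_mem _ hx)
      have h2 := hw w List.mem_cons_self
      simp only [map_sub, map_mul, map_pow] at h1
      simp only [List.length_cons, Nat.cast_add, Nat.cast_one]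
      generalize par w.1 = p at *
      generalize par w.2 = q at *
      have h3 : ∀ p q c1 c2 : ZMod 2, ¬ (p = c1 ∧ q = c2) →
        p * q + (c2 + 1) * p ^ 2 + (c1 + 1) * q ^ 2 + (c1 + 1) * (c2 + 1) = 0 := by decide
      linear_combination h1 + h3 p q c1 c2 h2
  have h1 := key l _ _ _ (par v.1) (par v.2) (gram_cons_iff.1 hg) fun w hw hc => by
    obtain ⟨s, t, rfl⟩ := List.append_of_mem hw
    exact hne ⟨w, s ++ t, List.perm_middle, by simp [cls, hc.1, hc.2]⟩
  have h2 : (l.length : ZMod 2) = 1 := by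
    obtain ⟨k, hk⟩ := hl
    rw [hk]; push_cast
    have : (2 : ZMod 2) = 0 := rfl
    rw [this]; ring
  simp only [map_sub, map_mul, map_pow, h0.1, h0.2.1, h0.2.2, h2] at h1
  revert h1
  generalize par v.1 = p
  generalize par v.2 = q
  revert p q
  decide

/-- A list of even length with even Gram data splits into pairs of equal class, and two vectors of equal
class can be written as `√2 S - T, T`. -/
lemma exists_pairs : ∀ (n : ℕ) {l : List (O × O)} {a h b : O}, Gram l a h b →
    (par a = 0 ∧ par h = 0 ∧ par b = 0) → l.length = 2 * n →
    ∃ q : List ((O × O) × (O × O)), q.length = n ∧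
      l.Perm (q.flatMap fun p => [rt • p.1 - p.2, p.2]) := by
  intro n
  induction n with
  | zero =>
    intro l a h b hg h0 hl
    exact ⟨[], rfl, by rw [List.eq_nil_of_length_eq_zero (by omega : l.length = 0)]; simp⟩
  | succ n ih =>
    intro l a h b hg h0 hl
    match l, hl with
    | v :: l, hl =>
      rw [List.length_cons] at hl
      obtain ⟨w, l', hp, hc⟩ := exists_same_cls hg h0 ⟨n, by omega⟩
      have hp' : (v :: l).Perm (v :: w :: l') := hp.cons v
      have hg' := gram_cons_iff.1 (gram_cons_iff.1 (hg.perm hp'))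
      obtain ⟨x, hx⟩ := exists_rt_smul hc
      have hlen := hp.length_eq
      rw [List.length_cons] at hlen
      have key : ∀ p q α η β : ZMod 2, α = 0 ∧ η = 0 ∧ β = 0 →
        α - p ^ 2 - p ^ 2 = 0 ∧ η - p * q - p * q = 0 ∧ β - q ^ 2 - q ^ 2 = 0 := by decide
      have hb : par v.1 = par w.1 ∧ par v.2 = par w.2 := by
        have : ∀ p q : ZMod 2, decide (p = 1) = decide (q = 1) → p = q := by decide
        simp only [cls, Prod.mk.injEq] at hc
        exact ⟨this _ _ hc.1, this _ _ hc.2⟩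
      obtain ⟨q, hq, hqp⟩ := ih hg' (by
        simp only [map_sub, map_mul, map_pow, hb.1, hb.2]
        exact key _ _ _ _ _ h0) (by omega)
      refine ⟨(x, w) :: q, by simp [hq], ?_⟩
      refine hp'.trans ?_
      simp only [List.flatMap_cons, ← hx, add_sub_cancel_right]
      exact (hqp.cons w).cons v

end SqrtTwo

namespace SqrtTwo

/-! ### Parity patterns of three pairs -/

/-- Six classes, in three pairs, to which none of the two reductions applies. First, every nonzero class
`v` satisfies `v ∧ w = η`, where `w` is the sum of all classes and `η` the sum of `s ∧ t` over
the pairs; otherwise one vector can be removed. Second, no nonzero class `u` is orthogonal to a member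
of each pair; otherwise the Gram data come from a killed list. -/
def exitFree (s1 t1 s2 t2 s3 t3 : Bool × Bool) : Bool :=
  let w := cadd s1 (cadd t1 (cadd s2 (cadd t2 (cadd s3 t3))))
  let η := xor (wedge s1 t1) (xor (wedge s2 t2) (wedge s3 t3))
  ([s1, t1, s2, t2, s3, t3].all fun v => v == (false, false) || wedge v w == η) &&
  ([(true, false), (false, true), (true, true)].all fun u =>
    !((!wedge u s1 || !wedge u t1) && (!wedge u s2 || !wedge u t2) && (!wedge u s3 || !wedge u t3)))

/-- If `t1 = t2`, the two re-pairings `Pairs.recombine₁` and `Pairs.recombine₂`, whose classes depend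
on the class `x` of a further vector, both satisfy `exitFree` for some `x`. -/
def recombine (s1 t1 s2 t2 s3 t3 : Bool × Bool) : Bool :=
  !(t1 == t2) || [(false, false), (true, false), (false, true), (true, true)].any fun x =>
    exitFree x t1 (cadd x (cadd s1 s2)) t1 s3 t3 &&
    exitFree (cadd s2 x) t1 (cadd s1 x) t1 s3 t3

set_option synthInstance.maxSize 2000 in
set_option synthInstance.maxHeartbeats 400000 in
set_option maxRecDepth 10000 in
/-- The only patterns for which no re-pairing admits a reduction: both classes of each pair agree, and the
three pairs have distinct classes. -/
lemma classes_of_exitFree : ∀ s1 t1 s2 t2 s3 t3 : Bool × Bool,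
    exitFree s1 t1 s2 t2 s3 t3 = true →
    (recombine s1 t1 s2 t2 s3 t3 && recombine t1 s1 s2 t2 s3 t3 && recombine s1 t1 t2 s2 s3 t3 &&
     recombine t1 s1 t2 s2 s3 t3 &&
     recombine s1 t1 s3 t3 s2 t2 && recombine t1 s1 s3 t3 s2 t2 && recombine s1 t1 t3 s3 s2 t2 &&
     recombine t1 s1 t3 s3 s2 t2 &&
     recombine s2 t2 s3 t3 s1 t1 && recombine t2 s2 s3 t3 s1 t1 && recombine s2 t2 t3 s3 s1 t1 &&
     recombine t2 s2 t3 s3 s1 t1) = true →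
    s1 = t1 ∧ s2 = t2 ∧ s3 = t3 ∧ s1 ≠ s2 ∧ s1 ≠ s3 ∧ s2 ≠ s3 := by
  decide +kernel

end SqrtTwo

namespace SqrtTwo

/-! ### Three pairs of vectors -/

/-- The six vectors `√2 S - T, T`, for three pairs `(S, T)`, have Gram data `(a, h, b)`; see `gram_iff`.
The expanded form of the sums shows the symmetry between `S` and `T`. -/
structure Pairs (a h b : O) (S₁ T₁ S₂ T₂ S₃ T₃ : O × O) : Prop where
  fst : a = 2 * (S₁.1 ^ 2 - rt * S₁.1 * T₁.1 + T₁.1 ^ 2) +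
    2 * (S₂.1 ^ 2 - rt * S₂.1 * T₂.1 + T₂.1 ^ 2) + 2 * (S₃.1 ^ 2 - rt * S₃.1 * T₃.1 + T₃.1 ^ 2)
  mix : h = (2 * S₁.1 * S₁.2 - rt * (S₁.1 * T₁.2 + S₁.2 * T₁.1) + 2 * T₁.1 * T₁.2) +
    (2 * S₂.1 * S₂.2 - rt * (S₂.1 * T₂.2 + S₂.2 * T₂.1) + 2 * T₂.1 * T₂.2) +
    (2 * S₃.1 * S₃.2 - rt * (S₃.1 * T₃.2 + S₃.2 * T₃.1) + 2 * T₃.1 * T₃.2)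
  snd : b = 2 * (S₁.2 ^ 2 - rt * S₁.2 * T₁.2 + T₁.2 ^ 2) +
    2 * (S₂.2 ^ 2 - rt * S₂.2 * T₂.2 + T₂.2 ^ 2) + 2 * (S₃.2 ^ 2 - rt * S₃.2 * T₃.2 + T₃.2 ^ 2)

namespace Pairs

variable {a h b : O} {S₁ T₁ S₂ T₂ S₃ T₃ : O × O}

lemma gram_iff : Gram [rt • S₁ - T₁, T₁, rt • S₂ - T₂, T₂, rt • S₃ - T₃, T₃] a h b ↔
    Pairs a h b S₁ T₁ S₂ T₂ S₃ T₃ := by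
  have hr := rt_sq
  constructor
  · rintro ⟨h1, h2, h3⟩
    simp at h1 h2 h3
    constructor
    · rw [← h1]; linear_combination (S₁.1 ^ 2 + S₂.1 ^ 2 + S₃.1 ^ 2) * hr
    · rw [← h2]; linear_combination (S₁.1 * S₁.2 + S₂.1 * S₂.2 + S₃.1 * S₃.2) * hr
    · rw [← h3]; linear_combination (S₁.2 ^ 2 + S₂.2 ^ 2 + S₃.2 ^ 2) * hr
  · rintro ⟨h1, h2, h3⟩
    constructor
    · simp [h1]; linear_combination (S₁.1 ^ 2 + S₂.1 ^ 2 + S₃.1 ^ 2) * hr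
    · simp [h2]; linear_combination (S₁.1 * S₁.2 + S₂.1 * S₂.2 + S₃.1 * S₃.2) * hr
    · simp [h3]; linear_combination (S₁.2 ^ 2 + S₂.2 ^ 2 + S₃.2 ^ 2) * hr

lemma swap₁ (hp : Pairs a h b S₁ T₁ S₂ T₂ S₃ T₃) : Pairs a h b T₁ S₁ S₂ T₂ S₃ T₃ :=
  ⟨by rw [hp.fst]; ring, by rw [hp.mix]; ring, by rw [hp.snd]; ring⟩

lemma swap₂ (hp : Pairs a h b S₁ T₁ S₂ T₂ S₃ T₃) : Pairs a h b S₁ T₁ T₂ S₂ S₃ T₃ :=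
  ⟨by rw [hp.fst]; ring, by rw [hp.mix]; ring, by rw [hp.snd]; ring⟩

lemma swap₃ (hp : Pairs a h b S₁ T₁ S₂ T₂ S₃ T₃) : Pairs a h b S₁ T₁ S₂ T₂ T₃ S₃ :=
  ⟨by rw [hp.fst]; ring, by rw [hp.mix]; ring, by rw [hp.snd]; ring⟩

lemma perm₂₃ (hp : Pairs a h b S₁ T₁ S₂ T₂ S₃ T₃) : Pairs a h b S₁ T₁ S₃ T₃ S₂ T₂ :=
  ⟨by rw [hp.fst]; ring, by rw [hp.mix]; ring, by rw [hp.snd]; ring⟩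

lemma rot (hp : Pairs a h b S₁ T₁ S₂ T₂ S₃ T₃) : Pairs a h b S₂ T₂ S₃ T₃ S₁ T₁ :=
  ⟨by rw [hp.fst]; ring, by rw [hp.mix]; ring, by rw [hp.snd]; ring⟩

/-- If `T₁ ≡ T₂`, the four vectors of the first two pairs can be paired as `T₁, T₂` and
`√2 S₁ - T₁, √2 S₂ - T₂`. -/
lemma recombine₁ {X : O × O} (hp : Pairs a h b S₁ T₁ S₂ T₂ S₃ T₃) (hX : T₁ + T₂ = rt • X) :
    Pairs a h b X T₂ (S₁ + S₂ - X) (rt • S₂ - T₂) S₃ T₃ := by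
  have h1 : T₁.1 = rt * X.1 - T₂.1 := by rw [eq_sub_iff_add_eq]; simpa using congrArg Prod.fst hX
  have h2 : T₁.2 = rt * X.2 - T₂.2 := by rw [eq_sub_iff_add_eq]; simpa using congrArg Prod.snd hX
  have hr := rt_sq
  constructor
  · rw [hp.fst, h1]; simp; grind
  · rw [hp.mix, h1, h2]; simp; grind
  · rw [hp.snd, h2]; simp; grind

/-- If `T₁ ≡ T₂`, the four vectors of the first two pairs can be paired as `T₁, √2 S₂ - T₂` and
`√2 S₁ - T₁, T₂`. -/
lemma recombine₂ {X : O × O} (hp : Pairs a h b S₁ T₁ S₂ T₂ S₃ T₃) (hX : T₁ + T₂ = rt • X) :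
    Pairs a h b (S₂ + X - rt • T₂) (rt • S₂ - T₂) (S₁ - X + rt • T₂) T₂ S₃ T₃ := by
  have h1 : T₁.1 = rt * X.1 - T₂.1 := by rw [eq_sub_iff_add_eq]; simpa using congrArg Prod.fst hX
  have h2 : T₁.2 = rt * X.2 - T₂.2 := by rw [eq_sub_iff_add_eq]; simpa using congrArg Prod.snd hX
  have hr := rt_sq
  constructor
  · rw [hp.fst, h1]; simp; grind
  · rw [hp.mix, h1, h2]; simp; grind
  · rw [hp.snd, h2]; simp; grind

end Pairs

end SqrtTwo

namespace SqrtTwo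

/-! ### Parity obstructions for three pairs -/

lemma bit_mul (x y : O) : decide (par (x * y) = 1) = (decide (par x = 1) && decide (par y = 1)) := by
  rw [map_mul]; generalize par x = p; generalize par y = q; revert p q; decide

lemma wedge_cls (v w : O × O) :
    wedge (cls v) (cls w) = decide (par (v.1 * w.2 + v.2 * w.1) = 1) := by
  rw [bit_add, bit_mul, bit_mul]; rfl

lemma par_two : par (2 : O) = 0 := by rw [← rt_sq, map_mul, par_rt, zero_mul]

lemma par_sq (x : O) : par (x ^ 2) = par x := by
  rw [map_pow]; generalize par x = p; revert p; decide

/-- By the parity condition, removing `v` leaves Gram data whose determinant is twice odd, so four vectors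
suffice for the rest. -/
lemma r5_of_remove_even {l : List (O × O)} {a h b : O} (hg : Gram l (2 * a) (rt * h) (2 * b))
    {v : O × O} (hv : v ∈ l) (h0 : cls v ≠ (false, false))
    (hd : par h + par a * par v.2 + par b * par v.1 = 1) : R5 (2 * a) (rt * h) (2 * b) := by
  have hr := rt_sq
  refine hg.r5_of_remove hv ?_ (Or.inr ⟨2 * a * b - h ^ 2 - a * v.2 ^ 2 - b * v.1 ^ 2 +
    rt * h * v.1 * v.2, ?_, ?_⟩)
  · simp only [map_sub, map_mul, par_sq, par_two, zero_mul]
    revert h0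
    unfold cls
    generalize par v.1 = p
    generalize par v.2 = q
    revert p q
    decide
  · grind
  · simp only [map_add, map_sub, map_mul, par_sq, par_two, par_rt]
    rw [← hd]
    generalize par v.1 = p
    generalize par v.2 = q
    generalize par a = a
    generalize par b = b
    generalize par h = h
    revert p q a b h
    decide

namespace Pairs

variable {a h b : O} {S₁ T₁ S₂ T₂ S₃ T₃ : O × O}

lemma exists_mem (hp : Pairs a h b S₁ T₁ S₂ T₂ S₃ T₃) {v : O × O}
    (hv : v ∈ [S₁, T₁, S₂, T₂, S₃, T₃]) : ∃ l, Gram l a h b ∧ v ∈ l := by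
  simp only [List.mem_cons, List.not_mem_nil, or_false] at hv
  rcases hv with rfl | rfl | rfl | rfl | rfl | rfl
  · exact ⟨_, gram_iff.2 hp.swap₁, by simp⟩
  · exact ⟨_, gram_iff.2 hp, by simp⟩
  · exact ⟨_, gram_iff.2 hp.swap₂, by simp⟩
  · exact ⟨_, gram_iff.2 hp, by simp⟩
  · exact ⟨_, gram_iff.2 hp.swap₃, by simp⟩
  · exact ⟨_, gram_iff.2 hp, by simp⟩

/-- If five vectors do not suffice, none of the `S`, `T` can be removed as in `r5_of_remove_even`. -/
lemma wedge_eq (hp : Pairs a h b S₁ T₁ S₂ T₂ S₃ T₃) (hn : ¬ R5 a h b) {v : O × O}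
    (hv : v ∈ [S₁, T₁, S₂, T₂, S₃, T₃]) (h0 : cls v ≠ (false, false)) :
    wedge (cls v) (cadd (cls S₁) (cadd (cls T₁) (cadd (cls S₂) (cadd (cls T₂)
      (cadd (cls S₃) (cls T₃)))))) =
    xor (wedge (cls S₁) (cls T₁)) (xor (wedge (cls S₂) (cls T₂)) (wedge (cls S₃) (cls T₃))) := by
  simp only [wedge_cls, ← cls_add, ← bit_add]
  by_contra hne
  obtain ⟨l, hg, hvl⟩ := hp.exists_mem hv
  have hr := rt_sq
  obtain ⟨a', ha⟩ : ∃ a', a' = (S₁.1 ^ 2 - rt * S₁.1 * T₁.1 + T₁.1 ^ 2) +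
    (S₂.1 ^ 2 - rt * S₂.1 * T₂.1 + T₂.1 ^ 2) + (S₃.1 ^ 2 - rt * S₃.1 * T₃.1 + T₃.1 ^ 2) := ⟨_, rfl⟩
  obtain ⟨b', hb⟩ : ∃ b', b' = (S₁.2 ^ 2 - rt * S₁.2 * T₁.2 + T₁.2 ^ 2) +
    (S₂.2 ^ 2 - rt * S₂.2 * T₂.2 + T₂.2 ^ 2) + (S₃.2 ^ 2 - rt * S₃.2 * T₃.2 + T₃.2 ^ 2) := ⟨_, rfl⟩
  obtain ⟨h', hh⟩ : ∃ h', h' = rt * (S₁.1 * S₁.2 + T₁.1 * T₁.2 + S₂.1 * S₂.2 + T₂.1 * T₂.2 +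
    S₃.1 * S₃.2 + T₃.1 * T₃.2) - ((S₁.1 * T₁.2 + S₁.2 * T₁.1) + ((S₂.1 * T₂.2 + S₂.2 * T₂.1) +
      (S₃.1 * T₃.2 + S₃.2 * T₃.1))) := ⟨_, rfl⟩
  have h1 : a = 2 * a' := by rw [hp.fst, ha]; ring
  have h2 : b = 2 * b' := by rw [hp.snd, hb]; ring
  have h3 : h = rt * h' := by
    rw [hp.mix, hh]
    linear_combination -(S₁.1 * S₁.2 + T₁.1 * T₁.2 + S₂.1 * S₂.2 + T₂.1 * T₂.2 +
    S₃.1 * S₃.2 + T₃.1 * T₃.2) * hr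
  subst h1 h2 h3
  refine hn (r5_of_remove_even hg hvl h0 ?_)
  have h4 : par (S₁ + (T₁ + (S₂ + (T₂ + (S₃ + T₃))))).1 = par a' := by
    rw [ha]
    simp only [Prod.fst_add, map_add, map_sub, map_mul, par_sq, par_rt, zero_mul, sub_zero]
    ring
  have h5 : par (S₁ + (T₁ + (S₂ + (T₂ + (S₃ + T₃))))).2 = par b' := by
    rw [hb]
    simp only [Prod.snd_add, map_add, map_sub, map_mul, par_sq, par_rt, zero_mul, sub_zero]
    ring
  have h6 : par ((S₁.1 * T₁.2 + S₁.2 * T₁.1) + ((S₂.1 * T₂.2 + S₂.2 * T₂.1) +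
      (S₃.1 * T₃.2 + S₃.2 * T₃.1))) = par h' := by
    rw [hh, map_sub, map_mul, par_rt, zero_mul, zero_sub]
    exact (ZMod.neg_eq_self_mod_two _).symm
  rw [h6, map_add, map_mul, map_mul, h4, h5] at hne
  revert hne
  generalize par v.1 = p
  generalize par v.2 = q
  generalize par a' = a
  generalize par b' = b
  generalize par h' = h
  revert p q a b h
  decide

/-- By the symmetry between `S` and `T`, the class `u` may be assumed orthogonal to all `T`; then it is
orthogonal to the whole list `√2 S - T, T`. -/
lemma not_killed (hp : Pairs a h b S₁ T₁ S₂ T₂ S₃ T₃) (hn : ¬ R5 a h b)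
    (hR : ∀ l, l.length = 6 → Gram l a h b → Killed l → R5 a h b) {u : Bool × Bool}
    (hu : u ≠ (false, false)) (h1 : wedge u (cls S₁) = false ∨ wedge u (cls T₁) = false)
    (h2 : wedge u (cls S₂) = false ∨ wedge u (cls T₂) = false)
    (h3 : wedge u (cls S₃) = false ∨ wedge u (cls T₃) = false) : False := by
  have key : ∀ {S₁ T₁ S₂ T₂ S₃ T₃ : O × O}, Pairs a h b S₁ T₁ S₂ T₂ S₃ T₃ →
      wedge u (cls T₁) = false → wedge u (cls T₂) = false → wedge u (cls T₃) = false → False := by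
    intro S₁ T₁ S₂ T₂ S₃ T₃ hp h1 h2 h3
    refine hn (hR _ rfl (gram_iff.2 hp) ⟨u, hu, ?_⟩)
    simp [cls_rt_sub, h1, h2, h3]
  rcases h1 with h1 | h1 <;> rcases h2 with h2 | h2 <;> rcases h3 with h3 | h3
  · exact key hp.swap₁.swap₂.swap₃ h1 h2 h3
  · exact key hp.swap₁.swap₂ h1 h2 h3
  · exact key hp.swap₁.swap₃ h1 h2 h3
  · exact key hp.swap₁ h1 h2 h3
  · exact key hp.swap₂.swap₃ h1 h2 h3
  · exact key hp.swap₂ h1 h2 h3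
  · exact key hp.swap₃ h1 h2 h3
  · exact key hp h1 h2 h3

lemma exitFree (hp : Pairs a h b S₁ T₁ S₂ T₂ S₃ T₃) (hn : ¬ R5 a h b)
    (hR : ∀ l, l.length = 6 → Gram l a h b → Killed l → R5 a h b) :
    exitFree (cls S₁) (cls T₁) (cls S₂) (cls T₂) (cls S₃) (cls T₃) = true := by
  have h1 := fun v => hp.wedge_eq (v := v) hn
  have h2 := fun u => hp.not_killed (u := u) hn hR
  unfold SqrtTwo.exitFree
  simp only [Bool.and_eq_true, List.all_eq_true]
  constructor
  · intro c hc
    have : [cls S₁, cls T₁, cls S₂, cls T₂, cls S₃, cls T₃] =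
      [S₁, T₁, S₂, T₂, S₃, T₃].map cls := rfl
    rw [this, List.mem_map] at hc
    obtain ⟨v, hv, rfl⟩ := hc
    by_cases h0 : cls v = (false, false)
    · simp [h0]
    · simp only [h1 v hv h0, beq_self_eq_true, Bool.or_true]
  · intro u hu
    have hu0 : u ≠ (false, false) := by rintro rfl; simp at hu
    have := h2 u hu0
    rw [Bool.not_eq_true', Bool.eq_false_iff]
    intro hne
    simp only [Bool.and_eq_true, Bool.or_eq_true, Bool.not_eq_true'] at hne
    exact this hne.1.1 hne.1.2 hne.2

lemma recombine (hp : Pairs a h b S₁ T₁ S₂ T₂ S₃ T₃) (hn : ¬ R5 a h b)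
    (hR : ∀ l, l.length = 6 → Gram l a h b → Killed l → R5 a h b) :
    recombine (cls S₁) (cls T₁) (cls S₂) (cls T₂) (cls S₃) (cls T₃) = true := by
  unfold SqrtTwo.recombine
  by_cases hc : cls T₁ = cls T₂
  · obtain ⟨X, hX⟩ := exists_rt_smul hc
    have e1 := (hp.recombine₁ hX).exitFree hn hR
    have e2 := (hp.recombine₂ hX).exitFree hn hR
    have c1 : cls (S₁ + S₂ - X) = cadd (cls X) (cadd (cls S₁) (cls S₂)) := by
      rw [cls_sub, cls_add]; simp [cadd, Bool.xor_comm]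
    have c2 : cls (S₂ + X - rt • T₂) = cadd (cls S₂) (cls X) := by
      rw [cls_sub, cls_add, cls_rt]; simp [cadd]
    have c3 : cls (S₁ - X + rt • T₂) = cadd (cls S₁) (cls X) := by
      rw [cls_add, cls_sub, cls_rt]; simp [cadd]
    rw [c1, cls_rt_sub, ← hc] at e1
    rw [c2, c3, cls_rt_sub, ← hc] at e2
    rw [Bool.or_eq_true, List.any_eq_true]
    refine Or.inr ⟨cls X, ?_, ?_⟩
    · generalize cls X = x
      revert x
      decide
    · rw [e1, e2]; rfl
  · simp [hc]

lemma classes (hp : Pairs a h b S₁ T₁ S₂ T₂ S₃ T₃) (hn : ¬ R5 a h b)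
    (hR : ∀ l, l.length = 6 → Gram l a h b → Killed l → R5 a h b) :
    cls S₁ = cls T₁ ∧ cls S₂ = cls T₂ ∧ cls S₃ = cls T₃ ∧
      cls S₁ ≠ cls S₂ ∧ cls S₁ ≠ cls S₃ ∧ cls S₂ ≠ cls S₃ := by
  refine classes_of_exitFree _ _ _ _ _ _ (hp.exitFree hn hR) ?_
  have q := hp.perm₂₃
  have r := hp.rot
  rw [hp.recombine hn hR, hp.swap₁.recombine hn hR, hp.swap₂.recombine hn hR,
    hp.swap₁.swap₂.recombine hn hR,
    q.recombine hn hR, q.swap₁.recombine hn hR, q.swap₂.recombine hn hR,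
    q.swap₁.swap₂.recombine hn hR,
    r.recombine hn hR, r.swap₁.recombine hn hR, r.swap₂.recombine hn hR,
    r.swap₁.swap₂.recombine hn hR]
  rfl

end Pairs

end SqrtTwo

namespace SqrtTwo

/-! ### Twisted pairs -/

lemma cls_eps (v : O × O) : cls ((1 + rt) • v) = cls v := by
  rw [add_smul, one_smul, cls_add, cls_rt]; simp [cadd]

/-- The six vectors `ε P + R, P + ε R` with `ε = 1 + √2`, for three pairs `(P, R)`, have Gram data
`(a, h, b)`. The sums are expanded, and `1 + ε² = 4 + 2√2` is used. -/
structure Twists (a h b : O) (P₁ R₁ P₂ R₂ P₃ R₃ : O × O) : Prop where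
  fst : a = (4 + 2 * rt) * ((P₁.1 ^ 2 + rt * P₁.1 * R₁.1 + R₁.1 ^ 2) +
    (P₂.1 ^ 2 + rt * P₂.1 * R₂.1 + R₂.1 ^ 2) + (P₃.1 ^ 2 + rt * P₃.1 * R₃.1 + R₃.1 ^ 2))
  mix : h = (4 + 2 * rt) * (P₁.1 * P₁.2 + R₁.1 * R₁.2 + P₂.1 * P₂.2 + R₂.1 * R₂.2 +
    P₃.1 * P₃.2 + R₃.1 * R₃.2) + (2 + 2 * rt) * ((P₁.1 * R₁.2 + P₁.2 * R₁.1) +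
      ((P₂.1 * R₂.2 + P₂.2 * R₂.1) + (P₃.1 * R₃.2 + P₃.2 * R₃.1)))
  snd : b = (4 + 2 * rt) * ((P₁.2 ^ 2 + rt * P₁.2 * R₁.2 + R₁.2 ^ 2) +
    (P₂.2 ^ 2 + rt * P₂.2 * R₂.2 + R₂.2 ^ 2) + (P₃.2 ^ 2 + rt * P₃.2 * R₃.2 + R₃.2 ^ 2))

/-- Pairs with `S ≡ T` are twisted pairs. -/
lemma Pairs.twists {a h b : O} {S₁ T₁ S₂ T₂ S₃ T₃ U₁ U₂ U₃ : O × O}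
    (hp : Pairs a h b S₁ T₁ S₂ T₂ S₃ T₃) (h₁ : S₁ = T₁ + rt • U₁) (h₂ : S₂ = T₂ + rt • U₂)
    (h₃ : S₃ = T₃ + rt • U₃) :
    Twists a h b U₁ ((rt - 1) • (T₁ - U₁)) U₂ ((rt - 1) • (T₂ - U₂)) U₃
      ((rt - 1) • (T₃ - U₃)) := by
  have hr := rt_sq
  subst h₁ h₂ h₃
  constructor
  · rw [hp.fst]; simp; grind
  · rw [hp.mix]; simp; grind
  · rw [hp.snd]; simp; grind

/-- A condition on classes under which the list in `Twists.gram` is killed by `ν = p₁ + p₂`, possibly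
after the first pair is turned twice; see `Twists.not_separable`. -/
def separable (p₁ r₁ p₂ r₂ p₃ r₃ : Bool × Bool) : Bool :=
  let ν := cadd p₁ p₂
  r₁ == r₂ && !(ν == (false, false)) && !wedge ν r₁ && wedge ν p₁ && !wedge ν (cadd p₃ r₃)

set_option synthInstance.maxSize 2000 in
set_option synthInstance.maxHeartbeats 400000 in
set_option maxRecDepth 10000 in
/-- In the case not covered by `rep_four_of_kappa`, some arrangement of the three pairs is separable. -/
lemma exists_separable : ∀ p₁ r₁ p₂ r₂ p₃ r₃ : Bool × Bool,
    xor (wedge p₁ r₁) (xor (wedge p₂ r₂) (wedge p₃ r₃)) = false →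
    cadd p₁ r₁ ≠ cadd p₂ r₂ → cadd p₁ r₁ ≠ cadd p₃ r₃ → cadd p₂ r₂ ≠ cadd p₃ r₃ →
    (separable p₁ r₁ p₂ r₂ p₃ r₃ || separable r₁ p₁ p₂ r₂ p₃ r₃ || separable p₁ r₁ r₂ p₂ p₃ r₃ ||
      separable r₁ p₁ r₂ p₂ p₃ r₃ ||
     separable p₂ r₂ p₃ r₃ p₁ r₁ || separable r₂ p₂ p₃ r₃ p₁ r₁ || separable p₂ r₂ r₃ p₃ p₁ r₁ ||
      separable r₂ p₂ r₃ p₃ p₁ r₁ ||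
     separable p₃ r₃ p₁ r₁ p₂ r₂ || separable r₃ p₃ p₁ r₁ p₂ r₂ || separable p₃ r₃ r₁ p₁ p₂ r₂ ||
      separable r₃ p₃ r₁ p₁ p₂ r₂) = true := by
  decide +kernel

namespace Twists

variable {a h b : O} {P₁ R₁ P₂ R₂ P₃ R₃ : O × O}

lemma rot (ht : Twists a h b P₁ R₁ P₂ R₂ P₃ R₃) : Twists a h b P₂ R₂ P₃ R₃ P₁ R₁ :=
  ⟨by rw [ht.fst]; ring, by rw [ht.mix]; ring, by rw [ht.snd]; ring⟩

/-- The form `P² + √2 P R + R²` is invariant under `(P, R) ↦ (-R, P + √2 R)`. -/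
lemma turn (ht : Twists a h b P₁ R₁ P₂ R₂ P₃ R₃) :
    Twists a h b (-R₁) (P₁ + rt • R₁) P₂ R₂ P₃ R₃ := by
  have hr := rt_sq
  constructor
  · rw [ht.fst]; simp; grind
  · rw [ht.mix]; simp; grind
  · rw [ht.snd]; simp; grind

lemma turn₂ (ht : Twists a h b P₁ R₁ P₂ R₂ P₃ R₃) :
    Twists a h b P₁ R₁ (-R₂) (P₂ + rt • R₂) P₃ R₃ := ht.rot.turn.rot.rot

/-- If the sum of `P ∧ R` over the three pairs is odd, `rep_four_of_kappa` applies. -/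
lemma rep_four_of_odd (ht : Twists a h b P₁ R₁ P₂ R₂ P₃ R₃) {l : List (O × O)}
    (hg : Gram l a h b) (hd : a * b - h ^ 2 ≠ 0)
    (ho : xor (wedge (cls P₁) (cls R₁)) (xor (wedge (cls P₂) (cls R₂))
      (wedge (cls P₃) (cls R₃))) = true) : Rep 4 a h b := by
  have hr := rt_sq
  simp only [wedge_cls, ← bit_add, decide_eq_true_eq] at ho
  refine rep_four_of_kappa (o := rt * (P₁.1 * P₁.2 + R₁.1 * R₁.2 + P₂.1 * P₂.2 + R₂.1 * R₂.2 +
    P₃.1 * P₃.2 + R₃.1 * R₃.2) + ((P₁.1 * R₁.2 + P₁.2 * R₁.1) +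
      ((P₂.1 * R₂.2 + P₂.2 * R₂.1) + (P₃.1 * R₃.2 + P₃.2 * R₃.1)))) ht.fst ?_ ht.snd ?_ ?_
      (hg.tp_det hd)
  · rw [ht.mix]; grind
  · rw [map_add, map_mul, par_rt, zero_mul, zero_add, ho]
  · have hκ : TP (4 + 2 * rt) := by constructor <;> decide
    exact TP.of_mul hκ (ht.fst ▸ hg.tp_fst (hg.fst_ne_zero hd))

/-- Another list with the same Gram data, available if `R₁ ≡ R₂`. -/
lemma gram {t : O × O} (ht : Twists a h b P₁ R₁ P₂ R₂ P₃ R₃) (hR : R₁ - R₂ = rt • t) :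
    Gram [(1 + rt) • R₂ + t, ((1 + rt) • R₂ + t) + (P₁ + (1 + rt) • P₂),
      R₂ + (1 + rt) • t, (R₂ + (1 + rt) • t) + ((1 + rt) • P₁ - P₂),
      (1 + rt) • P₃ + R₃, P₃ + (1 + rt) • R₃] a h b := by
  have h1 : R₁.1 = R₂.1 + rt * t.1 := by
    rw [← sub_eq_iff_eq_add']; simpa using congrArg Prod.fst hR
  have h2 : R₁.2 = R₂.2 + rt * t.2 := by
    rw [← sub_eq_iff_eq_add']; simpa using congrArg Prod.snd hR
  have hr := rt_sq
  constructor
  · rw [ht.fst, h1]; simp; grind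
  · rw [ht.mix, h1, h2]; simp; grind
  · rw [ht.snd, h2]; simp; grind

/-- For `R₁ - R₂ = √2 t`, the list in `Twists.gram` is killed by `ν` if `ν ∧ t = 0`. Turning the first pair
twice replaces `t` by `t + P₁`, which changes `ν ∧ t` since `ν ∧ P₁ ≠ 0`. -/
lemma not_separable (ht : Twists a h b P₁ R₁ P₂ R₂ P₃ R₃) (hn : ¬ R5 a h b)
    (hR : ∀ l, l.length = 6 → Gram l a h b → Killed l → R5 a h b) :
    separable (cls P₁) (cls R₁) (cls P₂) (cls R₂) (cls P₃) (cls R₃) = false := by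
  rw [Bool.eq_false_iff]
  intro hs
  simp only [separable, Bool.and_eq_true, beq_iff_eq, Bool.not_eq_true', beq_eq_false_iff_ne] at hs
  obtain ⟨⟨⟨⟨hc, hν⟩, hνr⟩, hνp⟩, hνn⟩ := hs
  have wadd : ∀ u v w, wedge u (cadd v w) = xor (wedge u v) (wedge u w) := by decide
  -- the list in `Twists.gram` is killed as soon as `ν ∧ t = 0`
  have key : ∀ {P₁ R₁ t : O × O}, Twists a h b P₁ R₁ P₂ R₂ P₃ R₃ → cls R₁ = cls R₂ →
      cadd (cls P₁) (cls P₂) ≠ (false, false) →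
      wedge (cadd (cls P₁) (cls P₂)) (cls R₁) = false →
      wedge (cadd (cls P₁) (cls P₂)) (cadd (cls P₃) (cls R₃)) = false → R₁ - R₂ = rt • t →
      wedge (cadd (cls P₁) (cls P₂)) (cls t) = false → False := by
    intro P₁ R₁ t ht hc hν hνr hνn hRt htν
    refine hn (hR _ rfl (ht.gram hRt) ⟨cadd (cls P₁) (cls P₂), hν, ?_⟩)
    have wself : ∀ u, wedge u u = false := by decide
    rw [hc] at hνr
    have h1 : wedge (cadd (cls P₁) (cls P₂)) (cadd (cls P₁) (cls P₂)) = false := wself _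
    simp only [wadd] at h1 hνn
    simp [cls_add, cls_sub, cls_eps, wadd, hνr, htν, h1, hνn]
  obtain ⟨t, ht'⟩ := exists_rt_smul (v := R₁) (w := -R₂) (by rw [cls_neg, hc])
  rw [← sub_eq_add_neg] at ht'
  rcases htν : wedge (cadd (cls P₁) (cls P₂)) (cls t) with _ | _
  · exact key ht hc hν hνr hνn ht' htν
  · have e1 : cls (-(P₁ + rt • R₁)) = cls P₁ := by rw [cls_neg, add_comm, cls_rt_add]
    have e2 : cls (-R₁ + rt • (P₁ + rt • R₁)) = cls R₁ := by
      rw [add_comm, cls_rt_add, cls_neg]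
    have hrr : R₁ + rt • (P₁ + rt • R₁) - rt • (rt • R₁) - R₂ = rt • (t + P₁) := by
      rw [smul_add rt t, ← ht', smul_add]; abel
    have h2 : -R₁ + rt • (P₁ + rt • R₁) - R₂ = rt • (t + P₁) := by
      rw [← hrr, smul_smul, rt_sq, two_smul]; abel
    refine key ht.turn.turn (t := t + P₁) ?_ ?_ ?_ ?_ h2 ?_ <;> simp only [e1, e2]
    · exact hc
    · exact hν
    · exact hνr
    · exact hνn
    · rw [cls_add, wadd, htν, hνp]; rfl

lemma r5 (ht : Twists a h b P₁ R₁ P₂ R₂ P₃ R₃) {l : List (O × O)}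
    (hg : Gram l a h b) (hd : a * b - h ^ 2 ≠ 0)
    (hR : ∀ l, l.length = 6 → Gram l a h b → Killed l → R5 a h b)
    (h12 : cadd (cls P₁) (cls R₁) ≠ cadd (cls P₂) (cls R₂))
    (h13 : cadd (cls P₁) (cls R₁) ≠ cadd (cls P₃) (cls R₃))
    (h23 : cadd (cls P₂) (cls R₂) ≠ cadd (cls P₃) (cls R₃)) : R5 a h b := by
  rcases ho : xor (wedge (cls P₁) (cls R₁)) (xor (wedge (cls P₂) (cls R₂))
      (wedge (cls P₃) (cls R₃))) with _ | _
  · by_contra hn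
    have key := exists_separable _ _ _ _ _ _ ho h12 h13 h23
    have hz : ∀ {P₁ R₁ P₂ R₂ P₃ R₃ : O × O}, Twists a h b P₁ R₁ P₂ R₂ P₃ R₃ →
        separable (cls P₁) (cls R₁) (cls P₂) (cls R₂) (cls P₃) (cls R₃) = false ∧
        separable (cls R₁) (cls P₁) (cls P₂) (cls R₂) (cls P₃) (cls R₃) = false ∧
        separable (cls P₁) (cls R₁) (cls R₂) (cls P₂) (cls P₃) (cls R₃) = false ∧
        separable (cls R₁) (cls P₁) (cls R₂) (cls P₂) (cls P₃) (cls R₃) = false := by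
      intro P₁ R₁ P₂ R₂ P₃ R₃ ht
      have c1 : ∀ P R : O × O, cls (P + rt • R) = cls P := fun P R => by rw [add_comm, cls_rt_add]
      have h1 := ht.not_separable hn hR
      have h2 := ht.turn.not_separable hn hR
      have h3 := ht.turn₂.not_separable hn hR
      have h4 := ht.turn.turn₂.not_separable hn hR
      simp only [cls_neg, c1] at h2 h3 h4
      exact ⟨h1, h2, h3, h4⟩
    obtain ⟨a1, a2, a3, a4⟩ := hz ht
    obtain ⟨b1, b2, b3, b4⟩ := hz ht.rot
    obtain ⟨c1, c2, c3, c4⟩ := hz ht.rot.rot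
    rw [a1, a2, a3, a4, b1, b2, b3, b4, c1, c2, c3, c4] at key
    exact absurd key (by decide)
  · obtain ⟨l', hl', hg'⟩ := Gram.of_rep (ht.rep_four_of_odd hg hd ho)
    exact ⟨l', by omega, hg'⟩

end Twists

/-- For nonzero determinant it suffices to treat killed lists. -/
lemma r5_of_killed {l : List (O × O)} {a h b : O} (hg : Gram l a h b) (hl : l.length = 6)
    (hd : a * b - h ^ 2 ≠ 0)
    (hR : ∀ l, l.length = 6 → Gram l a h b → Killed l → R5 a h b) : R5 a h b := by
  by_cases h0 : par a = 0 ∧ par h = 0 ∧ par b = 0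
  swap
  · exact r5_of_odd hg h0 hl (hR l hl hg)
  by_contra hn
  obtain ⟨q, hq, hlq⟩ := exists_pairs 3 hg h0 hl
  match q, hq with
  | [(S₁, T₁), (S₂, T₂), (S₃, T₃)], _ =>
    have hp : Pairs a h b S₁ T₁ S₂ T₂ S₃ T₃ := Pairs.gram_iff.1 (hg.perm hlq)
    obtain ⟨h1, h2, h3, h12, h13, h23⟩ := hp.classes hn hR
    have hU : ∀ {S T : O × O}, cls S = cls T → ∃ U, S = T + rt • U := by
      intro S T hc
      obtain ⟨U, hU⟩ := exists_rt_smul (v := S) (w := -T) (by rw [cls_neg, hc])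
      exact ⟨U, by rw [← hU]; abel⟩
    have hcl : ∀ T U : O × O, cadd (cls U) (cls ((rt - 1) • (T - U))) = cls T := by
      intro T U
      rw [← cls_add, show U + (rt - 1) • (T - U) = rt • (T - U) - (T - (2 : O) • U) by module,
        cls_rt_sub, ← rt_sq, ← smul_smul, cls_sub, cls_rt]
      simp [cadd]
    obtain ⟨U₁, hU₁⟩ := hU h1
    obtain ⟨U₂, hU₂⟩ := hU h2
    obtain ⟨U₃, hU₃⟩ := hU h3
    refine hn ((hp.twists hU₁ hU₂ hU₃).r5 hg hd hR ?_ ?_ ?_) <;> rw [hcl, hcl]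
    · rwa [← h1, ← h2]
    · rwa [← h1, ← h3]
    · rwa [← h2, ← h3]

end SqrtTwo

namespace SqrtTwo

/-! ### Descent on the determinant -/

lemma Gram.lin {l : List (O × O)} {a h b : O} (hg : Gram l a h b) (x y z w : O) :
    Gram (l.map fun v => (x * v.1 + y * v.2, z * v.1 + w * v.2))
      (x ^ 2 * a + 2 * x * y * h + y ^ 2 * b) (x * z * a + (x * w + y * z) * h + y * w * b)
      (z ^ 2 * a + 2 * z * w * h + w ^ 2 * b) := by
  induction l generalizing a h b with
  | nil => obtain ⟨rfl, rfl, rfl⟩ := hg; simpa using gram_nil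
  | cons v l ih =>
    rw [List.map_cons, gram_cons_iff]
    convert ih (gram_cons_iff.1 hg) using 1 <;> ring

lemma R5.lin {a h b a' h' b' : O} (hr : R5 a h b) (x y z w : O)
    (ha : a' = x ^ 2 * a + 2 * x * y * h + y ^ 2 * b)
    (hh : h' = x * z * a + (x * w + y * z) * h + y * w * b)
    (hb : b' = z ^ 2 * a + 2 * z * w * h + w ^ 2 * b) : R5 a' h' b' := by
  obtain ⟨l, hl, hg⟩ := hr
  subst ha hh hb
  exact ⟨_, by simpa using hl, hg.lin x y z w⟩

lemma Gram.halve {l : List (O × O)} {a h b : O} (hg : Gram l a h b)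
    (hl : ∀ v ∈ l, par v.1 = 0) :
    ∃ m a' h', m.length = l.length ∧ Gram m a' h' b ∧ a = 2 * a' ∧ h = rt * h' := by
  have hr := rt_sq
  have key : ∀ v : O × O, ∃ x, par v.1 = 0 → v.1 = rt * x := by
    intro v
    by_cases hv : par v.1 = 0
    · obtain ⟨x, hx⟩ := exists_rt_mul hv
      exact ⟨x, fun _ => hx⟩
    · exact ⟨0, fun h => absurd h hv⟩
  choose f hf using key
  obtain ⟨m, hm⟩ : ∃ m, m = l.map fun v => (f v, v.2) := ⟨_, rfl⟩
  have hlm : l = m.map fun v => (rt * v.1 + 0 * v.2, 0 * v.1 + 1 * v.2) := by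
    rw [hm, List.map_map]
    conv_lhs => rw [← List.map_id l]
    apply List.map_congr_left
    intro v hv
    ext1 <;> simp [← hf v (hl v hv)]
  have hgm := (gram_self m).lin rt 0 0 1
  rw [← hlm] at hgm
  refine ⟨m, (m.map fun v => v.1 ^ 2).sum, (m.map fun v => v.1 * v.2).sum, by simp [hm], ?_, ?_, ?_⟩
  · have := gram_self m
    rwa [← hg.snd.symm.trans hgm.snd |>.trans (by ring : _ = (m.map fun v => v.2 ^ 2).sum)] at this
  · rw [← hg.fst, hgm.fst]; grind
  · rw [← hg.mix, hgm.mix]; ring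

/-- Induction on the norm of the determinant. After a change of basis, a killed list has even first
coordinates, and dividing them by `√2` divides the determinant by `2`. -/
theorem r5_of_det_ne_zero : ∀ (n : ℕ) {l : List (O × O)} {a h b : O}, Gram l a h b →
    l.length = 6 → a * b - h ^ 2 ≠ 0 → (a * b - h ^ 2).norm.natAbs ≤ n → R5 a h b := by
  have hr := rt_sq
  intro n
  induction n with
  | zero =>
    intro l a h b _ _ hd hn
    exact absurd (Int.natAbs_eq_zero.1 (Nat.le_zero.1 hn)) (norm_ne_zero hd)
  | succ n ih =>
    have step : ∀ {l : List (O × O)} {a h b : O}, Gram l a h b →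
        l.length = 6 → a * b - h ^ 2 ≠ 0 → (a * b - h ^ 2).norm.natAbs ≤ n + 1 →
        (∀ v ∈ l, par v.1 = 0) → R5 a h b := by
      intro l a h b hg hl hd hn hp
      obtain ⟨m, a', h', hm, hgm, rfl, rfl⟩ := hg.halve hp
      have e : 2 * a' * b - (rt * h') ^ 2 = 2 * (a' * b - h' ^ 2) := by
        linear_combination -h' ^ 2 * hr
      rw [e] at hd hn
      have hd' : a' * b - h' ^ 2 ≠ 0 := right_ne_zero_of_mul hd
      have h0 := norm_ne_zero hd'
      have h2 : (2 : O).norm = 4 := by decide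
      rw [Zsqrtd.norm_mul, h2, Int.natAbs_mul, show Int.natAbs 4 = 4 from rfl] at hn
      refine (ih hgm (hm.trans hl) hd' ?_).lin rt 0 0 1 ?_ ?_ ?_
      · omega
      · grind
      · ring
      · ring
    intro l a h b hg hl hd hn
    refine r5_of_killed hg hl hd ?_
    rintro l hl hg ⟨⟨u₁, u₂⟩, hu, hk⟩
    have bit : ∀ p q : ZMod 2, (wedge (false, true) (decide (p = 1), decide (q = 1)) = false →
      p = 0) ∧ (wedge (true, false) (decide (p = 1), decide (q = 1)) = false → q = 0) ∧
      (wedge (true, true) (decide (p = 1), decide (q = 1)) = false → p + q = 0) := by decide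
    rcases u₁ with _ | _ <;> rcases u₂ with _ | _
    · exact absurd rfl hu
    · exact step hg hl hd hn fun v hv => (bit _ _).1 (hk v hv)
    · rw [mul_comm] at hd hn
      refine (step hg.swap (by simpa using hl) hd hn fun v hv => ?_).swap
      obtain ⟨w, hw, rfl⟩ := List.mem_map.1 hv
      exact (bit _ _).2.1 (hk w hw)
    · have e : (1 ^ 2 * a + 2 * 1 * 1 * h + 1 ^ 2 * b) * (0 ^ 2 * a + 2 * 0 * 1 * h + 1 ^ 2 * b) -
        (1 * 0 * a + (1 * 1 + 1 * 0) * h + 1 * 1 * b) ^ 2 = a * b - h ^ 2 := by ring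
      refine (step (hg.lin 1 1 0 1) (by simpa using hl) (by rwa [e]) (by rwa [e])
        fun v hv => ?_).lin 1 (-1) 0 1 (by ring) (by ring) (by ring)
      obtain ⟨w, hw, rfl⟩ := List.mem_map.1 hv
      have := (bit _ _).2.2 (hk w hw)
      simpa using this

/-- Six squares in `O`: attaching the second coordinates `1, 0, 0, 0, 0, 0` gives determinant
`∑ x²` over the last five, so `r5_of_det_ne_zero` applies unless these five vanish. -/
lemma exists_five_squares (w : O) (l : List O) (hl : l.length = 5) :
    ∃ m : List O, m.length ≤ 5 ∧ (m.map (· ^ 2)).sum = w ^ 2 + (l.map (· ^ 2)).sum := by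
  have hg : Gram ((w, 1) :: l.map fun x => (x, 0)) (w ^ 2 + (l.map (· ^ 2)).sum) w 1 := by
    constructor <;> simp [Function.comp_def]
  by_cases h0 : (l.map (· ^ 2)).sum = 0
  · exact ⟨[w], by simp, by simp [h0]⟩
  · obtain ⟨m, hm, hgm⟩ := r5_of_det_ne_zero _ hg (by simp [hl]) (by simpa using h0) le_rfl
    refine ⟨m.map Prod.fst, by simpa using hm, ?_⟩
    rw [List.map_map, ← hgm.fst]; rfl

lemma Gram.r5_of_smul {W : List O} {p q a h b : O} (hW : W.length = 6)
    (hg : Gram (W.map fun w => (p * w, q * w)) a h b) : R5 a h b := by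
  match W, hW with
  | w :: l, hW =>
    obtain ⟨m, hm, hs⟩ := exists_five_squares w l (by simpa using hW)
    have key : ∀ m : List O, Gram (m.map fun w => (p * w, q * w)) (p ^ 2 * (m.map (· ^ 2)).sum)
        (p * q * (m.map (· ^ 2)).sum) (q ^ 2 * (m.map (· ^ 2)).sum) := by
      intro m
      induction m with
      | nil => simpa using gram_nil
      | cons x m ih =>
        rw [List.map_cons, gram_cons_iff]
        convert ih using 1 <;> simp <;> ring
    have h1 := key m
    have h2 := key (w :: l)
    rw [hs] at h1
    rw [List.map_cons (f := (· ^ 2)), List.sum_cons] at h2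
    refine ⟨m.map fun w => (p * w, q * w), by simpa using hm, ?_⟩
    rwa [← hg.fst, ← hg.mix, ← hg.snd, h2.fst, h2.mix, h2.snd]

/-- If the determinant vanishes, all vectors are multiples of one vector `(p, q)`, because `O` is
a principal ideal domain; this is the situation of `Gram.r5_of_smul`. -/
theorem Gram.r5 {l : List (O × O)} {a h b : O} (hg : Gram l a h b) (hl : l.length = 6) :
    R5 a h b := by
  by_cases hd : a * b - h ^ 2 = 0
  swap
  · exact r5_of_det_ne_zero _ hg hl hd le_rfl
  obtain ⟨p, q, u, v, hpq⟩ : ∃ p q u v : O, ∀ x ∈ l,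
      p * (u * x.1 + v * x.2) = x.1 ∧ q * (u * x.1 + v * x.2) = x.2 := by
    by_cases ha : a = 0
    · subst ha
      exact ⟨0, 1, 0, 1, fun x hx => by simp [hg.eq_zero x hx]⟩
    · obtain ⟨g, hgen⟩ := (IsPrincipalIdealRing.principal (Ideal.span {a, h})).principal
      have hgen' : Ideal.span {a, h} = Ideal.span {g} := hgen
      obtain ⟨p, hp⟩ := Ideal.mem_span_singleton'.1
        (hgen' ▸ Ideal.subset_span (by simp) : a ∈ Ideal.span {g})
      obtain ⟨q, hq⟩ := Ideal.mem_span_singleton'.1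
        (hgen' ▸ Ideal.subset_span (by simp) : h ∈ Ideal.span {g})
      obtain ⟨u, v, huv⟩ := Ideal.mem_span_pair.1
        (hgen' ▸ Ideal.mem_span_singleton_self g : g ∈ Ideal.span {a, h})
      have hg0 : g ≠ 0 := by rintro rfl; simp at hp; exact ha hp.symm
      have h1 : u * p + v * q = 1 := mul_right_cancel₀ hg0 (by
        rw [one_mul]; linear_combination huv + u * hp + v * hq)
      have hz := hg.lin (-h) a 0 0
      have e : (-h) ^ 2 * a + 2 * -h * a * h + a ^ 2 * b = 0 := by linear_combination a * hd
      rw [e] at hz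
      refine ⟨p, q, u, v, fun x hx => ?_⟩
      have h2 := hz.eq_zero _ (List.mem_map_of_mem hx)
      have h3 : p * x.2 = q * x.1 := mul_right_cancel₀ hg0 (by
        simp only at h2
        linear_combination h2 + x.2 * hp - x.1 * hq)
      constructor
      · linear_combination v * h3 + x.1 * h1
      · linear_combination -u * h3 + x.2 * h1
  refine Gram.r5_of_smul (W := l.map fun x => u * x.1 + v * x.2) (p := p) (q := q)
    (by simpa using hl) ?_
  rw [List.map_map]
  convert hg
  conv_rhs => rw [← List.map_id l]
  apply List.map_congr_left
  intro x hx
  exact Prod.ext (hpq x hx).1 (hpq x hx).2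

end SqrtTwo

namespace SqrtTwo

/-! ### The ring of integers -/

/-- The standard basis identification of `ℤ[√2]` with `ℤ × ℤ`. -/
def prodEquiv : O ≃ₗ[ℤ] ℤ × ℤ where
  toFun x := (x.re, x.im)
  invFun v := ⟨v.1, v.2⟩
  map_add' _ _ := rfl
  map_smul' n x := by simp
  left_inv _ := rfl
  right_inv _ := rfl

lemma Gram.sum_sq {R : Type*} [CommRing R] (φ : O →+* R) (e₁ e₂ : R) {l : List (O × O)} {a h b : O}
    (hg : Gram l a h b) : (l.map fun v => (φ v.1 * e₁ + φ v.2 * e₂) ^ 2).sum =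
      φ a * e₁ ^ 2 + 2 * φ h * (e₁ * e₂) + φ b * e₂ ^ 2 := by
  induction l generalizing a h b with
  | nil => obtain ⟨rfl, rfl, rfl⟩ := hg; simp
  | cons v l ih =>
    rw [List.map_cons, List.sum_cons, ih (gram_cons_iff.1 hg)]
    simp only [map_sub, map_mul, map_pow]
    ring

/-- In a ring generated by two elements as an `O`-module, six squares can be replaced by five. -/
lemma exists_five {R : Type*} [CommRing R] (φ : O →+* R) (e₁ e₂ : R)
    (he : ∀ x : R, ∃ v : O × O, x = φ v.1 * e₁ + φ v.2 * e₂) (l : List R) :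
    ∃ m : List R, m.length ≤ 5 ∧ (m.map (· ^ 2)).sum = (l.map (· ^ 2)).sum := by
  choose f hf using he
  induction hn : l.length using Nat.strong_induction_on generalizing l with
  | _ n ih =>
    by_cases h5 : l.length ≤ 5
    · exact ⟨l, h5, rfl⟩
    · have hg := gram_self ((l.take 6).map f)
      have hs := hg.sum_sq φ e₁ e₂
      obtain ⟨m, hm, hgm⟩ := hg.r5 (by rw [List.length_map, List.length_take]; omega)
      have hs' := hgm.sum_sq φ e₁ e₂
      obtain ⟨m', hm', hsm'⟩ := ih (m.length + (l.drop 6).length)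
        (by rw [List.length_drop]; omega)
        (m.map (fun v => φ v.1 * e₁ + φ v.2 * e₂) ++ l.drop 6) (by simp)
      refine ⟨m', hm', ?_⟩
      have h1 : (l.map (· ^ 2)).sum =
          ((l.take 6).map (· ^ 2)).sum + ((l.drop 6).map (· ^ 2)).sum := by
        rw [← List.sum_append, ← List.map_append, List.take_append_drop]
      rw [hsm', List.map_append, List.sum_append, h1, List.map_map]
      congr 1
      rw [← hs, List.map_map] at hs'
      simp only [Function.comp_def, ← hf] at hs' ⊢
      exact hs'

/-- The ring of integers is a free `O`-module of rank `2`; only generation is needed. -/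
lemma exists_basis (K : Type*) [Field K] [NumberField K] (hdeg : Module.finrank ℚ K = 4)
    (s : K) (hs : s ^ 2 = 2) : ∃ (φ : O →+* 𝓞 K) (e₁ e₂ : 𝓞 K),
      ∀ x : 𝓞 K, ∃ v : O × O, x = φ v.1 * e₁ + φ v.2 * e₂ := by
  have hsi : IsIntegral ℤ s := by
    refine ⟨Polynomial.X ^ 2 - Polynomial.C 2, Polynomial.monic_X_pow_sub_C _ two_ne_zero, ?_⟩
    simp [hs]
  let σ : 𝓞 K := ⟨s, hsi⟩
  have hσ : σ * σ = ((2 : ℤ) : 𝓞 K) := by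
    apply RingOfIntegers.ext
    change s * s = algebraMap (𝓞 K) K ((2 : ℤ) : 𝓞 K)
    rw [map_intCast, Int.cast_ofNat, ← hs, sq]
  let φ : O →+* 𝓞 K := Zsqrtd.lift ⟨σ, hσ⟩
  have hφ : Function.Injective φ := Zsqrtd.lift_injective _ (by
    intro n hn
    have h1 : n.natAbs * n.natAbs = 2 := by rw [← Int.natAbs_mul, ← hn]; rfl
    have h2 : n.natAbs < 2 := by nlinarith
    interval_cases n.natAbs <;> omega)
  letI : Algebra O (𝓞 K) := φ.toAlgebra
  haveI : FaithfulSMul O (𝓞 K) := (faithfulSMul_iff_algebraMap_injective _ _).2 hφ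
  haveI : Module.Finite O (𝓞 K) := Module.Finite.of_restrictScalars_finite ℤ O (𝓞 K)
  haveI : Module.Free O (𝓞 K) := Module.free_of_finite_type_torsion_free'
  haveI : Module.Free ℤ O := Module.Free.of_equiv prodEquiv.symm
  have h2 : Module.finrank ℤ O = 2 := by rw [prodEquiv.finrank_eq]; simp
  have h4 := Module.finrank_mul_finrank ℤ O (𝓞 K)
  rw [h2, RingOfIntegers.rank, hdeg] at h4
  let B := Module.finBasisOfFinrankEq O (𝓞 K) (show Module.finrank O (𝓞 K) = 2 by omega)
  refine ⟨φ, B 0, B 1, fun x => ⟨(B.repr x 0, B.repr x 1), ?_⟩⟩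
  have := B.sum_repr x
  rw [Fin.sum_univ_two, Algebra.smul_def, Algebra.smul_def] at this
  exact this.symm

end SqrtTwo

/-- Let `K` be a totally real number field with `[K : ℚ] = 4` containing an
element `s` with `s² = 2`, and let `𝓞 K` be its ring of integers.  Then the Pythagoras number
of `𝓞 K` is at most `5`: every element of `𝓞 K` that is a sum of finitely many squares in
`𝓞 K` is a sum of at most `5` squares in `𝓞 K`. -/
theorem pythagoras_number_of_quartic_ring_of_integers_le_five
    (K : Type*) [Field K] [NumberField K]
    (hdeg : Module.finrank ℚ K = 4)
    (htotallyReal : ∀ (φ : K →+* ℂ) (x : K), (φ x).im = 0)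
    (s : K) (hs : s ^ 2 = 2)
    (t : 𝓞 K) (ht : ∃ (n : ℕ) (f : Fin n → 𝓞 K), t = ∑ i, f i ^ 2) :
    ∃ f : Fin 5 → 𝓞 K, t = ∑ i, f i ^ 2 := by
  obtain ⟨n, f, rfl⟩ := ht
  obtain ⟨φ, e₁, e₂, he⟩ := SqrtTwo.exists_basis K hdeg s hs
  obtain ⟨m, hm, hs⟩ := SqrtTwo.exists_five φ e₁ e₂ he (List.ofFn f)
  rw [List.map_ofFn, List.sum_ofFn] at hs
  simp only [Function.comp_def] at hs
  rw [← hs]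
  match m, hm with
  | [], _ => exact ⟨0, by simp⟩
  | [a], _ => exact ⟨![a, 0, 0, 0, 0], by simp [Fin.sum_univ_five]⟩
  | [a, b], _ => exact ⟨![a, b, 0, 0, 0], by simp [Fin.sum_univ_five]⟩
  | [a, b, c], _ => exact ⟨![a, b, c, 0, 0], by simp [Fin.sum_univ_five, add_assoc]⟩
  | [a, b, c, d], _ => exact ⟨![a, b, c, d, 0], by simp [Fin.sum_univ_five, add_assoc]⟩
  | [a, b, c, d, e], _ => exact ⟨![a, b, c, d, e], by simp [Fin.sum_univ_five, add_assoc]⟩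
end

section
/- Let F be a dyadic local field, i.e., a finite field extension of ℚ₂, with valuation ring O_F. Then ⋂_{x ∈ F} (−1 − x²)O_F ⊆ 2O_F; equivalently, d(−1) ≥ e, where e = ord(2). -/
/-!
The member of the intersection indexed by `x = 1` is `(-1 - 1²)·O_F = -2·O_F = 2·O_F`, so the
whole intersection lies in `2·O_F`. Every `z` in it is thus `2 * t` with `t` integral, so
`ord ((-1)⁻¹ * z) = ord 2 + ord (-t) ≥ ord 2`, and `ord 2` bounds the infimum `d(-1)` from below.
-/

/-- The order of relative quadratic defect of `c`, with respect to a normalized valuation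
`ord` on a field `F` (the valuation ring being `{x | 0 ≤ ord x}`):
`d(c) = min { ord (c⁻¹ * z) | z ∈ ⋂_{x ∈ F} (c - x²)·O_F }`, which equals `⊤ = ∞` when the
intersection is the zero ideal. -/
noncomputable def quadDefect {F : Type*} [Field F] (ord : F → WithTop ℤ) (c : F) :
    WithTop ℤ :=
  sInf {v : WithTop ℤ | ∃ z : F,
    (∀ x : F, ∃ t : F, 0 ≤ ord t ∧ z = (c - x ^ 2) * t) ∧ v = ord (c⁻¹ * z)}

/-- Let `F` be a dyadic local field (a finite extension of `ℚ₂`) with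
valuation ring `O_F = {x | 0 ≤ ord x}` (the integral closure of `ℤ₂` in `F`), where `ord` is
the normalized discrete valuation of `F`, and let `e = ord 2`.  Then
`⋂_{x ∈ F} (-1 - x²)·O_F ⊆ 2·O_F`; equivalently, `d(-1) ≥ e`. -/
theorem quadDefect_neg_one_ge_e
    (F : Type*) [Field F] [Algebra ℚ_[2] F] [FiniteDimensional ℚ_[2] F]
    [Algebra ℤ_[2] F] [IsScalarTower ℤ_[2] ℚ_[2] F]
    (ord : F → WithTop ℤ)
    (hord_top : ∀ x : F, ord x = ⊤ ↔ x = 0)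
    (hord_mul : ∀ x y : F, ord (x * y) = ord x + ord y)
    (hord_add : ∀ x y : F, min (ord x) (ord y) ≤ ord (x + y))
    (hord_surj : ∀ n : ℤ, ∃ x : F, ord x = (n : WithTop ℤ))
    (hord_int : ∀ x : F, 0 ≤ ord x ↔ IsIntegral ℤ_[2] x) :
    (∀ z : F, (∀ x : F, ∃ t : F, 0 ≤ ord t ∧ z = (-1 - x ^ 2) * t) →
        ∃ t : F, 0 ≤ ord t ∧ z = 2 * t) ∧
      ord 2 ≤ quadDefect ord (-1) := by
  have hneg : ∀ t : F, 0 ≤ ord t → 0 ≤ ord (-t) := fun t ht =>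
    (hord_int _).2 ((hord_int t).1 ht).neg
  -- Taking `x = 1` gives the generator `-1 - 1² = -2`.
  have key : ∀ z : F, (∀ x : F, ∃ t : F, 0 ≤ ord t ∧ z = (-1 - x ^ 2) * t) →
      ∃ t : F, 0 ≤ ord t ∧ z = 2 * t := by
    intro z hz
    obtain ⟨t, ht, rfl⟩ := hz 1
    exact ⟨-t, hneg t ht, by ring⟩
  refine ⟨key, ?_⟩
  have hlb : ord 2 ∈ lowerBounds {v : WithTop ℤ | ∃ z : F,
      (∀ x : F, ∃ t : F, 0 ≤ ord t ∧ z = (-1 - x ^ 2) * t) ∧ v = ord ((-1)⁻¹ * z)} := by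
    rintro v ⟨z, hz, rfl⟩
    obtain ⟨t, ht, rfl⟩ := key z hz
    have h : ((-1 : F))⁻¹ * (2 * t) = 2 * -t := by
      rw [inv_neg, inv_one]; ring
    rw [h, hord_mul]
    exact le_add_of_nonneg_right (hneg t ht)
  -- `sInf` in `WithTop ℤ` is a genuine infimum because the set is bounded below.
  exact (WithTop.isGLB_sInf' ⟨_, hlb⟩).2 hlb
end

section
/- Let F = ℚ₂(√2). Then d(−1) = 3; that is, the minimum of ord(z) over all nonzero z ∈ ⋂_{x ∈ F} (−1 − x²)O_F equals 3. -/
/-- The data of a normalized valuation on `F = ℚ₂(√2)` whose valuation ring is the integral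
closure of `ℤ₂`. -/
structure IsNormOrd {F : Type*} [Field F] [Algebra ℚ_[2] F] [Algebra ℤ_[2] F]
    (sq2 : F) (ord : F → WithTop ℤ) : Prop where
  sq : sq2 * sq2 = 2
  gen : Algebra.adjoin ℚ_[2] {sq2} = ⊤
  top : ∀ x : F, ord x = ⊤ ↔ x = 0
  mul : ∀ x y : F, ord (x * y) = ord x + ord y
  add : ∀ x y : F, min (ord x) (ord y) ≤ ord (x + y)
  sq2 : ord sq2 = 1
  int : ∀ x : F, 0 ≤ ord x ↔ IsIntegral ℤ_[2] x

namespace IsNormOrd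

variable {F : Type*} [Field F] [Algebra ℚ_[2] F] [Algebra ℤ_[2] F]
  {s : F} {ord : F → WithTop ℤ}

lemma exists_int (h : IsNormOrd s ord) {x : F} (hx : x ≠ 0) : ∃ n : ℤ, ord x = n := by
  have : ord x ≠ ⊤ := fun e => hx ((h.top x).1 e)
  lift ord x to ℤ using this with n hn
  exact ⟨n, rfl⟩

lemma ord_one (h : IsNormOrd s ord) : ord 1 = 0 := by
  obtain ⟨n, hn⟩ := h.exists_int (one_ne_zero (α := F))
  have := h.mul 1 1
  rw [mul_one, hn] at this
  rw [hn]
  norm_cast at this ⊢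
  omega

lemma ord_neg_one (h : IsNormOrd s ord) : ord (-1) = 0 := by
  obtain ⟨n, hn⟩ := h.exists_int (neg_ne_zero.2 (one_ne_zero (α := F)))
  have := h.mul (-1) (-1)
  rw [neg_mul_neg, mul_one, hn, h.ord_one] at this
  rw [hn]
  norm_cast at this ⊢
  omega

lemma ord_neg (h : IsNormOrd s ord) (x : F) : ord (-x) = ord x := by
  rw [← neg_one_mul, h.mul, h.ord_neg_one, zero_add]

lemma ord_two (h : IsNormOrd s ord) : ord 2 = 2 := by
  rw [← h.sq, h.mul, h.sq2]; rfl

lemma ord_eq_zero (h : IsNormOrd s ord) {x y : F} (hxy : x * y = 1) (hx : 0 ≤ ord x)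
    (hy : 0 ≤ ord y) : ord x = 0 := by
  obtain ⟨n, hn⟩ := h.exists_int (left_ne_zero_of_mul_eq_one hxy)
  obtain ⟨m, hm⟩ := h.exists_int (right_ne_zero_of_mul_eq_one hxy)
  have := h.mul x y
  rw [hxy, h.ord_one, hn, hm] at this
  rw [hn] at hx ⊢
  rw [hm] at hy
  norm_cast at *
  omega

lemma two_ne_zero' (h : IsNormOrd s ord) : (2 : F) ≠ 0 := by
  intro e
  have := (h.top 2).2 e
  rw [h.ord_two] at this
  exact absurd this (WithTop.coe_ne_top (a := (2 : ℤ)))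

lemma ord_two_zpow (h : IsNormOrd s ord) (n : ℤ) :
    ord ((2 : F) ^ n) = ((2 * n : ℤ) : WithTop ℤ) := by
  have step : ∀ n : ℤ, ord ((2 : F) ^ (n + 1)) = ord ((2 : F) ^ n) + 2 := fun n => by
    rw [zpow_add_one₀ h.two_ne_zero', h.mul, h.ord_two]
  induction n using Int.induction_on with
  | zero => simpa using h.ord_one
  | succ k ih =>
    rw [step, ih]
    norm_cast
  | pred k ih =>
    have := step (-k - 1)
    rw [sub_add_cancel, ih] at this
    obtain ⟨m, hm⟩ := h.exists_int (zpow_ne_zero (-k - 1 : ℤ) h.two_ne_zero')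
    rw [hm, show (2 : WithTop ℤ) = ((2 : ℤ) : WithTop ℤ) from rfl] at this
    rw [hm]
    norm_cast at this ⊢
    omega

lemma exists_coords (h : IsNormOrd s ord) (x : F) : ∃ a b : ℚ_[2],
    x = algebraMap ℚ_[2] F a + algebraMap ℚ_[2] F b * s := by
  have hx : x ∈ Algebra.adjoin ℚ_[2] {s} := h.gen ▸ Algebra.mem_top
  induction hx using Algebra.adjoin_induction with
  | mem y hy => exact ⟨0, 1, by simpa using hy⟩
  | algebraMap r => exact ⟨r, 0, by simp⟩
  | add y z _ _ hy hz =>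
    obtain ⟨a, b, rfl⟩ := hy
    obtain ⟨c, d, rfl⟩ := hz
    exact ⟨a + c, b + d, by simp only [map_add]; ring⟩
  | mul y z _ _ hy hz =>
    obtain ⟨a, b, rfl⟩ := hy
    obtain ⟨c, d, rfl⟩ := hz
    refine ⟨a * c + 2 * b * d, a * d + b * c, ?_⟩
    simp only [map_add, map_mul, map_ofNat]
    linear_combination (algebraMap ℚ_[2] F b * algebraMap ℚ_[2] F d) * h.sq

lemma ord_four (h : IsNormOrd s ord) : ord 4 = 4 := by
  rw [show (4 : F) = 2 * 2 by norm_num, h.mul, h.ord_two]; rfl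

lemma ord_one_add (h : IsNormOrd s ord) : ord (1 + s) = 0 := by
  have hs : IsIntegral ℤ_[2] s := (h.int s).1 (by rw [h.sq2]; exact zero_le_one)
  apply h.ord_eq_zero (y := s - 1)
  · linear_combination h.sq
  · exact (h.int _).2 (isIntegral_one.add hs)
  · exact (h.int _).2 (hs.sub isIntegral_one)

lemma ord_two_mul_sq2 (h : IsNormOrd s ord) : ord (2 * s) = 3 := by
  rw [h.mul, h.ord_two, h.sq2]; rfl

variable [IsScalarTower ℤ_[2] ℚ_[2] F]

/-- An element of `ℚ₂` with `ord ≥ 0` in `F` lies in `ℤ₂`, because `ℤ₂` is integrally closed. -/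
lemma ord_algebraMap_nonneg_iff (h : IsNormOrd s ord) (r : ℚ_[2]) :
    0 ≤ ord (algebraMap ℚ_[2] F r) ↔ ∃ a : ℤ_[2], (a : ℚ_[2]) = r := by
  rw [h.int, isIntegral_algebraMap_iff (algebraMap ℚ_[2] F).injective,
    IsIntegrallyClosed.isIntegral_iff]
  rfl

lemma exists_ord_eq_two_mul (h : IsNormOrd s ord) {r : ℚ_[2]} (hr : r ≠ 0) :
    ∃ n : ℤ, ord (algebraMap ℚ_[2] F r) = ((2 * n : ℤ) : WithTop ℤ) := by
  have h2 : (2 : ℚ_[2]) ≠ 0 := two_ne_zero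
  set n := r.valuation with hn
  have hu : ‖r * (2 : ℚ_[2]) ^ (-n)‖ = 1 := by
    have e := Padic.norm_eq_zpow_neg_valuation hr
    have e2 : ‖(2 : ℚ_[2]) ^ (-n)‖ = (2 : ℝ) ^ n := by
      have := Padic.norm_p_zpow (p := 2) (-n)
      simpa using this
    rw [norm_mul, e2, e, ← hn]
    push_cast
    rw [← zpow_add₀ (by norm_num)]
    simp
  set u := r * (2 : ℚ_[2]) ^ (-n) with hudef
  have hu0 : u ≠ 0 := by
    intro e
    rw [e] at hu
    simp at hu
  have ou : ord (algebraMap ℚ_[2] F u) = 0 := by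
    apply h.ord_eq_zero (y := algebraMap ℚ_[2] F u⁻¹)
    · rw [← map_mul, mul_inv_cancel₀ hu0, map_one]
    · exact (h.ord_algebraMap_nonneg_iff u).2 ⟨⟨u, hu.le⟩, rfl⟩
    · exact (h.ord_algebraMap_nonneg_iff _).2 ⟨⟨u⁻¹, by rw [norm_inv, hu, inv_one]⟩, rfl⟩
  refine ⟨n, ?_⟩
  have hr' : r = u * (2 : ℚ_[2]) ^ n := by
    rw [hudef, mul_assoc, ← zpow_add₀ h2]
    simp
  rw [hr', map_mul, map_zpow₀, h.mul, ou, zero_add, map_ofNat, h.ord_two_zpow]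

/-- The orders of `a` and `b√2` have different parities, unless both are infinite. -/
lemma coords_ord (h : IsNormOrd s ord) {a b : ℚ_[2]}
    (e : ord (algebraMap ℚ_[2] F a) = ord (algebraMap ℚ_[2] F b * s)) : a = 0 ∧ b = 0 := by
  have hs : s ≠ 0 := by
    rintro rfl
    exact h.two_ne_zero' (by rw [← h.sq, mul_zero])
  by_cases ha : a = 0
  · refine ⟨ha, ?_⟩
    rw [ha, map_zero, (h.top 0).2 rfl, eq_comm, h.top] at e
    simpa [hs] using e
  by_cases hb : b = 0
  · rw [hb, map_zero, zero_mul, (h.top 0).2 rfl, h.top] at e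
    exact absurd (by simpa using e) ha
  obtain ⟨n, hn⟩ := h.exists_ord_eq_two_mul ha
  obtain ⟨m, hm⟩ := h.exists_ord_eq_two_mul hb
  rw [h.mul, h.sq2, hn, hm] at e
  norm_cast at e
  omega

lemma coords_eq_zero (h : IsNormOrd s ord) {a b : ℚ_[2]}
    (e : algebraMap ℚ_[2] F a + algebraMap ℚ_[2] F b * s = 0) : a = 0 ∧ b = 0 := by
  apply h.coords_ord
  rw [eq_neg_of_add_eq_zero_left e, h.ord_neg]

/-- The valuation ring is `ℤ₂[√2]`. -/
lemma exists_padicInt_coords (h : IsNormOrd s ord) {x : F} (hx : 0 ≤ ord x) :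
    ∃ a b : ℤ_[2], x = algebraMap ℚ_[2] F a + algebraMap ℚ_[2] F b * s := by
  obtain ⟨a, b, rfl⟩ := h.exists_coords x
  set A := algebraMap ℚ_[2] F a with hA
  set B := algebraMap ℚ_[2] F b * s with hB
  have hBA : 0 ≤ ord A ∧ 0 ≤ ord B := by
    have h1 := h.add (A + B) (-B)
    have h2 := h.add (A + B) (-A)
    rw [h.ord_neg, add_neg_cancel_right] at h1
    rw [h.ord_neg, add_neg_cancel_comm] at h2
    by_contra hc
    -- a negative order must be attained by both `A` and `B`, against parity
    have e : ord A = ord B := by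
      rcases min_le_iff.1 h1 with h1 | h1 <;> rcases min_le_iff.1 h2 with h2 | h2
      · exact absurd ⟨hx.trans h1, hx.trans h2⟩ hc
      · exact absurd ⟨hx.trans h1, (hx.trans h1).trans h2⟩ hc
      · exact absurd ⟨(hx.trans h2).trans h1, hx.trans h2⟩ hc
      · exact le_antisymm h2 h1
    obtain ⟨rfl, rfl⟩ := h.coords_ord e
    have t := (h.top 0).2 rfl
    apply hc
    simp [hA, hB, t]
  obtain ⟨a', rfl⟩ := (h.ord_algebraMap_nonneg_iff a).1 hBA.1
  have hb : 0 ≤ ord (algebraMap ℚ_[2] F b) := by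
    by_cases hb : b = 0
    · rw [hb, map_zero, (h.top 0).2 rfl]
      exact le_top
    obtain ⟨m, hm⟩ := h.exists_ord_eq_two_mul hb
    have := hBA.2
    rw [hB, h.mul, h.sq2, hm] at this
    rw [hm]
    norm_cast at this ⊢
    omega
  obtain ⟨b', rfl⟩ := (h.ord_algebraMap_nonneg_iff b).1 hb
  exact ⟨a', b', rfl⟩

lemma no_solution_mod_four (a b c d : ℤ_[2]) (h1 : a ^ 2 + 2 * b ^ 2 + 1 = 4 * c)
    (h2 : 2 * (a * b) = 4 * d) : False := by
  have key : ∀ a b : ZMod (2 ^ 2), a ^ 2 + 2 * b ^ 2 + 1 = 0 → 2 * (a * b) = 0 → False := by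
    decide
  have h4 : (4 : ZMod (2 ^ 2)) = 0 := by decide
  apply key (PadicInt.toZModPow 2 a) (PadicInt.toZModPow 2 b)
  · have := congrArg (PadicInt.toZModPow 2) h1
    simpa only [map_add, map_mul, map_pow, map_one, map_ofNat, h4, zero_mul] using this
  · have := congrArg (PadicInt.toZModPow 2) h2
    simpa only [map_mul, map_ofNat, h4, zero_mul] using this

lemma not_four_le (h : IsNormOrd s ord) (x : F) : ¬ 4 ≤ ord (-1 - x ^ 2) := by
  intro hx
  have h40 : (4 : F) ≠ 0 := by
    rw [show (4 : F) = 2 * 2 by norm_num]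
    exact mul_ne_zero h.two_ne_zero' h.two_ne_zero'
  set y := (-1 - x ^ 2) / 4 with hy
  have hxy : -1 - x ^ 2 = 4 * y := by rw [hy]; field_simp
  have oy : 0 ≤ ord y := by
    by_cases y0 : y = 0
    · rw [y0, (h.top 0).2 rfl]
      exact le_top
    obtain ⟨n, hn⟩ := h.exists_int y0
    rw [hxy, h.mul, h.ord_four, hn, show (4 : WithTop ℤ) = ((4 : ℤ) : WithTop ℤ) from rfl] at hx
    rw [hn]
    norm_cast at hx ⊢
    omega
  -- `x` satisfies the monic equation `x² + (1 + 4y) = 0` over the valuation ring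
  have ox : 0 ≤ ord x := by
    rw [h.int] at oy ⊢
    apply IsIntegral.of_pow (n := 2) (by norm_num)
    rw [show x ^ 2 = -1 - (y + y + y + y) by linear_combination -hxy]
    exact isIntegral_one.neg.sub (((oy.add oy).add oy).add oy)
  obtain ⟨a, b, ha⟩ := h.exists_padicInt_coords ox
  obtain ⟨c, d, hc⟩ := h.exists_padicInt_coords oy
  have := h.coords_eq_zero (a := a ^ 2 + 2 * b ^ 2 + 1 + 4 * c) (b := 2 * (a * b) + 4 * d) (by
    rw [hc, ha] at hxy
    simp only [map_add, map_mul, map_pow, map_one, map_ofNat]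
    linear_combination -hxy - (algebraMap ℚ_[2] F b) ^ 2 * h.sq)
  obtain ⟨e1, e2⟩ := this
  have e1' : a ^ 2 + 2 * b ^ 2 + 1 + 4 * c = 0 := Subtype.coe_injective (by push_cast; exact e1)
  have e2' : 2 * (a * b) + 4 * d = 0 := Subtype.coe_injective (by push_cast; exact e2)
  exact no_solution_mod_four a b (-c) (-d) (by linear_combination e1') (by linear_combination e2')

lemma isLeast (h : IsNormOrd s ord) : IsLeast {v : WithTop ℤ | ∃ z : F,
    (∀ x : F, ∃ t : F, 0 ≤ ord t ∧ z = (-1 - x ^ 2) * t) ∧ v = ord ((-1)⁻¹ * z)} 3 := by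
  have hinv : ∀ z : F, ord ((-1)⁻¹ * z) = ord z := fun z => by
    rw [inv_neg_one, neg_one_mul, h.ord_neg]
  constructor
  · refine ⟨2 * s, fun x => ?_, by rw [hinv, h.ord_two_mul_sq2]⟩
    have hx := h.not_four_le x
    have hx0 : -1 - x ^ 2 ≠ 0 := by
      intro e
      rw [e, (h.top 0).2 rfl] at hx
      exact hx le_top
    have hz : 2 * s = (-1 - x ^ 2) * (2 * s / (-1 - x ^ 2)) := by field_simp
    refine ⟨_, ?_, hz⟩
    have ho := congrArg ord hz
    rw [h.mul (-1 - x ^ 2), h.ord_two_mul_sq2] at ho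
    by_cases t0 : 2 * s / (-1 - x ^ 2) = 0
    · rw [t0, (h.top 0).2 rfl]
      exact le_top
    obtain ⟨m, hm⟩ := h.exists_int t0
    obtain ⟨n, hn⟩ := h.exists_int hx0
    rw [hn, show (4 : WithTop ℤ) = ((4 : ℤ) : WithTop ℤ) from rfl] at hx
    rw [hm, hn, show (3 : WithTop ℤ) = ((3 : ℤ) : WithTop ℤ) from rfl] at ho
    rw [hm]
    norm_cast at hx ho ⊢
    omega
  · rintro v ⟨z, hz, rfl⟩
    obtain ⟨t, ht, rfl⟩ := hz (1 + s)
    rw [hinv, show (-1 - (1 + s) ^ 2) = -(2 * s * (1 + s)) by linear_combination h.sq, h.mul,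
      h.ord_neg, h.mul, h.ord_two_mul_sq2, h.ord_one_add, add_zero]
    exact le_add_of_nonneg_right ht

end IsNormOrd

/-- Let `F = ℚ₂(√2)`, with valuation ring `O_F = {x | 0 ≤ ord x}` (the
integral closure of `ℤ₂` in `F`), where `ord` is the normalized valuation (so `ord √2 = 1`).
Then `d(-1) = 3`, i.e. the minimum of `ord z` over nonzero
`z ∈ ⋂_{x ∈ F} (-1 - x²)·O_F` equals `3`. -/
theorem quadDefect_neg_one_eq_three_in_Q2_sqrt2
    (F : Type*) [Field F] [Algebra ℚ_[2] F]
    [Algebra ℤ_[2] F] [IsScalarTower ℤ_[2] ℚ_[2] F]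
    (sq2 : F) (hsq2 : sq2 * sq2 = 2)
    (hgen : Algebra.adjoin ℚ_[2] {sq2} = ⊤)
    (ord : F → WithTop ℤ)
    (hord_top : ∀ x : F, ord x = ⊤ ↔ x = 0)
    (hord_mul : ∀ x y : F, ord (x * y) = ord x + ord y)
    (hord_add : ∀ x y : F, min (ord x) (ord y) ≤ ord (x + y))
    (hord_sq2 : ord sq2 = 1)
    (hord_int : ∀ x : F, 0 ≤ ord x ↔ IsIntegral ℤ_[2] x) :
    quadDefect ord (-1) = 3 := by
  have h : IsNormOrd sq2 ord :=
    ⟨hsq2, hgen, hord_top, hord_mul, hord_add, hord_sq2, hord_int⟩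
  have hl := h.isLeast
  exact (WithTop.isGLB_sInf' hl.bddBelow).unique hl.isGLB
end
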